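/- Let K be a fixed quadratic number field with ring of integers 𝒪, and let f_K(n) = #{nonzero ideals 𝔞 ⊆ 𝒪 : N𝔞 = n}, where N𝔞 = #(𝒪/𝔞) is the ideal norm. Then, as x → ∞, max_{n ≤ x} log f_K(f_K(n)) = (√(log x)/log₂ x)·( c/√2 + O(log₃ x / log₂ x) ), where c = (8·∑_{l=1}^∞ (log(1 + 1/l))²)^{1/2} and the implied constant may depend on K. -/

import Mathlib

open Filter

/-- `fK K n` is the number of nonzero ideals of the ring of integers of `K` of absolute
norm `n`. -/
noncomputable def fK (K : Type*) [Field K] [NumberField K] (n : ℕ) : ℕ :=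
  Nat.card {I : Ideal (NumberField.RingOfIntegers K) // Ideal.absNorm I = n ∧ I ≠ ⊥}

/-- The constant `c = (8·∑_{l=1}^∞ (log(1 + 1/l))²)^{1/2}`. -/
noncomputable def cBEFS : ℝ :=
  Real.sqrt (8 * ∑' l : ℕ, (Real.log (1 + 1 / ((l : ℝ) + 1))) ^ 2)

/-!
Call a prime split if two distinct prime ideals lie above it. For split `p` one has
`f_K(p ^ e) = e + 1`, while `f_K` takes only the values `0` and `1` at powers of the other primes.
Hence `f_K(f_K(n))` is at most the number of divisors of the split part of `m = f_K(n)`, and the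
cheapest way to make `m` divisible by `q` one more time is to give some new prime the exponent
`q - 1`. The primes much smaller than `√(log x)` are too few to matter, and there are enough primes
of about that size, so a factor `q` of `m` costs about `q * (log₂ x) / 2`. Up to lower order terms
the problem is therefore to maximise `∑_q log (1 + e_q)` over split primes `q` subject to
`∑_q q * e_q ≤ 2 log x / log₂ x`.

With Lagrange multiplier `1 / y` the dual value of this concave problem is
`∑_q ∑_l max (log (1 + 1 / l) - q / y) 0`, an average of the counting function of the split primes.
Since half of the primes split, it is asymptotic to `S y / (4 log y)` with
`S = ∑_l (log (1 + 1 / l)) ^ 2`. Weak duality gives the upper bound; taking `e_q` to be the number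
of `l` with `q ≤ y * log (1 + 1 / l)` attains it. Optimising `y ≍ √(log x)` yields the
constant `2 √S`.

The splitting of primes is governed by a quadratic Dirichlet character `χ`. The 3-4-1 inequality
bounds `L(s, χ)` below on `1 ≤ re s`, so that one integration by parts in the inverse Mellin
transform of the Riesz mean of `(1 + χ) Λ` saves the factor `log u` needed in the error term.
-/

section MultiplicativityOfIdealCount

open NumberField Ideal

section CommRing

variable {R : Type*} [CommRing R] {a b : ℕ}

lemma sup_eq_top_of_coprime_natCast_mem (hab : a.Coprime b) {I J : Ideal R}
    (ha : (a : R) ∈ I) (hb : (b : R) ∈ J) : I ⊔ J = ⊤ := by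
  obtain ⟨u, v, huv⟩ := Nat.isCoprime_iff_coprime.2 hab
  have hone : (1 : R) = u * a + v * b := by
    simpa using congrArg (Int.cast : ℤ → R) huv.symm
  rw [eq_top_iff_one, hone]
  exact Ideal.add_mem _ (mul_mem_left _ _ (mem_sup_left ha)) (mul_mem_left _ _ (mem_sup_right hb))

lemma sup_span_mul_sup_span_of_coprime (hab : a.Coprime b) {I : Ideal R}
    (hI : ((a * b : ℕ) : R) ∈ I) : (I ⊔ span {(a : R)}) * (I ⊔ span {(b : R)}) = I := by
  have htop : span {(a : R)} ⊔ span {(b : R)} = ⊤ :=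
    sup_eq_top_of_coprime_natCast_mem hab (mem_span_singleton_self _) (mem_span_singleton_self _)
  have hspan : span {(a : R)} * span {(b : R)} ≤ I := by
    rw [span_singleton_mul_span_singleton, span_singleton_le_iff_mem]
    exact_mod_cast hI
  refine le_antisymm ?_ ?_
  · rw [Ideal.sup_mul, Ideal.mul_sup, Ideal.mul_sup]
    exact sup_le (sup_le mul_le_left mul_le_left) (sup_le mul_le_right hspan)
  · calc I = I * (span {(a : R)} ⊔ span {(b : R)}) := by rw [htop, mul_top]
      _ = span {(a : R)} * I ⊔ I * span {(b : R)} := by rw [Ideal.mul_sup, mul_comm I]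
      _ ≤ (I ⊔ span {(a : R)}) * (I ⊔ span {(b : R)}) :=
        sup_le (mul_mono le_sup_right le_sup_left) (mul_mono le_sup_left le_sup_right)

end CommRing

variable {K : Type*} [Field K] [NumberField K] {a b : ℕ}

lemma coprime_absNorm_sup_span (hab : a.Coprime b) (I : Ideal (𝓞 K)) :
    (absNorm (I ⊔ span {(a : 𝓞 K)})).Coprime b := by
  refine Nat.Coprime.of_dvd_left ?_ (hab.pow_left (Module.finrank ℤ (𝓞 K)))
  rw [← absNorm_span_natCast (S := 𝓞 K)]
  exact absNorm_dvd_absNorm_of_le le_sup_right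

lemma absNorm_sup_span_of_absNorm_eq_mul (hab : a.Coprime b) {I : Ideal (𝓞 K)}
    (hI : absNorm I = a * b) : absNorm (I ⊔ span {(a : 𝓞 K)}) = a := by
  have hmul : absNorm (I ⊔ span {(a : 𝓞 K)}) * absNorm (I ⊔ span {(b : 𝓞 K)}) = a * b := by
    rw [← map_mul, sup_span_mul_sup_span_of_coprime hab (hI ▸ absNorm_mem I), hI]
  exact Nat.dvd_antisymm
    ((coprime_absNorm_sup_span hab I).dvd_of_dvd_mul_right (hmul ▸ Dvd.intro _ rfl))
    ((coprime_absNorm_sup_span hab.symm I).symm.dvd_of_dvd_mul_right (hmul ▸ Dvd.intro _ rfl))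

lemma mul_sup_span_absNorm_of_coprime {I J : Ideal (𝓞 K)}
    (hIJ : (absNorm I).Coprime (absNorm J)) : I * J ⊔ span {(absNorm I : 𝓞 K)} = I := by
  rw [mul_sup_eq_of_coprime_right, sup_eq_left]
  · exact span_singleton_absNorm_le I
  · exact sup_eq_top_of_coprime_natCast_mem hIJ.symm (absNorm_mem J) (mem_span_singleton_self _)

lemma fK_mul_of_coprime (ha : a ≠ 0) (hb : b ≠ 0) (hab : a.Coprime b) :
    fK K (a * b) = fK K a * fK K b := by
  have ne_bot_of_absNorm {I : Ideal (𝓞 K)} {n : ℕ} (hn : n ≠ 0) (hI : absNorm I = n) : I ≠ ⊥ :=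
    fun h ↦ hn (by rw [← hI, h, absNorm_bot])
  have norm_left {I : Ideal (𝓞 K)} (hI : absNorm I = a * b) :=
    absNorm_sup_span_of_absNorm_eq_mul hab hI
  have norm_right {I : Ideal (𝓞 K)} (hI : absNorm I = a * b) :=
    absNorm_sup_span_of_absNorm_eq_mul hab.symm (hI.trans (mul_comm a b))
  simp only [fK, ← Nat.card_prod]
  refine Nat.card_congr
    ⟨fun I ↦ (⟨I.1 ⊔ span {(a : 𝓞 K)}, norm_left I.2.1, ne_bot_of_absNorm ha (norm_left I.2.1)⟩,
      ⟨I.1 ⊔ span {(b : 𝓞 K)}, norm_right I.2.1, ne_bot_of_absNorm hb (norm_right I.2.1)⟩),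
     fun x ↦ ⟨x.1.1 * x.2.1, by rw [map_mul, x.1.2.1, x.2.2.1], mul_ne_zero x.1.2.2 x.2.2.2⟩,
     ?_, ?_⟩
  · rintro ⟨I, hI, -⟩
    have hmem : ((a * b : ℕ) : 𝓞 K) ∈ I := hI ▸ absNorm_mem I
    exact Subtype.ext (sup_span_mul_sup_span_of_coprime hab hmem)
  · rintro ⟨⟨I, rfl, -⟩, ⟨J, rfl, -⟩⟩
    refine Prod.ext (Subtype.ext (mul_sup_span_absNorm_of_coprime hab)) (Subtype.ext ?_)
    simpa only [mul_comm] using mul_sup_span_absNorm_of_coprime hab.symm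

lemma fK_zero : fK K 0 = 0 := by
  have : IsEmpty {I : Ideal (𝓞 K) // absNorm I = 0 ∧ I ≠ ⊥} :=
    ⟨fun I ↦ I.2.2 (absNorm_eq_zero_iff.1 I.2.1)⟩
  exact Nat.card_of_isEmpty

lemma fK_one : fK K 1 = 1 := by
  refine Nat.card_eq_one_iff_unique.2 ⟨⟨fun I J ↦ Subtype.ext ?_⟩, ⟨⊤, by simp⟩⟩
  rw [absNorm_eq_one_iff.1 I.2.1, absNorm_eq_one_iff.1 J.2.1]

lemma fK_prod_of_pairwise_coprime {ι : Type*} (s : Finset ι) (g : ι → ℕ)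
    (hg : ∀ i ∈ s, g i ≠ 0) (hs : (s : Set ι).Pairwise fun i j ↦ (g i).Coprime (g j)) :
    fK K (∏ i ∈ s, g i) = ∏ i ∈ s, fK K (g i) := by
  classical
  induction s using Finset.induction_on with
  | empty => simp [fK_one]
  | insert i s hi ih =>
    have hcop : (g i).Coprime (∏ j ∈ s, g j) := Nat.Coprime.prod_right fun j hj ↦
      hs (Finset.mem_insert_self i s) (Finset.mem_insert_of_mem hj) (by rintro rfl; exact hi hj)
    have hs0 : ∏ j ∈ s, g j ≠ 0 :=
      Finset.prod_ne_zero_iff.2 fun j hj ↦ hg j (Finset.mem_insert_of_mem hj)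
    rw [Finset.prod_insert hi, Finset.prod_insert hi,
      fK_mul_of_coprime (hg i (Finset.mem_insert_self i s)) hs0 hcop,
      ih (fun j hj ↦ hg j (Finset.mem_insert_of_mem hj))
        (hs.mono (by simp))]

lemma fK_eq_prod_primeFactors {n : ℕ} (hn : n ≠ 0) :
    fK K n = ∏ p ∈ n.primeFactors, fK K (p ^ n.factorization p) := by
  have hprime {p : ℕ} (hp : p ∈ n.primeFactors) : p.Prime := Nat.prime_of_mem_primeFactors hp
  conv_lhs => rw [← Nat.prod_factorization_pow_eq_self hn, Finsupp.prod,
    Nat.support_factorization]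
  exact fK_prod_of_pairwise_coprime _ _ (fun p hp ↦ pow_ne_zero _ (hprime hp).ne_zero)
    fun p hp q hq hpq ↦ Nat.coprime_pow_primes _ _ (hprime hp) (hprime hq) hpq

end MultiplicativityOfIdealCount

section SplitPrimes

open NumberField Ideal Algebra

variable {K : Type*} [Field K] [NumberField K] {p k : ℕ}

/-- The rational prime `p` has two distinct ideals of norm `p` above it. In a quadratic field this
says that `p` splits completely. -/
def IsSplitPrime (K : Type*) [Field K] [NumberField K] (p : ℕ) : Prop :=
  p.Prime ∧ ∃ P Q : Ideal (𝓞 K), P ≠ Q ∧ absNorm P = p ∧ absNorm Q = p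

lemma IsSplitPrime.two_le (hp : IsSplitPrime K p) : 2 ≤ p := hp.1.two_le

lemma isPrime_of_absNorm_eq_prime (hp : p.Prime) {P : Ideal (𝓞 K)} (hP : absNorm P = p) :
    P.IsPrime :=
  isPrime_of_irreducible_absNorm (hP ▸ hp.prime.irreducible)

lemma natCast_mem_of_absNorm_eq {P : Ideal (𝓞 K)} (hP : absNorm P = p) : (p : 𝓞 K) ∈ P :=
  hP ▸ absNorm_mem P

lemma ne_bot_of_natCast_mem (hp : p ≠ 0) {P : Ideal (𝓞 K)} (hpP : (p : 𝓞 K) ∈ P) : P ≠ ⊥ := by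
  rintro rfl
  exact hp (by exact_mod_cast (Submodule.mem_bot (𝓞 K)).1 hpP)

lemma isMaximal_of_natCast_mem (hp : p ≠ 0) {P : Ideal (𝓞 K)} (hP : P.IsPrime)
    (hpP : (p : 𝓞 K) ∈ P) : P.IsMaximal :=
  hP.isMaximal (ne_bot_of_natCast_mem hp hpP)

lemma natCast_mem_mul_of_ne (hp : p ≠ 0) {P Q : Ideal (𝓞 K)} (hP : P.IsPrime) (hQ : Q.IsPrime)
    (hpP : (p : 𝓞 K) ∈ P) (hpQ : (p : 𝓞 K) ∈ Q) (hne : P ≠ Q) : (p : 𝓞 K) ∈ P * Q := by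
  have hcop : IsCoprime P Q := isCoprime_iff_sup_eq.2
    ((isMaximal_of_natCast_mem hp hP hpP).coprime_of_ne (isMaximal_of_natCast_mem hp hQ hpQ) hne)
  rw [mul_eq_inf_of_isCoprime hcop]
  exact ⟨hpP, hpQ⟩

lemma exists_isPrime_mul_of_absNorm_eq_pow_succ (hp : p.Prime) {I : Ideal (𝓞 K)}
    (hI : absNorm I = p ^ (k + 1)) :
    ∃ P J : Ideal (𝓞 K), P.IsPrime ∧ (p : 𝓞 K) ∈ P ∧ I = P * J ∧
      ∃ j ≤ k, absNorm J = p ^ j := by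
  have hne : I ≠ ⊤ := by
    rw [Ne, ← absNorm_eq_one_iff, hI]
    exact (Nat.one_lt_pow k.succ_ne_zero hp.one_lt).ne'
  obtain ⟨P, hP, hIP⟩ := exists_le_maximal I hne
  obtain ⟨J, hJ⟩ := dvd_iff_le.2 hIP
  have hpP : (p : 𝓞 K) ∈ P := by
    refine hP.isPrime.mem_of_pow_mem (k + 1) (hIP ?_)
    exact_mod_cast natCast_mem_of_absNorm_eq hI
  have hmul : absNorm P * absNorm J = p ^ (k + 1) := by rw [← map_mul, ← hJ, hI]
  obtain ⟨j, hj, hJj⟩ := (Nat.dvd_prime_pow hp).1 (Dvd.intro_left _ hmul)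
  refine ⟨P, J, hP.isPrime, hpP, hJ, j, Nat.lt_succ_iff.1 (hj.lt_of_ne ?_), hJj⟩
  rintro rfl
  rw [hJj] at hmul
  exact hP.ne_top (absNorm_eq_one_iff.1 (Nat.eq_of_mul_eq_mul_right (pow_pos hp.pos _)
    (hmul.trans (one_mul _).symm)))

lemma exists_eq_pow_mul_pow_of_absNorm_eq_pow (hp : p.Prime) {P Q : Ideal (𝓞 K)}
    (hPQ : ∀ R : Ideal (𝓞 K), R.IsPrime → (p : 𝓞 K) ∈ R → R = P ∨ R = Q) {I : Ideal (𝓞 K)}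
    (hI : absNorm I = p ^ k) : ∃ i j, I = P ^ i * Q ^ j := by
  induction k using Nat.strong_induction_on generalizing I with
  | _ k ih =>
    rcases k with _ | k
    · exact ⟨0, 0, by simpa using absNorm_eq_one_iff.1 (hI.trans (pow_zero p))⟩
    · obtain ⟨R, J, hR, hpR, rfl, j, hjk, hJ⟩ := exists_isPrime_mul_of_absNorm_eq_pow_succ hp hI
      obtain ⟨a, b, rfl⟩ := ih j (Nat.lt_succ_of_le hjk) hJ
      rcases hPQ R hR hpR with rfl | rfl
      · exact ⟨a + 1, b, by ring⟩
      · exact ⟨a, b + 1, by ring⟩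

lemma injOn_pow_mul_pow_sub {P Q : Ideal (𝓞 K)} (hP : P.IsPrime) (hQ : Q.IsMaximal) (hP0 : P ≠ ⊥)
    (hne : P ≠ Q) (k : ℕ) : Set.InjOn (fun i ↦ P ^ i * Q ^ (k - i)) (Set.Iic k) := by
  have ne_of_lt {i j : ℕ} (hij : i < j) (hjk : j ≤ k) :
      P ^ i * Q ^ (k - i) ≠ P ^ j * Q ^ (k - j) := by
    intro heq
    rw [← Nat.add_sub_cancel' hij.le, pow_add, mul_assoc, Nat.add_sub_cancel' hij.le] at heq
    have hQP : Q ^ (k - i) ≤ P := by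
      rw [mul_left_cancel₀ (pow_ne_zero _ hP0) heq]
      exact mul_le_left.trans (pow_le_self (Nat.sub_ne_zero_of_lt hij))
    exact hne (hQ.eq_of_le hP.ne_top ((hP.pow_le_iff (by omega)).1 hQP)).symm
  intro i hi j hj hij
  rcases lt_trichotomy i j with hlt | heq | hgt
  · exact absurd hij (ne_of_lt hlt hj)
  · exact heq
  · exact absurd hij.symm (ne_of_lt hgt hi)

lemma eq_and_eq_of_mul_dvd_prime_sq {a b : ℕ} (hp : p.Prime) (ha : a ≠ 1) (hb : b ≠ 1)
    (hab : a * b ∣ p ^ 2) : a = p ∧ b = p := by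
  obtain ⟨i, hi, hpi⟩ := (Nat.dvd_prime_pow hp).1 hab
  interval_cases i
  · exact absurd (mul_eq_one.1 hpi).1 ha
  · rw [pow_one] at hpi
    rcases Nat.prime_mul_iff.1 (hpi ▸ hp) with ⟨-, h⟩ | ⟨-, h⟩
    exacts [absurd h hb, absurd h ha]
  · exact (hp.mul_eq_prime_sq_iff ha hb).1 hpi

section Quadratic

variable [IsQuadraticExtension ℚ K]

lemma absNorm_span_natCast_of_isQuadraticExtension (n : ℕ) :
    absNorm (span {(n : 𝓞 K)}) = n ^ 2 := by
  rw [absNorm_span_natCast, RingOfIntegers.rank, IsQuadraticExtension.finrank_eq_two ℚ K]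

lemma absNorm_dvd_sq_of_natCast_mem {n : ℕ} {I : Ideal (𝓞 K)} (hI : (n : 𝓞 K) ∈ I) :
    absNorm I ∣ n ^ 2 := by
  rw [← absNorm_span_natCast_of_isQuadraticExtension (K := K)]
  exact absNorm_dvd_absNorm_of_le ((span_singleton_le_iff_mem _).2 hI)

lemma isSplitPrime_of_ne (hp : p.Prime) {P Q : Ideal (𝓞 K)} (hP : P.IsPrime) (hQ : Q.IsPrime)
    (hpP : (p : 𝓞 K) ∈ P) (hpQ : (p : 𝓞 K) ∈ Q) (hne : P ≠ Q) : IsSplitPrime K p := by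
  have hdvd : absNorm P * absNorm Q ∣ p ^ 2 := map_mul absNorm P Q ▸
    absNorm_dvd_sq_of_natCast_mem (natCast_mem_mul_of_ne hp.ne_zero hP hQ hpP hpQ hne)
  exact ⟨hp, P, Q, hne, eq_and_eq_of_mul_dvd_prime_sq hp (mt absNorm_eq_one_iff.1 hP.ne_top)
    (mt absNorm_eq_one_iff.1 hQ.ne_top) hdvd⟩

lemma span_natCast_eq_mul_of_ne (hp : p.Prime) {P Q : Ideal (𝓞 K)} (hP : absNorm P = p)
    (hQ : absNorm Q = p) (hne : P ≠ Q) : span {(p : 𝓞 K)} = P * Q := by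
  obtain ⟨J, hJ⟩ := dvd_span_singleton.2 (natCast_mem_mul_of_ne hp.ne_zero
    (isPrime_of_absNorm_eq_prime hp hP) (isPrime_of_absNorm_eq_prime hp hQ)
    (natCast_mem_of_absNorm_eq hP) (natCast_mem_of_absNorm_eq hQ) hne)
  have hnorm : p ^ 2 * absNorm J = p ^ 2 * 1 := by
    calc p ^ 2 * absNorm J = absNorm (P * Q * J) := by rw [map_mul, map_mul, hP, hQ, sq]
      _ = p ^ 2 * 1 := by rw [← hJ, absNorm_span_natCast_of_isQuadraticExtension, mul_one]
  rw [hJ, absNorm_eq_one_iff.1 (Nat.eq_of_mul_eq_mul_left (pow_pos hp.pos 2) hnorm), mul_top]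

lemma eq_or_eq_of_natCast_mem (hp : p.Prime) {P Q R : Ideal (𝓞 K)} (hP : absNorm P = p)
    (hQ : absNorm Q = p) (hne : P ≠ Q) (hR : R.IsPrime) (hpR : (p : 𝓞 K) ∈ R) :
    R = P ∨ R = Q := by
  have eq_of_le {S : Ideal (𝓞 K)} (hS : absNorm S = p) (hSR : S ≤ R) : R = S :=
    ((isMaximal_of_natCast_mem hp.ne_zero (isPrime_of_absNorm_eq_prime hp hS)
      (natCast_mem_of_absNorm_eq hS)).eq_of_le hR.ne_top hSR).symm
  have hPQR : P * Q ≤ R := by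
    rwa [← span_natCast_eq_mul_of_ne hp hP hQ hne, span_singleton_le_iff_mem]
  exact (hR.mul_le.1 hPQR).imp (eq_of_le hP) (eq_of_le hQ)

lemma exists_isPrime_forall_eq_pow_of_not_isSplitPrime (hp : p.Prime)
    (hsplit : ¬ IsSplitPrime K p) :
    ∃ P : Ideal (𝓞 K), P.IsPrime ∧ (p : 𝓞 K) ∈ P ∧
      ∀ k, ∀ I : Ideal (𝓞 K), absNorm I = p ^ k → ∃ j, I = P ^ j := by
  obtain ⟨P, -, hP, hpP, -⟩ := exists_isPrime_mul_of_absNorm_eq_pow_succ hp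
    (absNorm_span_natCast_of_isQuadraticExtension (K := K) p)
  have huniq (R : Ideal (𝓞 K)) (hR : R.IsPrime) (hpR : (p : 𝓞 K) ∈ R) : R = P ∨ R = P := by
    by_contra! hne
    exact hsplit (isSplitPrime_of_ne hp hR hP hpR hpP hne.1)
  refine ⟨P, hP, hpP, fun k I hI ↦ ?_⟩
  obtain ⟨i, j, rfl⟩ := exists_eq_pow_mul_pow_of_absNorm_eq_pow hp huniq hI
  exact ⟨i + j, (pow_add P i j).symm⟩

lemma fK_prime_pow_le_one (hp : p.Prime) (hsplit : ¬ IsSplitPrime K p) (k : ℕ) :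
    fK K (p ^ k) ≤ 1 := by
  obtain ⟨P, hP, hpP, hpow⟩ := exists_isPrime_forall_eq_pow_of_not_isSplitPrime hp hsplit
  have hnorm : 1 < absNorm P :=
    Nat.one_lt_iff_ne_zero_and_ne_one.2 ⟨mt absNorm_eq_zero_iff.1
      (ne_bot_of_natCast_mem hp.ne_zero hpP), mt absNorm_eq_one_iff.1 hP.ne_top⟩
  have : Subsingleton {I : Ideal (𝓞 K) // absNorm I = p ^ k ∧ I ≠ ⊥} := by
    refine ⟨fun ⟨I, hI, _⟩ ⟨J, hJ, _⟩ ↦ Subtype.ext ?_⟩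
    obtain ⟨i, rfl⟩ := hpow k I hI
    obtain ⟨j, rfl⟩ := hpow k J hJ
    have hij : absNorm P ^ i = absNorm P ^ j := by rw [← map_pow, ← map_pow, hI, hJ]
    exact congrArg (P ^ ·) (Nat.pow_right_injective hnorm hij)
  exact Finite.card_le_one_iff_subsingleton.2 this

lemma fK_prime_pow_of_isSplitPrime (hsplit : IsSplitPrime K p) (k : ℕ) :
    fK K (p ^ k) = k + 1 := by
  obtain ⟨hp, P, Q, hne, hP, hQ⟩ := hsplit
  have hP0 : P ≠ ⊥ := ne_bot_of_natCast_mem hp.ne_zero (natCast_mem_of_absNorm_eq hP)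
  have hQ0 : Q ≠ ⊥ := ne_bot_of_natCast_mem hp.ne_zero (natCast_mem_of_absNorm_eq hQ)
  have hQmax : Q.IsMaximal := isMaximal_of_natCast_mem hp.ne_zero
    (isPrime_of_absNorm_eq_prime hp hQ) (natCast_mem_of_absNorm_eq hQ)
  have hnorm (i j : ℕ) : absNorm (P ^ i * Q ^ j) = p ^ (i + j) := by
    rw [map_mul, map_pow, map_pow, hP, hQ, pow_add]
  have himage : {I : Ideal (𝓞 K) | absNorm I = p ^ k ∧ I ≠ ⊥} =
      (fun i ↦ P ^ i * Q ^ (k - i)) '' Set.Iic k := by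
    ext I
    constructor
    · rintro ⟨hI, -⟩
      obtain ⟨i, j, rfl⟩ := exists_eq_pow_mul_pow_of_absNorm_eq_pow hp
        (fun R ↦ eq_or_eq_of_natCast_mem hp hP hQ hne) hI
      have hij : i + j = k := Nat.pow_right_injective hp.two_le ((hnorm i j).symm.trans hI)
      exact ⟨i, by simp only [Set.mem_Iic]; omega, by simp [← hij]⟩
    · rintro ⟨i, hi, rfl⟩
      exact ⟨by rw [hnorm, Nat.add_sub_cancel' hi],
        mul_ne_zero (pow_ne_zero _ hP0) (pow_ne_zero _ hQ0)⟩
  calc fK K (p ^ k) = Set.ncard {I : Ideal (𝓞 K) | absNorm I = p ^ k ∧ I ≠ ⊥} := rfl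
    _ = k + 1 := by
      rw [himage, (injOn_pow_mul_pow_sub (isPrime_of_absNorm_eq_prime hp hP) hQmax hP0 hne
        k).ncard_image, Set.ncard_eq_toFinset_card', Set.toFinset_Iic, Nat.card_Iic]

open Classical in
lemma fK_eq_prod_isSplitPrime {n : ℕ} (hn : n ≠ 0) (hfn : fK K n ≠ 0) :
    fK K n = ∏ p ∈ n.primeFactors with IsSplitPrime K p, (n.factorization p + 1) := by
  rw [fK_eq_prod_primeFactors hn] at hfn ⊢
  rw [Finset.prod_filter]
  refine Finset.prod_congr rfl fun p hp ↦ ?_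
  split_ifs with hsplit
  · exact fK_prime_pow_of_isSplitPrime hsplit _
  · exact le_antisymm (fK_prime_pow_le_one (Nat.prime_of_mem_primeFactors hp) hsplit _)
      (Nat.one_le_iff_ne_zero.2 (Finset.prod_ne_zero_iff.1 hfn p hp))

lemma fK_prod_pow_of_isSplitPrime {ι : Type*} (s : Finset ι) (g e : ι → ℕ)
    (hg : ∀ i ∈ s, IsSplitPrime K (g i)) (hinj : Set.InjOn g s) :
    fK K (∏ i ∈ s, g i ^ e i) = ∏ i ∈ s, (e i + 1) := by
  rw [fK_prod_of_pairwise_coprime s _ (fun i hi ↦ pow_ne_zero _ (hg i hi).1.ne_zero)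
    fun i hi j hj hij ↦ Nat.coprime_pow_primes _ _ (hg i hi).1 (hg j hj).1
      fun h ↦ hij (hinj hi hj h)]
  exact Finset.prod_congr rfl fun i hi ↦ fK_prime_pow_of_isSplitPrime (hg i hi) _

end Quadratic

end SplitPrimes

section SquareRoot

open NumberField Ideal Algebra Polynomial

variable {K : Type*} [Field K] [NumberField K]

lemma exists_sq_eq_intCast [IsQuadraticExtension ℚ K] :
    ∃ (β : K) (m : ℤ), β ^ 2 = m ∧ β ∉ Set.range (algebraMap ℚ K) := by
  have hfin : Module.finrank ℚ K = 2 := IsQuadraticExtension.finrank_eq_two ℚ K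
  obtain ⟨γ, ⟨q, hγq⟩, hγ⟩ := exists_root_adjoin_eq_top_of_isCyclic ℚ K
    (hfin ▸ ⟨-1, (mem_primitiveRoots two_pos).2 (IsPrimitiveRoot.neg_one 0 two_ne_zero.symm)⟩)
  rw [hfin] at hγq
  have hden : (q.den : K) ≠ 0 := Nat.cast_ne_zero.2 q.den_nz
  refine ⟨q.den * γ, q.den * q.num, ?_, ?_⟩
  · rw [mul_pow, ← hγq, eq_ratCast, Rat.cast_def]
    push_cast
    field_simp
  · rintro ⟨r, hr⟩
    have hγr : γ = algebraMap ℚ K (r / q.den) := by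
      rw [map_div₀, hr, map_natCast, mul_div_cancel_left₀ _ hden]
    have hbot : (⊥ : IntermediateField ℚ K) = ⊤ := by
      rw [← hγ, eq_comm, IntermediateField.adjoin_simple_eq_bot_iff, hγr]
      exact IntermediateField.algebraMap_mem _ _
    have hone := IntermediateField.finrank_eq_one_iff_eq_top.2 hbot
    rw [IntermediateField.finrank_bot'] at hone
    omega

lemma exists_sq_eq_squarefree [IsQuadraticExtension ℚ K] :
    ∃ (α : 𝓞 K) (d : ℤ), Squarefree d ∧ α ^ 2 = d ∧ (α : K) ∉ Set.range (algebraMap ℚ K) := by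
  obtain ⟨β, m, hβm, hβ⟩ := exists_sq_eq_intCast (K := K)
  obtain ⟨a, b, hab, ha⟩ := Nat.sq_mul_squarefree m.natAbs
  obtain ⟨d, hd, hmd⟩ : ∃ d : ℤ, Squarefree d ∧ m = b ^ 2 * d := by
    rcases Int.natAbs_eq m with hm | hm
    · exact ⟨a, Int.squarefree_natCast.2 ha, by rw [hm, ← hab]; push_cast; rfl⟩
    · refine ⟨-a, ?_, by rw [hm, ← hab]; push_cast; ring⟩
      rwa [← Int.squarefree_natAbs, Int.natAbs_neg, Int.natAbs_natCast]
  have hb : (b : K) ≠ 0 := by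
    intro hb
    have hβ0 : β = 0 := by simpa [hmd, hb] using hβm
    exact hβ ⟨0, by rw [hβ0, map_zero]⟩
  have hsq : (β / b) ^ 2 = (d : K) := by
    rw [div_pow, hβm, hmd]
    push_cast
    field_simp
  have hint : IsIntegral ℤ (β / b) :=
    IsIntegral.of_pow two_pos (hsq ▸ isIntegral_algebraMap (R := ℤ) (A := K) (x := d))
  refine ⟨⟨β / b, hint⟩, d, hd, RingOfIntegers.ext (by simpa using! hsq), ?_⟩
  rintro ⟨r, hr⟩
  refine hβ ⟨r * b, ?_⟩
  rw [map_mul, hr, map_natCast]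
  exact div_mul_cancel₀ _ hb

lemma trace_eq_zero_of_sq_eq {α : K} {q : ℚ} (hsq : α ^ 2 = algebraMap ℚ K q)
    (hα : α ∉ Set.range (algebraMap ℚ K)) : trace ℚ K α = 0 := by
  have hirr : Irreducible (X ^ 2 - C q : ℚ[X]) := by
    refine X_pow_sub_C_irreducible_of_prime Nat.prime_two fun b hb ↦ ?_
    rw [← hb, map_pow] at hsq
    rcases sq_eq_sq_iff_eq_or_eq_neg.1 hsq with h | h
    · exact hα ⟨b, h.symm⟩
    · exact hα ⟨-b, by rw [map_neg, h]⟩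
  have hmin : minpoly ℚ α = X ^ 2 - C q :=
    (minpoly.eq_of_irreducible_of_monic hirr (by simp [hsq])
      (monic_X_pow_sub_C _ two_ne_zero)).symm
  have hcoeff : (X ^ 2 - C q : ℚ[X]).nextCoeff = 0 := by
    simp [nextCoeff, coeff_X_pow]
  rw [trace_eq_finrank_mul_minpoly_nextCoeff, hmin, hcoeff, neg_zero, mul_zero]

variable [IsQuadraticExtension ℚ K] {α : 𝓞 K} {d a : ℤ} {p : ℕ}

lemma intCast_dvd_two_mul_of_dvd_sub (hsq : α ^ 2 = d)
    (hα : (α : K) ∉ Set.range (algebraMap ℚ K)) (hdvd : (p : 𝓞 K) ∣ α - a) :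
    (p : ℤ) ∣ 2 * a := by
  obtain ⟨β, hβ⟩ := hdvd
  have htrα : trace ℤ (𝓞 K) α = 0 := by
    have hsqK : (α : K) ^ 2 = algebraMap ℚ K d := by
      rw [← map_pow, hsq]
      simp
    exact_mod_cast (coe_trace_int α).trans (trace_eq_zero_of_sq_eq hsqK hα)
  have htra : trace ℤ (𝓞 K) a = 2 * a := by
    have h := trace_algebraMap (R := ℤ) (S := 𝓞 K) a
    rw [RingOfIntegers.rank, IsQuadraticExtension.finrank_eq_two ℚ K] at h
    simpa using h
  have htr := congrArg (trace ℤ (𝓞 K)) hβ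
  rw [map_sub, htrα, htra, ← nsmul_eq_mul, map_nsmul, nsmul_eq_mul] at htr
  exact ⟨-trace ℤ (𝓞 K) β, by linarith⟩

end SquareRoot

section SplittingCriterion

open NumberField Ideal Algebra

lemma span_pair_ne_top_of_dvd_mul {R : Type*} [CommRing R] {c x y : R} (hxy : c ∣ x * y)
    (hy : ¬c ∣ y) : span {c, x} ≠ ⊤ := by
  intro htop
  obtain ⟨u, v, huv⟩ := mem_span_pair.1 ((eq_top_iff_one _).1 htop)
  refine hy ?_
  have : y = c * (u * y) + v * (x * y) := by linear_combination -y * huv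
  rw [this]
  exact dvd_add (dvd_mul_right _ _) (hxy.mul_left _)

variable {K : Type*} [Field K] [NumberField K] {α : 𝓞 K} {d : ℤ} {p : ℕ}

lemma IsSplitPrime.isSquare_zmod (hp : IsSplitPrime K p) (hsq : α ^ 2 = d) :
    IsSquare (d : ZMod p) := by
  obtain ⟨hp, P, -, -, hP, -⟩ := hp
  have hcard : Nat.card (𝓞 K ⧸ P) = p := by
    rw [← hP, absNorm_apply, Submodule.cardQuot_apply]
  have : Finite (𝓞 K ⧸ P) := Nat.finite_of_card_ne_zero (hcard ▸ hp.ne_zero)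
  have := Fintype.ofFinite (𝓞 K ⧸ P)
  rw [Nat.card_eq_fintype_card] at hcard
  let e := ZMod.ringEquivOfPrime (𝓞 K ⧸ P) hp hcard
  refine ⟨e.symm (Ideal.Quotient.mk P α), ?_⟩
  rw [← map_mul, ← map_mul, ← pow_two, hsq, map_intCast, map_intCast]

variable [IsQuadraticExtension ℚ K]

lemma isSplitPrime_of_dvd_sub_sq (hp : p.Prime) (hsq : α ^ 2 = d)
    (hα : (α : K) ∉ Set.range (algebraMap ℚ K)) {a : ℤ} (hda : (p : ℤ) ∣ d - a ^ 2)
    (hpa : ¬(p : ℤ) ∣ 2 * a) : IsSplitPrime K p := by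
  have hmul : (p : 𝓞 K) ∣ (α - a) * (α + a) := by
    obtain ⟨t, ht⟩ := hda
    refine ⟨t, ?_⟩
    have ht' : (d : 𝓞 K) - a ^ 2 = p * t := by exact_mod_cast congrArg (Int.cast (R := 𝓞 K)) ht
    linear_combination hsq + ht'
  have hsub : ¬(p : 𝓞 K) ∣ α - a := fun h ↦ hpa (intCast_dvd_two_mul_of_dvd_sub hsq hα h)
  have hadd : ¬(p : 𝓞 K) ∣ α + a := fun h ↦ hpa <| by
    simpa using intCast_dvd_two_mul_of_dvd_sub (a := -a) hsq hα (by simpa using h)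
  obtain ⟨P, hP, hleP⟩ := exists_le_maximal _ (span_pair_ne_top_of_dvd_mul hmul hadd)
  obtain ⟨Q, hQ, hleQ⟩ :=
    exists_le_maximal _ (span_pair_ne_top_of_dvd_mul (mul_comm _ (α + (a : 𝓞 K)) ▸ hmul) hsub)
  rw [span_le, Set.pair_subset_iff] at hleP hleQ
  refine isSplitPrime_of_ne hp hP.isPrime hQ.isPrime hleP.1 hleQ.1 fun hPQ ↦ hP.ne_top ?_
  subst hPQ
  obtain ⟨u, v, huv⟩ := (Nat.prime_iff_prime_int.1 hp).coprime_iff_not_dvd.2 hpa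
  have hone : (1 : 𝓞 K) = u * p + v * ((α + a) - (α - a)) := by
    rw [add_sub_sub_cancel, ← two_mul]
    exact_mod_cast (congrArg (Int.cast (R := 𝓞 K)) huv).symm
  rw [eq_top_iff_one, hone]
  exact P.add_mem (P.mul_mem_left _ hleP.1) (P.mul_mem_left _ (P.sub_mem hleQ.2 hleP.2))

lemma isSplitPrime_iff_isSquare_zmod (hp : p.Prime) (hsq : α ^ 2 = d)
    (hα : (α : K) ∉ Set.range (algebraMap ℚ K)) (hpd : ¬(p : ℤ) ∣ 2 * d) :
    IsSplitPrime K p ↔ IsSquare (d : ZMod p) := by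
  refine ⟨fun h ↦ h.isSquare_zmod hsq, fun ⟨x, hx⟩ ↦ ?_⟩
  obtain ⟨a, rfl⟩ := ZMod.intCast_surjective x
  have hda : (p : ℤ) ∣ d - a ^ 2 := by
    rw [← ZMod.intCast_zmod_eq_zero_iff_dvd]
    push_cast
    rw [hx]
    ring
  refine isSplitPrime_of_dvd_sub_sq hp hsq hα hda fun hpa ↦ hpd ?_
  have : 2 * d = 2 * (d - a ^ 2) + 2 * a * a := by ring
  rw [this]
  exact dvd_add (hda.mul_left _) (hpa.mul_right _)

end SplittingCriterion

section JacobiCharacter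

open NumberTheorySymbols

lemma coprime_four_mul_natAbs_of_jacobiSym_ne_zero {d : ℤ} {n : ℕ} (hn : Odd n)
    (hJ : J(d | n) ≠ 0) : n.Coprime (4 * d.natAbs) := by
  refine Nat.Coprime.mul_right (Nat.Coprime.pow_right 2 (Nat.coprime_two_right.2 hn)) ?_
  rw [Ne, jacobiSym.eq_zero_iff, not_and_or, not_not, not_not, Int.gcd, Int.natAbs_natCast] at hJ
  exact Nat.coprime_comm.1 (hJ.resolve_left hn.pos.ne')

lemma jacobiSym_eq_one_of_modEq_one {M : ℤ} {n : ℕ} (hn : Odd n)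
    (hmod : n ≡ 1 [MOD 4 * M.natAbs]) : J(M | n) = 1 := by
  rw [jacobiSym.mod_right _ hn, hmod, ← jacobiSym.mod_right _ odd_one, jacobiSym.one_right]

lemma exists_modEq_one_jacobiSym_eq_neg_one {r m : ℕ} (hr : r.Prime) (hrm : r.Coprime m) :
    ∃ n : ℕ, Odd n ∧ n ≡ 1 [MOD 4 * m] ∧ J(r | n) = -1 := by
  have := Fact.mk hr
  rcases hr.eq_two_or_odd' with rfl | hodd
  · obtain ⟨n, h8, hm⟩ := Nat.chineseRemainder (Nat.Coprime.pow_left 3 hrm) 5 1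
    replace h8 : n % 8 = 5 := h8
    have hn : Odd n := Nat.odd_iff.2 (by omega)
    refine ⟨n, hn, (Nat.modEq_and_modEq_iff_modEq_mul (Nat.Coprime.pow_left 2 hrm)).1 ⟨?_, hm⟩, ?_⟩
    · exact show n % 4 = 1 by omega
    · rw [Nat.cast_two, jacobiSym.at_two hn, ZMod.χ₈_nat_eq_if_mod_eight, if_neg (by omega),
        if_neg (by omega)]
  · have hcop : r.Coprime (4 * m) :=
      Nat.Coprime.mul_right (Nat.Coprime.pow_right 2 (Nat.coprime_two_right.2 hodd)) hrm
    obtain ⟨x, hx⟩ := FiniteField.exists_nonsquare (F := ZMod r) <| by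
      rw [ZMod.ringChar_zmod_n]
      rintro rfl
      exact absurd hodd (by decide)
    obtain ⟨n, hnr, hnm⟩ := Nat.chineseRemainder hcop x.val 1
    have hn4 : n % 4 = 1 := hnm.of_mul_right m
    refine ⟨n, Nat.odd_iff.2 (by omega), hnm, ?_⟩
    have hnx : ((n : ℤ) : ZMod r) = x := by
      simpa using (ZMod.natCast_eq_natCast_iff _ _ _).2 hnr
    rw [jacobiSym.quadratic_reciprocity_one_mod_four' hodd hn4,
      ← jacobiSym.legendreSym.to_jacobiSym, legendreSym.eq_neg_one_iff, hnx]
    exact hx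

lemma exists_jacobiSym_eq_neg_one_of_squarefree {d : ℤ} (hd : Squarefree d) (hd1 : d ≠ 1) :
    ∃ n : ℕ, Odd n ∧ J(d | n) = -1 := by
  by_cases hunit : d.natAbs = 1
  · obtain rfl : d = -1 := (Int.natAbs_eq_iff.1 hunit).resolve_left hd1
    exact ⟨3, by decide, by rw [jacobiSym.at_neg_one (by decide)]; decide⟩
  obtain ⟨r, hr, hrd⟩ := Nat.exists_prime_and_dvd hunit
  obtain ⟨M, rfl⟩ := Int.natCast_dvd.2 hrd
  have hrM : r.Coprime M.natAbs := by
    have h := Int.squarefree_natAbs.2 hd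
    rw [Int.natAbs_mul, Int.natAbs_natCast] at h
    exact Nat.coprime_of_squarefree_mul h
  obtain ⟨n, hn, hmod, hJ⟩ := exists_modEq_one_jacobiSym_eq_neg_one hr hrM
  exact ⟨n, hn, by rw [jacobiSym.mul_left, hJ, jacobiSym_eq_one_of_modEq_one hn hmod, mul_one]⟩

open Classical in
/-- The Dirichlet character `n ↦ J(d | n)` modulo `4|d|`. -/
noncomputable def jacobiChar (d : ℤ) (hd : d ≠ 0) : DirichletCharacter ℂ (4 * d.natAbs) where
  toFun a := if IsUnit a then ((J(d | a.val) : ℤ) : ℂ) else 0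
  map_one' := by
    have : Fact (1 < 4 * d.natAbs) := ⟨by omega⟩
    rw [if_pos isUnit_one, ZMod.val_one, jacobiSym.one_right, Int.cast_one]
  map_mul' a b := by
    have : NeZero (4 * d.natAbs) := ⟨by omega⟩
    by_cases ha : IsUnit a
    · by_cases hb : IsUnit b
      · have odd_val {c : ZMod (4 * d.natAbs)} (hc : IsUnit c) : Odd c.val := by
          rw [← ZMod.natCast_zmod_val c, ZMod.isUnit_iff_coprime] at hc
          exact Nat.coprime_two_right.1 (hc.coprime_dvd_right ⟨2 * d.natAbs, by ring⟩)
        have : NeZero a.val := ⟨(odd_val ha).pos.ne'⟩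
        have : NeZero b.val := ⟨(odd_val hb).pos.ne'⟩
        rw [if_pos (ha.mul hb), if_pos ha, if_pos hb, ← Int.cast_mul, ZMod.val_mul,
          ← jacobiSym.mod_right _ ((odd_val ha).mul (odd_val hb)), jacobiSym.mul_right]
      · rw [if_neg hb, if_neg (fun h ↦ hb (isUnit_of_mul_isUnit_right h)), mul_zero]
    · rw [if_neg ha, if_neg (fun h ↦ ha (isUnit_of_mul_isUnit_left h)), zero_mul]
  map_nonunit' a ha := if_neg ha

variable {d : ℤ} (hd : d ≠ 0)

lemma jacobiChar_apply {n : ℕ} (hn : n.Coprime (4 * d.natAbs)) :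
    jacobiChar d hd n = ((J(d | n) : ℤ) : ℂ) := by
  have hval : jacobiChar d hd n = ((J(d | (n : ZMod (4 * d.natAbs)).val) : ℤ) : ℂ) :=
    if_pos ((ZMod.isUnit_iff_coprime _ _).2 hn)
  rw [hval, ZMod.val_natCast, ← jacobiSym.mod_right]
  exact Nat.coprime_two_right.1 (hn.coprime_dvd_right ⟨2 * d.natAbs, by ring⟩)

lemma jacobiChar_ne_one (hsf : Squarefree d) (hd1 : d ≠ 1) : jacobiChar d hd ≠ 1 := by
  intro hone
  obtain ⟨n, hn, hJ⟩ := exists_jacobiSym_eq_neg_one_of_squarefree hsf hd1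
  have hcop := coprime_four_mul_natAbs_of_jacobiSym_ne_zero hn (by rw [hJ]; decide)
  have happ := jacobiChar_apply hd hcop
  rw [hone, MulChar.one_apply ((ZMod.isUnit_iff_coprime _ _).2 hcop), hJ] at happ
  norm_num at happ

end JacobiCharacter

open Algebra Classical in
lemma exists_dirichletCharacter_isSplitPrime (K : Type*) [Field K] [NumberField K]
    [IsQuadraticExtension ℚ K] :
    ∃ (N : ℕ) (_ : NeZero N) (χ : DirichletCharacter ℂ N), χ ≠ 1 ∧
      ∀ p : ℕ, p.Prime → ¬p ∣ N → χ p = if IsSplitPrime K p then 1 else -1 := by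
  obtain ⟨α, d, hsf, hsq, hα⟩ := exists_sq_eq_squarefree (K := K)
  have hd : d ≠ 0 := hsf.ne_zero
  have hd1 : d ≠ 1 := by
    rintro rfl
    rcases sq_eq_one_iff.1 (hsq.trans Int.cast_one) with rfl | rfl
    · exact hα ⟨1, by simp⟩
    · exact hα ⟨-1, by simp⟩
  refine ⟨4 * d.natAbs, ⟨by omega⟩, jacobiChar d hd, jacobiChar_ne_one hd hsf hd1,
    fun p hp hpN ↦ ?_⟩
  have := Fact.mk hp
  have hpd : ¬(p : ℤ) ∣ 2 * d := fun h ↦ hpN <| by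
    have h' := Int.natCast_dvd.1 h
    rw [Int.natAbs_mul] at h'
    exact h'.trans (mul_dvd_mul_right (by norm_num) _)
  have hd0 : (d : ZMod p) ≠ 0 := by
    rw [Ne, ZMod.intCast_zmod_eq_zero_iff_dvd]
    exact fun h ↦ hpd (h.mul_left _)
  rw [jacobiChar_apply hd (hp.coprime_iff_not_dvd.2 hpN), ← jacobiSym.legendreSym.to_jacobiSym,
    isSplitPrime_iff_isSquare_zmod hp hsq hα hpd]
  split_ifs with hsquare
  · rw [(legendreSym.eq_one_iff p hd0).2 hsquare, Int.cast_one]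
  · rw [(legendreSym.eq_neg_one_iff p).2 hsquare, Int.cast_neg, Int.cast_one]

section CharacterSums

open Complex MeasureTheory Finset Function Set

lemma sum_Ico_of_periodic {M : Type*} [AddCommMonoid M] {f : ℕ → M} {a : ℕ} (hf : Periodic f a)
    (n : ℕ) : ∑ k ∈ Finset.Ico n (n + a), f k = ∑ k ∈ range a, f k := by
  have hmod : ∀ s : Multiset ℕ, s.map f = (s.map (· % a)).map f := fun s ↦ by
    rw [Multiset.map_map]
    exact Multiset.map_congr rfl fun k _ ↦ (hf.map_mod_nat k).symm
  change ((Multiset.Ico n (n + a)).map f).sum = _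
  rw [hmod, Nat.multiset_Ico_map_mod]
  rfl

lemma ofReal_cpow_neg_eq_mul {t : ℝ} (ht : 0 < t) (s : ℂ) :
    (t : ℂ) ^ (-s) = t * (t : ℂ) ^ (-(s + 1)) := by
  rw [show -s = 1 + -(s + 1) by ring, cpow_add _ _ (ofReal_ne_zero.2 ht.ne'), cpow_one]

variable {N : ℕ} (χ : DirichletCharacter ℂ N)

/-- The mean value of a Dirichlet character over a period. -/
noncomputable def charMean : ℂ := (∑ k ∈ range N, χ k) / N

/-- The error term in the approximation `∑ k ≤ u, χ k ≈ charMean χ * u`. -/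
noncomputable def charRemainder (u : ℝ) : ℂ :=
  ∑ k ∈ Finset.Icc 1 ⌊u⌋₊, χ k - charMean χ * u

lemma measurable_charRemainder : Measurable (charRemainder χ) :=
  ((measurable_from_top (f := fun n : ℕ ↦ ∑ k ∈ Finset.Icc 1 n, χ k)).comp
    Nat.measurable_floor).sub (by fun_prop)

lemma sum_Icc_char_mul_cpow {t : ℝ} (ht : 0 < t) (s : ℂ) :
    (∑ k ∈ Finset.Icc 1 ⌊t⌋₊, χ k) * (t : ℂ) ^ (-(s + 1)) =
      charMean χ * (t : ℂ) ^ (-s) + charRemainder χ t * (t : ℂ) ^ (-(s + 1)) := by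
  rw [ofReal_cpow_neg_eq_mul ht s, charRemainder]
  ring

variable {s : ℂ} {c : ℝ}

lemma norm_integral_charRemainder_mul_cpow_le {B : ℝ}
    (hB : ∀ u : ℝ, 0 ≤ u → ‖charRemainder χ u‖ ≤ B) (hs : 0 < s.re) (hc : 0 < c) :
    ‖∫ u in Ioi c, charRemainder χ u * (u : ℂ) ^ (-(s + 1))‖ ≤ B * (c ^ (-s.re) / s.re) := by
  have hexp : -(s.re + 1) < -1 := by linarith
  have hint : ∫ u in Ioi c, B * u ^ (-(s.re + 1)) = B * (c ^ (-s.re) / s.re) := by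
    rw [integral_const_mul, integral_Ioi_rpow_of_lt hexp hc,
      show -(s.re + 1) + 1 = -s.re by ring, neg_div_neg_eq]
  rw [← hint]
  refine norm_integral_le_of_norm_le ((integrableOn_Ioi_rpow_of_lt hexp hc).const_mul B) ?_
  filter_upwards [ae_restrict_mem measurableSet_Ioi] with u hu
  have hu0 : 0 < u := hc.trans hu
  rw [norm_mul, norm_cpow_eq_rpow_re_of_pos hu0]
  exact mul_le_mul_of_nonneg_right (hB u hu0.le) (by positivity)

variable [NeZero N]

lemma periodic_sum_Icc_char_sub :
    Periodic (fun n : ℕ ↦ ∑ k ∈ Finset.Icc 1 n, χ k - charMean χ * n) N := by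
  intro n
  have hN : (N : ℂ) ≠ 0 := NeZero.ne _
  have hperiod : ∑ k ∈ Finset.Ico (n + 1) (n + 1 + N), χ k = charMean χ * N := by
    rw [charMean, div_mul_cancel₀ _ hN]
    exact sum_Ico_of_periodic (f := fun k : ℕ ↦ χ k) (fun k ↦ by simp) _
  simp only [← Finset.Ico_add_one_right_eq_Icc]
  rw [← Finset.sum_Ico_consecutive _ (show 1 ≤ n + 1 by omega) (show n + 1 ≤ n + N + 1 by omega),
    add_right_comm, hperiod]
  push_cast
  ring

lemma exists_norm_charRemainder_le : ∃ B : ℝ, ∀ u : ℝ, 0 ≤ u → ‖charRemainder χ u‖ ≤ B := by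
  set h : ℕ → ℂ := fun n ↦ ∑ k ∈ Finset.Icc 1 n, χ k - charMean χ * n with hh
  refine ⟨∑ j ∈ range N, ‖h j‖ + ‖charMean χ‖, fun u hu ↦ ?_⟩
  have hsplit : charRemainder χ u = h ⌊u⌋₊ - charMean χ * ((u - ⌊u⌋₊ : ℝ) : ℂ) := by
    simp only [hh, charRemainder]
    push_cast
    ring
  rw [hsplit]
  refine (norm_sub_le _ _).trans (add_le_add ?_ ?_)
  · have hmod : h ⌊u⌋₊ = h (⌊u⌋₊ % N) := ((periodic_sum_Icc_char_sub χ).map_mod_nat _).symm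
    rw [hmod]
    exact Finset.single_le_sum (f := fun j ↦ ‖h j‖) (fun _ _ ↦ norm_nonneg _)
      (Finset.mem_range.2 (Nat.mod_lt _ (NeZero.pos N)))
  · rw [norm_mul, norm_real, Real.norm_of_nonneg (sub_nonneg.2 (Nat.floor_le hu))]
    exact mul_le_of_le_one_right (norm_nonneg _) (by linarith [Nat.lt_floor_add_one u])

lemma integrableOn_charRemainder_mul_cpow (hs : 0 < s.re) (hc : 0 < c) :
    IntegrableOn (fun u : ℝ ↦ charRemainder χ u * (u : ℂ) ^ (-(s + 1))) (Ioi c) := by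
  obtain ⟨B, hB⟩ := exists_norm_charRemainder_le χ
  refine Integrable.bdd_mul (c := B) (integrableOn_Ioi_cpow_of_lt (by simpa) hc)
    (measurable_charRemainder χ).aestronglyMeasurable ?_
  filter_upwards [ae_restrict_mem measurableSet_Ioi] with u hu
  exact hB u (hc.le.trans (le_of_lt hu))

end CharacterSums

section IntegralRepresentation

open Complex MeasureTheory Set Topology

variable {N : ℕ} [NeZero N] (χ : DirichletCharacter ℂ N) {s : ℂ}

lemma LFunction_eq_integral_of_one_lt_re (hs : 1 < s.re) :
    χ.LFunction s = charMean χ * s / (s - 1) +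
      s * ∫ u in Ioi (1 : ℝ), charRemainder χ u * (u : ℂ) ^ (-(s + 1)) := by
  have hs1 : s - 1 ≠ 0 := sub_ne_zero.2 (by rintro rfl; simp at hs)
  have hs1' : -s + 1 ≠ 0 := by rwa [neg_add_eq_sub, ← neg_sub, neg_ne_zero]
  have hsum : (fun n : ℕ ↦ ∑ k ∈ Finset.Icc 1 n, ‖χ k‖) =O[atTop] fun n ↦ (n : ℝ) ^ (1 : ℝ) := by
    refine Asymptotics.IsBigO.of_bound 1 (Eventually.of_forall fun n ↦ ?_)
    rw [Real.rpow_one, Real.norm_of_nonneg (by positivity), Real.norm_of_nonneg (by positivity),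
      one_mul]
    exact (Finset.sum_le_sum fun k _ ↦ χ.norm_le_one _).trans (by simp)
  have hre : (-s).re < -1 := by simpa
  rw [χ.LFunction_eq_LSeries hs, LSeries_eq_mul_integral' (r := 1) _ zero_le_one hs hsum,
    setIntegral_congr_fun measurableSet_Ioi fun t ht ↦
      sum_Icc_char_mul_cpow χ (zero_lt_one.trans ht) s,
    integral_add ((integrableOn_Ioi_cpow_of_lt hre zero_lt_one).const_mul _)
      (integrableOn_charRemainder_mul_cpow χ (by linarith) zero_lt_one),
    integral_const_mul, integral_Ioi_cpow_of_lt hre zero_lt_one, ofReal_one, one_cpow]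
  field_simp
  ring

lemma setIntegral_Ioi_mul_cpow_eq_mellin (g : ℝ → ℂ) (z : ℂ) :
    ∫ u in Ioi (1 : ℝ), g u * (u : ℂ) ^ (-(z + 1)) = mellin ((Ioi 1).indicator g) (-z) := by
  have hIoi : Ioi (1 : ℝ) = Ioi 0 ∩ Ioi 1 := by simp [Ioi_inter_Ioi]
  rw [mellin, hIoi, ← setIntegral_indicator measurableSet_Ioi, ← hIoi]
  congr 1 with u
  by_cases hu : u ∈ Ioi (1 : ℝ)
  · rw [indicator_of_mem hu, indicator_of_mem hu, smul_eq_mul, mul_comm, neg_add']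
  · rw [indicator_of_notMem hu, indicator_of_notMem hu, smul_zero]

lemma differentiableAt_integral_charRemainder_mul_cpow (hs : 0 < s.re) :
    DifferentiableAt ℂ
      (fun z ↦ ∫ u in Ioi (1 : ℝ), charRemainder χ u * (u : ℂ) ^ (-(z + 1))) s := by
  obtain ⟨B, hB⟩ := exists_norm_charRemainder_le χ
  have hB0 : 0 ≤ B := (norm_nonneg _).trans (hB 0 le_rfl)
  simp_rw [setIntegral_Ioi_mul_cpow_eq_mellin]
  set f := (Ioi (1 : ℝ)).indicator (charRemainder χ) with hf
  have hfB (u : ℝ) : ‖f u‖ ≤ B := by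
    by_cases hu : u ∈ Ioi (1 : ℝ)
    · simpa [hf, indicator_of_mem hu] using hB u (zero_le_one.trans (le_of_lt hu))
    · simpa [hf, indicator_of_notMem hu] using hB0
  suffices DifferentiableAt ℂ (mellin f) (-s) from this.comp s differentiableAt_id.neg
  refine mellin_differentiableAt_of_isBigO_rpow (a := 0) (b := -s.re - 1) ?_ ?_ (by simpa) ?_
    (by simp)
  · have hf_meas : Measurable f := (measurable_charRemainder χ).indicator measurableSet_Ioi
    refine ((locallyIntegrable_const B).mono hf_meas.aestronglyMeasurable
      (Eventually.of_forall fun u ↦ ?_)).locallyIntegrableOn _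
    rw [Real.norm_of_nonneg hB0]
    exact hfB u
  · exact Asymptotics.IsBigO.of_bound B (Eventually.of_forall fun u ↦ by simpa using hfB u)
  · refine Asymptotics.IsBigO.of_bound 0 ?_
    filter_upwards [Ioo_mem_nhdsGT (zero_lt_one (α := ℝ))] with u hu
    simp [hf, indicator_of_notMem (show u ∉ Ioi (1 : ℝ) from not_lt.2 hu.2.le)]

lemma LFunction_eq_integral (hs : 0 < s.re) (him : s.im ≠ 0) :
    χ.LFunction s = charMean χ * s / (s - 1) +
      s * ∫ u in Ioi (1 : ℝ), charRemainder χ u * (u : ℂ) ^ (-(s + 1)) := by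
  set U : Set ℂ := {z | 0 < z.re} ∩ {z | 0 < s.im * z.im}
  have hUopen : IsOpen U := (isOpen_lt continuous_const continuous_re).inter
    (isOpen_lt continuous_const (continuous_const.mul continuous_im))
  have hUconv : Convex ℝ U := (convex_halfSpace_re_gt 0).inter
    (convex_halfSpace_gt (s.im • imLm).isLinear 0)
  have hne : ∀ z ∈ U, z ≠ 1 := by
    rintro z ⟨-, hz⟩ rfl
    simp at hz
  have hL : AnalyticOnNhd ℂ χ.LFunction U :=
    DifferentiableOn.analyticOnNhd (fun z hz ↦
      (χ.differentiableAt_LFunction z (Or.inl (hne z hz))).differentiableWithinAt) hUopen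
  have hint : AnalyticOnNhd ℂ (fun z ↦ charMean χ * z / (z - 1) +
      z * ∫ u in Ioi (1 : ℝ), charRemainder χ u * (u : ℂ) ^ (-(z + 1))) U := by
    refine DifferentiableOn.analyticOnNhd (fun z hz ↦ ?_) hUopen
    have hdiff := differentiableAt_integral_charRemainder_mul_cpow χ hz.1
    have hz1 : z - 1 ≠ 0 := sub_ne_zero.2 (hne z hz)
    have hrat : DifferentiableAt ℂ (fun z ↦ charMean χ * z / (z - 1)) z := by
      fun_prop (disch := exact hz1)
    exact (hrat.fun_add (differentiableAt_fun_id.fun_mul hdiff)).differentiableWithinAt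
  have hbase : (2 + I * s.im : ℂ) ∈ U := ⟨by simp, by simpa using mul_self_pos.2 him⟩
  refine hL.eqOn_of_preconnected_of_eventuallyEq hint hUconv.isPreconnected hbase ?_
    (⟨hs, mul_self_pos.2 him⟩ : s ∈ U)
  filter_upwards [(isOpen_lt continuous_const continuous_re).mem_nhds
    (show (1 : ℝ) < (2 + I * s.im : ℂ).re by simp)] with z hz
  exact LFunction_eq_integral_of_one_lt_re χ hz

end IntegralRepresentation

section Truncation

open Complex MeasureTheory Set

variable {N : ℕ} (χ : DirichletCharacter ℂ N) {s : ℂ} {M : ℕ}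

lemma integral_Ioc_cpow {a b : ℝ} (ha : 0 < a) (hab : a ≤ b) {r : ℂ} (hr : r ≠ -1) :
    ∫ u in Ioc a b, (u : ℂ) ^ r = ((b : ℂ) ^ (r + 1) - (a : ℂ) ^ (r + 1)) / (r + 1) := by
  rw [← intervalIntegral.integral_of_le hab,
    integral_cpow (Or.inr ⟨hr, notMem_uIcc_of_lt ha (ha.trans_le hab)⟩)]

lemma integrableOn_Ioc_cpow {a b : ℝ} (ha : 0 < a) (r : ℂ) :
    IntegrableOn (fun u : ℝ ↦ (u : ℂ) ^ r) (Ioc a b) := by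
  refine (ContinuousOn.integrableOn_Icc fun u hu ↦ ?_).mono_set Ioc_subset_Icc_self
  exact (continuousAt_ofReal_cpow_const _ _
    (Or.inr (ha.trans_le hu.1).ne')).continuousWithinAt

lemma integral_Ioc_charRemainder_mul_cpow (hM : 0 < M) (hs0 : s ≠ 0) (hs1 : s ≠ 1) :
    s * ∫ u in Ioc (M : ℝ) (M + 1), charRemainder χ u * (u : ℂ) ^ (-(s + 1)) =
      (∑ k ∈ Finset.Icc 1 M, χ k) * ((M : ℂ) ^ (-s) - (M + 1 : ℂ) ^ (-s)) +
        charMean χ * s / (s - 1) * ((M + 1 : ℂ) ^ (1 - s) - (M : ℂ) ^ (1 - s)) := by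
  have hM0 : (0 : ℝ) < M := Nat.cast_pos.2 hM
  have hle : (M : ℝ) ≤ M + 1 := le_add_of_nonneg_right zero_le_one
  have hexpand : ∀ u ∈ Ioo (M : ℝ) (M + 1), charRemainder χ u * (u : ℂ) ^ (-(s + 1)) =
      (∑ k ∈ Finset.Icc 1 M, χ k) * (u : ℂ) ^ (-(s + 1)) - charMean χ * (u : ℂ) ^ (-s) := by
    intro u hu
    have hfloor : ⌊u⌋₊ = M := (Nat.floor_eq_iff (hM0.trans hu.1).le).2 ⟨hu.1.le, hu.2⟩
    rw [ofReal_cpow_neg_eq_mul (hM0.trans hu.1) s, charRemainder, hfloor]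
    ring
  have hs1' : s - 1 ≠ 0 := sub_ne_zero.2 hs1
  rw [← setIntegral_congr_set Ioo_ae_eq_Ioc, setIntegral_congr_fun measurableSet_Ioo hexpand,
    setIntegral_congr_set Ioo_ae_eq_Ioc,
    integral_sub ((integrableOn_Ioc_cpow hM0 _).const_mul _)
      ((integrableOn_Ioc_cpow hM0 _).const_mul _),
    integral_const_mul, integral_const_mul,
    integral_Ioc_cpow hM0 hle (by simpa [neg_eq_iff_eq_neg] using hs0),
    integral_Ioc_cpow hM0 hle (by simpa [neg_eq_iff_eq_neg] using hs1),
    show -(s + 1) + 1 = -s by ring, show -s + 1 = 1 - s by ring, ← neg_sub s 1]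
  push_cast
  field_simp
  ring

variable [NeZero N]

lemma LFunction_eq_sum_add_integral (hs : 0 < s.re) (him : s.im ≠ 0) (hM : 1 ≤ M) :
    χ.LFunction s = ∑ n ∈ Finset.Icc 1 M, (n : ℂ) ^ (-s) * χ n
      - (M : ℂ) ^ (-s) * charRemainder χ M + charMean χ / (s - 1) * (M : ℂ) ^ (1 - s)
      + s * ∫ u in Ioi (M : ℝ), charRemainder χ u * (u : ℂ) ^ (-(s + 1)) := by
  have hs0 : s ≠ 0 := by rintro rfl; simp at hs
  have hs1 : s ≠ 1 := by rintro rfl; simp at him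
  have hs1' : s - 1 ≠ 0 := sub_ne_zero.2 hs1
  induction M, hM using Nat.le_induction with
  | base =>
    rw [LFunction_eq_integral χ hs him]
    simp [charRemainder]
    field_simp
    ring
  | succ M hM ih =>
    have hM0 : (0 : ℝ) < M := Nat.cast_pos.2 hM
    have hint := integrableOn_charRemainder_mul_cpow χ hs hM0
    have hsplit := setIntegral_union (Ioc_disjoint_Ioi le_rfl) measurableSet_Ioi
      (hint.mono_set Ioc_subset_Ioi_self)
      (hint.mono_set (Ioi_subset_Ioi (le_add_of_nonneg_right zero_le_one : (M : ℝ) ≤ M + 1)))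
    rw [Ioc_union_Ioi_eq_Ioi (le_add_of_nonneg_right zero_le_one)] at hsplit
    have hpow : ∀ m : ℕ, m ≠ 0 → (m : ℂ) ^ (1 - s) = m * (m : ℂ) ^ (-s) := fun m hm ↦ by
      rw [sub_eq_add_neg, cpow_add _ _ (Nat.cast_ne_zero.2 hm), cpow_one]
    rw [ih, hsplit, mul_add, integral_Ioc_charRemainder_mul_cpow χ hM hs0 hs1,
      Finset.sum_Icc_succ_top (by omega), charRemainder, charRemainder, Nat.floor_natCast,
      Nat.floor_natCast, Finset.sum_Icc_succ_top (by omega), hpow M (by omega),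
      hpow (M + 1) (by omega), ← Nat.cast_add_one, hpow (M + 1) (by omega)]
    push_cast
    field_simp
    ring

end Truncation

section GrowthBounds

open Complex MeasureTheory Set

lemma two_mul_rpow_le {ε T : ℝ} (hε : ε ≤ 1) (hT : 0 ≤ T) : (2 * T) ^ ε ≤ 2 * T ^ ε := by
  rw [Real.mul_rpow zero_le_two hT]
  gcongr
  exact Real.rpow_le_self_of_one_le one_le_two hε

lemma sum_Icc_rpow_neg_le {ε σ : ℝ} (hε : 0 < ε) (hσ : 1 - ε / 2 ≤ σ) {M : ℕ} (hM : 1 ≤ M) :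
    ∑ n ∈ Finset.Icc 1 M, (n : ℝ) ^ (-σ) ≤ (1 + 2 / ε) * (M : ℝ) ^ ε := by
  have hM1 : (1 : ℝ) ≤ M := Nat.one_le_cast.2 hM
  have hM0 : (0 : ℝ) < M := zero_lt_one.trans_le hM1
  set E := (M : ℝ) ^ (ε / 2) with hE
  have hterm : ∀ n ∈ Finset.Icc 1 M, (n : ℝ) ^ (-σ) ≤ E * (n : ℝ)⁻¹ := by
    intro n hn
    obtain ⟨hn1, hnM⟩ := Finset.mem_Icc.1 hn
    have hn0 : (0 : ℝ) < n := Nat.cast_pos.2 hn1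
    calc (n : ℝ) ^ (-σ) ≤ (n : ℝ) ^ (ε / 2 + -1) :=
          Real.rpow_le_rpow_of_exponent_le (Nat.one_le_cast.2 hn1) (by linarith)
      _ = (n : ℝ) ^ (ε / 2) * (n : ℝ)⁻¹ := by rw [Real.rpow_add hn0, Real.rpow_neg_one]
      _ ≤ E * (n : ℝ)⁻¹ := by
          rw [hE]
          gcongr
  have hharm : ∑ n ∈ Finset.Icc 1 M, (n : ℝ)⁻¹ ≤ 1 + Real.log M := by
    have h := harmonic_le_one_add_log M
    rw [harmonic_eq_sum_Icc] at h
    push_cast at h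
    exact h
  have hlog : Real.log M ≤ 2 / ε * E := by
    have h := Real.log_le_rpow_div hM0.le (half_pos hε)
    rwa [div_div_eq_mul_div, mul_comm, mul_div_right_comm] at h
  calc ∑ n ∈ Finset.Icc 1 M, (n : ℝ) ^ (-σ) ≤ E * ∑ n ∈ Finset.Icc 1 M, (n : ℝ)⁻¹ := by
        rw [Finset.mul_sum]
        exact Finset.sum_le_sum hterm
    _ ≤ E * (E + 2 / ε * E) := by
        gcongr
        linarith [Real.one_le_rpow hM1 (half_pos hε).le]
    _ = (1 + 2 / ε) * (M : ℝ) ^ ε := by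
        rw [← add_halves ε, Real.rpow_add hM0, ← hE, add_halves]
        ring

variable {N : ℕ} [NeZero N] (χ : DirichletCharacter ℂ N) {ε : ℝ}

lemma norm_LFunction_le_of_natCast {B : ℝ} (hB : ∀ u : ℝ, 0 ≤ u → ‖charRemainder χ u‖ ≤ B)
    (hε : 0 < ε) (hε1 : ε ≤ 1) {s : ℂ} (hre : 1 - ε / 2 ≤ s.re) (hre' : s.re ≤ 4)
    (him : 1 ≤ |s.im|) {M : ℕ} (hM : |s.im| ≤ M) :
    ‖χ.LFunction s‖ ≤ (1 + 2 / ε + 11 * B + ‖charMean χ‖) * (M : ℝ) ^ ε := by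
  have hB0 : 0 ≤ B := (norm_nonneg _).trans (hB 0 le_rfl)
  have hM1 : (1 : ℝ) ≤ M := him.trans hM
  have hM0 : (0 : ℝ) < M := zero_lt_one.trans_le hM1
  have hMnat : 0 < M := Nat.cast_pos.1 hM0
  have hs0 : 0 < s.re := by linarith
  set E := (M : ℝ) ^ ε
  have hpow : (M : ℝ) ^ (1 - s.re) ≤ E := Real.rpow_le_rpow_of_exponent_le hM1 (by linarith)
  have hpow' : (M : ℝ) ^ (-s.re) * M ≤ E := by
    rwa [← Real.rpow_add_one hM0.ne', neg_add_eq_sub]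
  have hpow'' : (M : ℝ) ^ (-s.re) ≤ E := (le_mul_of_one_le_right (by positivity) hM1).trans hpow'
  have hsum : ‖∑ n ∈ Finset.Icc 1 M, (n : ℂ) ^ (-s) * χ n‖ ≤ (1 + 2 / ε) * E := by
    refine (norm_sum_le_of_le _ fun n hn ↦ ?_).trans (sum_Icc_rpow_neg_le hε hre hMnat)
    rw [norm_mul, norm_natCast_cpow_of_pos (Finset.mem_Icc.1 hn).1, neg_re]
    exact mul_le_of_le_one_right (by positivity) (χ.norm_le_one _)
  have hrem : ‖(M : ℂ) ^ (-s) * charRemainder χ M‖ ≤ B * E := by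
    rw [norm_mul, norm_natCast_cpow_of_pos hMnat, neg_re, mul_comm]
    exact mul_le_mul (hB M hM0.le) hpow'' (by positivity) hB0
  have hpole : ‖charMean χ / (s - 1) * (M : ℂ) ^ (1 - s)‖ ≤ ‖charMean χ‖ * E := by
    have hs1 : 1 ≤ ‖s - 1‖ := him.trans (by simpa using abs_im_le_norm (s - 1))
    rw [norm_mul, norm_natCast_cpow_of_pos hMnat, norm_div, sub_re, one_re]
    exact mul_le_mul (div_le_self (norm_nonneg _) hs1) hpow (by positivity) (norm_nonneg _)
  have htail : ‖s * ∫ u in Ioi (M : ℝ), charRemainder χ u * (u : ℂ) ^ (-(s + 1))‖ ≤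
      10 * B * E := by
    have hnorm : ‖s‖ ≤ 5 * M := by
      linarith [norm_le_abs_re_add_abs_im s, abs_of_pos hs0]
    have hdiv : (M : ℝ) ^ (-s.re) / s.re ≤ 2 * (M : ℝ) ^ (-s.re) := by
      rw [div_le_iff₀ hs0]
      nlinarith [show 0 < (M : ℝ) ^ (-s.re) by positivity]
    calc _ ≤ 5 * M * (B * (2 * (M : ℝ) ^ (-s.re))) := by
          rw [norm_mul]
          gcongr
          exact (norm_integral_charRemainder_mul_cpow_le χ hB hs0 hM0).trans (by gcongr)
      _ = 10 * B * ((M : ℝ) ^ (-s.re) * M) := by ring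
      _ ≤ 10 * B * E := by gcongr
  rw [LFunction_eq_sum_add_integral χ hs0 (by intro h; simp [h] at him; linarith) hMnat]
  refine (norm_add₃_le.trans (add_le_add_three (norm_sub_le _ _) le_rfl le_rfl)).trans ?_
  linarith

lemma exists_norm_LFunction_le (hε : 0 < ε) (hε1 : ε ≤ 1) : ∃ C : ℝ, 0 < C ∧
    ∀ s : ℂ, 1 - ε / 2 ≤ s.re → s.re ≤ 4 → 1 ≤ |s.im| → ‖χ.LFunction s‖ ≤ C * |s.im| ^ ε := by
  obtain ⟨B, hB⟩ := exists_norm_charRemainder_le χ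
  have hB0 : 0 ≤ B := (norm_nonneg _).trans (hB 0 le_rfl)
  refine ⟨(1 + 2 / ε + 11 * B + ‖charMean χ‖) * 2, by positivity, fun s hre hre' him ↦ ?_⟩
  have hceil : (⌈|s.im|⌉₊ : ℝ) ≤ 2 * |s.im| := by
    linarith [Nat.ceil_lt_add_one (abs_nonneg s.im)]
  calc ‖χ.LFunction s‖ ≤ (1 + 2 / ε + 11 * B + ‖charMean χ‖) * (⌈|s.im|⌉₊ : ℝ) ^ ε :=
        norm_LFunction_le_of_natCast χ hB hε hε1 hre hre' him (Nat.le_ceil _)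
    _ ≤ (1 + 2 / ε + 11 * B + ‖charMean χ‖) * (2 * |s.im| ^ ε) := by
        gcongr
        exact (Real.rpow_le_rpow (by positivity) hceil hε.le).trans
          (two_mul_rpow_le hε1 (abs_nonneg _))
    _ = _ := by ring

lemma exists_norm_iteratedDeriv_LFunction_le (hε : 0 < ε) (hε1 : ε ≤ 1) (n : ℕ) :
    ∃ C : ℝ, 0 < C ∧ ∀ s : ℂ, 1 ≤ s.re → s.re ≤ 3 → 2 ≤ |s.im| →
      ‖iteratedDeriv n χ.LFunction s‖ ≤ C * |s.im| ^ ε := by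
  obtain ⟨C, hC, hL⟩ := exists_norm_LFunction_le χ hε hε1
  refine ⟨n.factorial * (C * 2) / (ε / 2) ^ n, by positivity, fun s hre hre' him ↦ ?_⟩
  have hball : ∀ z ∈ Metric.closedBall s (ε / 2),
      ‖χ.LFunction z‖ ≤ C * 2 * |s.im| ^ ε ∧ z ≠ 1 := by
    intro z hz
    rw [Metric.mem_closedBall, dist_eq_norm] at hz
    have hzre := (abs_re_le_norm (z - s)).trans hz
    have hzim := (abs_im_le_norm (z - s)).trans hz
    rw [sub_re, abs_le] at hzre
    rw [sub_im] at hzim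
    have hle : |z.im| ≤ 2 * |s.im| := by linarith [abs_sub_abs_le_abs_sub z.im s.im]
    have hge : 1 ≤ |z.im| := by
      linarith [abs_sub_abs_le_abs_sub s.im z.im, abs_sub_comm s.im z.im]
    refine ⟨(hL z (by linarith) (by linarith) hge).trans ?_, ?_⟩
    · rw [mul_assoc]
      gcongr
      exact (Real.rpow_le_rpow (abs_nonneg _) hle hε.le).trans (two_mul_rpow_le hε1 (abs_nonneg _))
    · rintro rfl
      norm_num at hge
  have hdiff : DiffContOnCl ℂ χ.LFunction (Metric.ball s (ε / 2)) := by
    refine DifferentiableOn.diffContOnCl fun z hz ↦ ?_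
    rw [closure_ball _ (by positivity)] at hz
    exact (χ.differentiableAt_LFunction z (Or.inl (hball z hz).2)).differentiableWithinAt
  have hcauchy := norm_iteratedDeriv_le_of_forall_mem_sphere_norm_le n (half_pos hε) hdiff
    fun z hz ↦ (hball z (Metric.sphere_subset_closedBall hz)).1
  exact hcauchy.trans_eq (by ring)

end GrowthBounds

section LFunctionLowerBound

open Complex MeasureTheory Set

-- Below the threshold `η ^ 4 / W ^ 5` the quartic bound is too weak, and the Lipschitz bound
-- transports the estimate from the threshold instead.
lemma le_of_le_pow_four_of_lipschitz {g : ℝ → ℝ} {c C η W : ℝ} (hc : 0 < c) (hC : 0 < C)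
    (hη : 0 < η) (hη1 : η ≤ 1) (hηc : η * (2 * C) ≤ c) (hW : 1 ≤ W)
    (hg0 : ∀ x ∈ Icc (0 : ℝ) 1, 0 ≤ g x)
    (hpow : ∀ x ∈ Ioc (0 : ℝ) 1, c ^ 4 * x ^ 3 / W ≤ g x ^ 4)
    (hlip : ∀ x ∈ Icc (0 : ℝ) 1, ∀ y ∈ Icc (0 : ℝ) 1, g y - g x ≤ C * W * |y - x|)
    {x : ℝ} (hx : x ∈ Icc (0 : ℝ) 1) : c * η ^ 3 / 2 / W ^ 4 ≤ g x := by
  have : 0 < W := zero_lt_one.trans_le hW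
  set x₀ := η ^ 4 / W ^ 5 with hx₀
  have hx₀pos : 0 < x₀ := by positivity
  have hx₀le : x₀ ≤ 1 :=
    div_le_one_of_le₀ ((pow_le_one₀ hη.le hη1).trans (one_le_pow₀ hW)) (by positivity)
  have habove : ∀ t ∈ Icc x₀ 1, c * η ^ 3 / W ^ 4 ≤ g t := by
    intro t ht
    refine le_of_pow_le_pow_left₀ four_ne_zero (hg0 t ⟨hx₀pos.le.trans ht.1, ht.2⟩) ?_
    calc (c * η ^ 3 / W ^ 4) ^ 4 = c ^ 4 * x₀ ^ 3 / W := by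
          rw [hx₀]
          field_simp
      _ ≤ c ^ 4 * t ^ 3 / W := by
          gcongr
          exact ht.1
      _ ≤ g t ^ 4 := hpow t ⟨hx₀pos.trans_le ht.1, ht.2⟩
  rcases le_or_gt x₀ x with hle | hlt
  · refine le_trans ?_ (habove x ⟨hle, hx.2⟩)
    gcongr
    exact half_le_self (by positivity)
  · have hdist : |x₀ - x| ≤ x₀ := by
      rw [abs_of_pos (sub_pos.2 hlt)]
      exact sub_le_self _ hx.1
    have hincr : g x₀ - g x ≤ c * η ^ 3 / 2 / W ^ 4 := by
      calc g x₀ - g x ≤ C * W * x₀ := (hlip x hx x₀ ⟨hx₀pos.le, hx₀le⟩).trans (by gcongr)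
        _ = η * (2 * C) * η ^ 3 / 2 / W ^ 4 := by
            rw [hx₀]
            field_simp
        _ ≤ c * η ^ 3 / 2 / W ^ 4 := by gcongr
    have hhalf : c * η ^ 3 / W ^ 4 = c * η ^ 3 / 2 / W ^ 4 + c * η ^ 3 / 2 / W ^ 4 := by ring
    linarith [habove x₀ ⟨le_rfl, hx₀le⟩]

variable {N : ℕ} [NeZero N] (χ : DirichletCharacter ℂ N) {ε : ℝ}

lemma exists_norm_LFunction_one_add_le : ∃ C : ℝ, 0 < C ∧
    ∀ x : ℝ, 0 < x → x ≤ 1 → ‖χ.LFunction (1 + x)‖ ≤ C / x := by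
  obtain ⟨B, hB⟩ := exists_norm_charRemainder_le χ
  have hB0 : 0 ≤ B := (norm_nonneg _).trans (hB 0 le_rfl)
  refine ⟨2 * ‖charMean χ‖ + B + 1, by positivity, fun x hx hx1 ↦ ?_⟩
  have hre : (1 + x : ℂ).re = 1 + x := by simp
  have hnorm : ‖(1 + x : ℂ)‖ = 1 + x := by
    rw [← ofReal_one, ← ofReal_add, norm_real, Real.norm_of_nonneg (by linarith)]
  have hpole : ‖charMean χ * (1 + x) / (1 + x - 1)‖ ≤ 2 * ‖charMean χ‖ / x := by
    rw [norm_div, norm_mul, hnorm, add_sub_cancel_left, norm_real, Real.norm_of_nonneg hx.le]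
    gcongr ?_ / x
    nlinarith [norm_nonneg (charMean χ)]
  have htail : ‖(1 + x : ℂ) * ∫ u in Ioi (1 : ℝ), charRemainder χ u *
      (u : ℂ) ^ (-((1 + x : ℂ) + 1))‖ ≤ (B + 1) / x := by
    have hint := norm_integral_charRemainder_mul_cpow_le χ hB (s := 1 + x)
      (by rw [hre]; linarith) zero_lt_one
    rw [hre, Real.one_rpow] at hint
    calc _ ≤ (1 + x) * (B * (1 / (1 + x))) := by
          rw [norm_mul, hnorm]
          gcongr
      _ = B := by field_simp
      _ ≤ B + 1 := by linarith
      _ ≤ (B + 1) / x := le_div_self (by linarith) hx hx1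
  rw [LFunction_eq_integral_of_one_lt_re χ (by rw [hre]; linarith), add_assoc _ B,
    add_div (2 * ‖charMean χ‖)]
  exact (norm_add_le _ _).trans (add_le_add hpole htail)

lemma exists_le_norm_LFunction_pow_four (hε : 0 < ε) (hε1 : ε ≤ 1) : ∃ c : ℝ, 0 < c ∧
    ∀ x y : ℝ, x ∈ Ioc (0 : ℝ) 1 → 2 ≤ |y| →
      c ^ 4 * x ^ 3 / |y| ^ ε ≤ ‖χ.LFunction (1 + x + I * y)‖ ^ 4 := by
  obtain ⟨C₀, hC₀, hL₀⟩ := exists_norm_LFunction_one_add_le (1 : DirichletCharacter ℂ N)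
  obtain ⟨C₂, hC₂, hL₂⟩ := exists_norm_LFunction_le (χ ^ 2) hε hε1
  obtain ⟨c, hc, hc4⟩ : ∃ c : ℝ, 0 < c ∧ c ^ 4 = 1 / (C₀ ^ 3 * (C₂ * 2)) :=
    ⟨(1 / (C₀ ^ 3 * (C₂ * 2))) ^ ((4 : ℕ)⁻¹ : ℝ), by positivity,
      Real.rpow_inv_natCast_pow (by positivity) four_ne_zero⟩
  refine ⟨c, hc, fun x y ⟨hx, hx1⟩ hy ↦ ?_⟩
  have hy0 : 0 < |y| := by linarith
  have hsq : ‖(χ ^ 2).LFunction (1 + x + 2 * I * y)‖ ≤ C₂ * (2 * |y| ^ ε) := by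
    have him : (1 + x + 2 * I * y : ℂ).im = 2 * y := by simp
    have h := hL₂ (1 + x + 2 * I * y) (by simp; linarith) (by simp; linarith)
      (by rw [him, abs_mul, abs_two]; linarith)
    rw [him, abs_mul, abs_two] at h
    refine h.trans ?_
    gcongr
    exact two_mul_rpow_le hε1 hy0.le
  have hprod : 1 ≤ (C₀ / x) ^ 3 * ‖χ.LFunction (1 + x + I * y)‖ ^ 4 * (C₂ * (2 * |y| ^ ε)) := by
    have h := χ.norm_LFunction_product_ge_one hx y
    rw [norm_mul, norm_mul, norm_pow, norm_pow] at h
    refine h.trans ?_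
    gcongr
    exact hL₀ x hx hx1
  rw [hc4, div_le_iff₀ (by positivity), one_div_mul_eq_div, div_le_iff₀ (by positivity)]
  rw [div_pow, div_mul_eq_mul_div, div_mul_eq_mul_div, le_div_iff₀ (by positivity)] at hprod
  linarith

lemma norm_LFunction_sub_le {y C : ℝ} (hy : y ≠ 0)
    (hC : ∀ s : ℂ, 1 ≤ s.re → s.re ≤ 2 → s.im = y → ‖deriv χ.LFunction s‖ ≤ C)
    {a b : ℝ} (ha : a ∈ Icc (0 : ℝ) 1) (hb : b ∈ Icc (0 : ℝ) 1) :
    ‖χ.LFunction (1 + b + I * y) - χ.LFunction (1 + a + I * y)‖ ≤ C * |b - a| := by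
  have hconv : Convex ℝ (Icc (1 : ℝ) 2 ×ℂ {y}) :=
    ((convex_Icc 1 2).linear_preimage reLm).inter ((convex_singleton y).linear_preimage imLm)
  have hmem : ∀ t ∈ Icc (0 : ℝ) 1, (1 + t + I * y : ℂ) ∈ Icc (1 : ℝ) 2 ×ℂ {y} := fun t ht ↦
    mem_reProdIm.2 ⟨⟨by simpa using ht.1, by simp; linarith [ht.2]⟩, by simp⟩
  have h := hconv.norm_image_sub_le_of_norm_deriv_le (𝕜 := ℂ) (f := χ.LFunction)
    (fun s hs ↦ χ.differentiableAt_LFunction s (Or.inl ?_))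
    (fun s hs ↦ hC s (mem_reProdIm.1 hs).1.1 (mem_reProdIm.1 hs).1.2 (mem_reProdIm.1 hs).2)
    (hmem a ha) (hmem b hb)
  · rwa [add_sub_add_right_eq_sub, add_sub_add_left_eq_sub, ← ofReal_sub, norm_real,
      Real.norm_eq_abs] at h
  · rintro rfl
    exact hy (by simpa using (mem_reProdIm.1 hs).2.symm)

lemma exists_le_norm_LFunction (hε : 0 < ε) (hε1 : ε ≤ 1) : ∃ c : ℝ, 0 < c ∧
    ∀ s : ℂ, 1 ≤ s.re → s.re ≤ 2 → 2 ≤ |s.im| → c / (|s.im| ^ ε) ^ 4 ≤ ‖χ.LFunction s‖ := by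
  obtain ⟨c, hc, hpow⟩ := exists_le_norm_LFunction_pow_four χ hε hε1
  obtain ⟨C, hC, hderiv⟩ := exists_norm_iteratedDeriv_LFunction_le χ hε hε1 1
  simp only [iteratedDeriv_one] at hderiv
  have hη : 0 < min 1 (c / (2 * C)) := by positivity
  refine ⟨c * min 1 (c / (2 * C)) ^ 3 / 2, by positivity, fun s hre hre' him ↦ ?_⟩
  have hs : 1 + ((s.re - 1 : ℝ) : ℂ) + I * s.im = s := by
    apply Complex.ext <;> simp
  have him0 : s.im ≠ 0 := fun h ↦ by norm_num [h] at him
  have hderiv' : ∀ z : ℂ, 1 ≤ z.re → z.re ≤ 2 → z.im = s.im →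
      ‖deriv χ.LFunction z‖ ≤ C * |s.im| ^ ε := fun z hz hz' hzim ↦
    hzim ▸ hderiv z hz (by linarith) (hzim ▸ him)
  have key := le_of_le_pow_four_of_lipschitz
    (g := fun x ↦ ‖χ.LFunction (1 + x + I * s.im)‖) hc hC hη (min_le_left _ _)
    ((le_div_iff₀ (by positivity)).1 (min_le_right _ _))
    (Real.one_le_rpow (by linarith) hε.le) (fun _ _ ↦ norm_nonneg _)
    (fun x hx ↦ hpow x s.im hx him) (fun a ha b hb ↦ (norm_sub_norm_le _ _).trans
      (norm_LFunction_sub_le χ him0 hderiv' ha hb))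
    (show s.re - 1 ∈ Icc (0 : ℝ) 1 from ⟨by linarith, by linarith⟩)
  rwa [hs] at key

end LFunctionLowerBound

section LogarithmicDerivative

open Complex Set DirichletCharacter

lemma deriv_logDeriv {f : ℂ → ℂ} {s : ℂ} (hf : AnalyticAt ℂ f s) (h0 : f s ≠ 0) :
    deriv (logDeriv f) s = deriv (deriv f) s / f s - (deriv f s / f s) ^ 2 := by
  have h := (hf.deriv.differentiableAt.hasDerivAt.div hf.differentiableAt.hasDerivAt h0).deriv
  refine h.trans ?_
  field_simp

lemma analyticAt_logDeriv {f : ℂ → ℂ} {s : ℂ} (hf : AnalyticAt ℂ f s) (h0 : f s ≠ 0) :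
    AnalyticAt ℂ (logDeriv f) s :=
  hf.deriv.div hf h0

lemma norm_logDeriv_le_and_norm_deriv_logDeriv_le {f : ℂ → ℂ} {s : ℂ} {c C₁ C₂ W : ℝ}
    (hf : AnalyticAt ℂ f s) (hc : 0 < c) (hW : 1 ≤ W) (hlow : c / W ^ 4 ≤ ‖f s‖)
    (h₁ : ‖deriv f s‖ ≤ C₁ * W) (h₂ : ‖deriv (deriv f) s‖ ≤ C₂ * W) :
    ‖logDeriv f s‖ ≤ (C₁ / c + C₂ / c + (C₁ / c) ^ 2) * W ^ 10 ∧
      ‖deriv (logDeriv f) s‖ ≤ (C₁ / c + C₂ / c + (C₁ / c) ^ 2) * W ^ 10 := by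
  have hW0 : 0 < W := zero_lt_one.trans_le hW
  have hC₁ : 0 ≤ C₁ := nonneg_of_mul_nonneg_left ((norm_nonneg _).trans h₁) hW0
  have hC₂ : 0 ≤ C₂ := nonneg_of_mul_nonneg_left ((norm_nonneg _).trans h₂) hW0
  have hW5 : W ^ 5 ≤ W ^ 10 := pow_le_pow_right₀ hW (by norm_num)
  have hquot {C : ℝ} {w : ℂ} (hC : 0 ≤ C) (hw : ‖w‖ ≤ C * W) : ‖w / f s‖ ≤ C / c * W ^ 5 := by
    calc ‖w / f s‖ ≤ C * W / (c / W ^ 4) := by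
          rw [norm_div]
          gcongr
      _ = C / c * W ^ 5 := by field_simp
  have hq₁ := hquot hC₁ h₁
  have hC₁c : 0 ≤ C₁ / c := by positivity
  have hC₂c : 0 ≤ C₂ / c := by positivity
  constructor
  · refine hq₁.trans (mul_le_mul ?_ hW5 (by positivity) (by positivity))
    linarith [sq_nonneg (C₁ / c)]
  · rw [deriv_logDeriv hf (norm_pos_iff.1 (lt_of_lt_of_le (by positivity) hlow))]
    calc _ ≤ C₂ / c * W ^ 5 + (C₁ / c * W ^ 5) ^ 2 := by
          refine (norm_sub_le _ _).trans (add_le_add (hquot hC₂ h₂) ?_)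
          rw [norm_pow]
          gcongr
      _ ≤ C₂ / c * W ^ 10 + (C₁ / c) ^ 2 * W ^ 10 := by
          rw [mul_pow, ← pow_mul]
          gcongr
      _ ≤ _ := by
          rw [← add_mul]
          gcongr
          linarith

variable {N : ℕ} [NeZero N] {χ : DirichletCharacter ℂ N} {s : ℂ}

lemma analyticAt_LFunction (hs : s ≠ 1) : AnalyticAt ℂ χ.LFunction s := by
  rw [analyticAt_iff_eventually_differentiableAt]
  filter_upwards [isOpen_ne.mem_nhds hs] with z hz
  exact χ.differentiableAt_LFunction z (Or.inl hz)

variable (χ) in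
lemma exists_norm_logDeriv_LFunction_le {ε : ℝ} (hε : 0 < ε) (hε1 : ε ≤ 1) : ∃ C : ℝ, 0 < C ∧
    ∀ s : ℂ, 1 ≤ s.re → s.re ≤ 2 → 2 ≤ |s.im| → ‖logDeriv χ.LFunction s‖ ≤ C * |s.im| ^ ε ∧
      ‖deriv (logDeriv χ.LFunction) s‖ ≤ C * |s.im| ^ ε := by
  have hδ : 0 < ε / 10 := by positivity
  obtain ⟨C₁, hC₁, hL₁⟩ := exists_norm_iteratedDeriv_LFunction_le χ hδ (by linarith) 1
  obtain ⟨C₂, hC₂, hL₂⟩ := exists_norm_iteratedDeriv_LFunction_le χ hδ (by linarith) 2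
  obtain ⟨c, hc, hL⟩ := exists_le_norm_LFunction χ hδ (by linarith)
  refine ⟨C₁ / c + C₂ / c + (C₁ / c) ^ 2, by positivity, fun s hre hre' him ↦ ?_⟩
  have hs : s ≠ 1 := by
    rintro rfl
    norm_num at him
  have h₁ := hL₁ s hre (by linarith) him
  have h₂ := hL₂ s hre (by linarith) him
  rw [iteratedDeriv_one] at h₁
  rw [iteratedDeriv_succ, iteratedDeriv_one] at h₂
  have hpow : |s.im| ^ ε = (|s.im| ^ (ε / 10)) ^ 10 := by
    rw [← Real.rpow_mul_natCast (abs_nonneg _)]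
    congr 1
    push_cast
    ring
  rw [hpow]
  exact norm_logDeriv_le_and_norm_deriv_logDeriv_le (analyticAt_LFunction hs) hc
    (Real.one_le_rpow (by linarith) hδ.le) (hL s hre hre' him) h₁ h₂

lemma LFunctionTrivChar₁_ne_zero_of_one_le_re (hs : 1 ≤ s.re) : LFunctionTrivChar₁ N s ≠ 0 := by
  rcases eq_or_ne s 1 with rfl | hs1
  · exact LFunctionTrivChar₁_apply_one_ne_zero N
  · rw [LFunctionTrivChar₁, Function.update_of_ne hs1]
    exact mul_ne_zero (sub_ne_zero.2 hs1) (LFunction_ne_zero_of_one_le_re _ (Or.inr hs1) hs)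

lemma logDeriv_LFunctionTrivChar₁ (hs : 1 ≤ s.re) (hs1 : s ≠ 1) :
    logDeriv (LFunctionTrivChar₁ N) =ᶠ[nhds s]
      fun z ↦ (z - 1)⁻¹ + logDeriv (LFunctionTrivChar N) z := by
  have hne : ∀ᶠ z in nhds s, LFunctionTrivChar N z ≠ 0 :=
    (differentiableAt_LFunction _ s (Or.inl hs1)).continuousAt.eventually_ne
      (LFunction_ne_zero_of_one_le_re _ (Or.inr hs1) hs)
  have hmul : LFunctionTrivChar₁ N =ᶠ[nhds s] fun z ↦ (z - 1) * LFunctionTrivChar N z := by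
    filter_upwards [isOpen_ne.mem_nhds hs1] with z hz
    rw [LFunctionTrivChar₁, Function.update_of_ne hz]
  filter_upwards [isOpen_ne.mem_nhds hs1, hmul.eventuallyEq_nhds, hne] with z hz hz_mul hz_ne
  rw [logDeriv_apply, hz_mul.deriv_eq, hz_mul.eq_of_nhds, ← logDeriv_apply
    (fun z ↦ (z - 1) * LFunctionTrivChar N z), logDeriv_mul (f := fun z ↦ z - 1) z
    (sub_ne_zero.2 hz) hz_ne (by fun_prop) (differentiableAt_LFunction _ z (Or.inl hz)),
    logDeriv_apply]
  simp

lemma exists_norm_logDeriv_LFunctionTrivChar₁_le (N : ℕ) [NeZero N] {ε : ℝ} (hε : 0 < ε)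
    (hε1 : ε ≤ 1) : ∃ C : ℝ, 0 < C ∧ ∀ s : ℂ, 1 ≤ s.re → s.re ≤ 2 → 2 ≤ |s.im| →
      ‖logDeriv (LFunctionTrivChar₁ N) s‖ ≤ C * |s.im| ^ ε ∧
      ‖deriv (logDeriv (LFunctionTrivChar₁ N)) s‖ ≤ C * |s.im| ^ ε := by
  obtain ⟨C, hC, hL⟩ := exists_norm_logDeriv_LFunction_le (1 : DirichletCharacter ℂ N) hε hε1
  refine ⟨1 + C, by positivity, fun s hre hre' him ↦ ?_⟩
  have hs : s ≠ 1 := by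
    rintro rfl
    norm_num at him
  have hs1 : s - 1 ≠ 0 := sub_ne_zero.2 hs
  have hnorm : 1 ≤ ‖s - 1‖ := by
    have h := abs_im_le_norm (s - 1)
    rw [sub_im, one_im, sub_zero] at h
    linarith
  have hone : 1 ≤ |s.im| ^ ε := Real.one_le_rpow (by linarith) hε.le
  obtain ⟨hlog, hlog'⟩ := hL s hre hre' him
  have hdiff : DifferentiableAt ℂ (logDeriv (LFunctionTrivChar N)) s :=
    (analyticAt_logDeriv (analyticAt_LFunction hs)
      (LFunction_ne_zero_of_one_le_re _ (Or.inr hs) hre)).differentiableAt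
  have hinv : HasDerivAt (fun z : ℂ ↦ (z - 1)⁻¹) (-1 / (s - 1) ^ 2) s :=
    ((hasDerivAt_id s).sub_const 1).fun_inv hs1
  have heq := logDeriv_LFunctionTrivChar₁ (N := N) hre hs
  rw [heq.deriv_eq, heq.eq_of_nhds, (hinv.fun_add hdiff.hasDerivAt).deriv, add_mul, one_mul]
  constructor
  · refine (norm_add_le _ _).trans (add_le_add (le_trans ?_ hone) hlog)
    rw [norm_inv]
    exact inv_le_one_of_one_le₀ hnorm
  · refine (norm_add_le _ _).trans (add_le_add (le_trans ?_ hone) hlog')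
    rw [norm_div, norm_neg, norm_one, norm_pow]
    exact div_le_one_of_le₀ (one_le_pow₀ hnorm) (by positivity)

lemma exists_norm_le_one_add_abs_im_rpow {f : ℂ → ℂ} {a b ε C : ℝ} (hε : 0 ≤ ε)
    (hf : ContinuousOn f {s | s.re ∈ Icc a b})
    (hC : ∀ s : ℂ, s.re ∈ Icc a b → 2 ≤ |s.im| → ‖f s‖ ≤ C * |s.im| ^ ε) :
    ∃ D : ℝ, 0 < D ∧ ∀ s : ℂ, s.re ∈ Icc a b → ‖f s‖ ≤ D * (1 + |s.im|) ^ ε := by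
  have hK : IsCompact (Icc a b ×ℂ Icc (-2 : ℝ) 2) := isCompact_Icc.reProdIm isCompact_Icc
  obtain ⟨B, hB⟩ := hK.exists_bound_of_continuousOn (hf.mono fun s hs ↦ (mem_reProdIm.1 hs).1)
  refine ⟨1 + |B| + |C|, by positivity, fun s hs ↦ ?_⟩
  rcases le_or_gt |s.im| 2 with him | him
  · have hone : 1 ≤ (1 + |s.im|) ^ ε := Real.one_le_rpow (by linarith [abs_nonneg s.im]) hε
    calc ‖f s‖ ≤ |B| := (hB s (mem_reProdIm.2 ⟨hs, abs_le.1 him⟩)).trans (le_abs_self B)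
      _ ≤ (1 + |B| + |C|) * 1 := by linarith [abs_nonneg C]
      _ ≤ _ := by gcongr
  · calc ‖f s‖ ≤ C * |s.im| ^ ε := hC s hs him.le
      _ ≤ (1 + |B| + |C|) * (1 + |s.im|) ^ ε := by
          gcongr
          · linarith [abs_nonneg B, le_abs_self C]
          · linarith

variable (χ) in
/-- The negative logarithmic derivative of `(s - 1) * L(s, 1) * L(s, χ)`, which is analytic on
`1 ≤ re s` because the pole of `L(s, 1)` has been removed. -/
noncomputable def regularNegLogDeriv (s : ℂ) : ℂ :=
  -logDeriv (LFunctionTrivChar₁ N) s - logDeriv χ.LFunction s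

lemma analyticAt_logDeriv_LFunctionTrivChar₁ (hs : 1 ≤ s.re) :
    AnalyticAt ℂ (logDeriv (LFunctionTrivChar₁ N)) s :=
  analyticAt_logDeriv ((differentiable_LFunctionTrivChar₁ N).analyticAt s)
    (LFunctionTrivChar₁_ne_zero_of_one_le_re hs)

lemma analyticAt_logDeriv_LFunction (hχ : χ ≠ 1) (hs : 1 ≤ s.re) :
    AnalyticAt ℂ (logDeriv χ.LFunction) s :=
  analyticAt_logDeriv ((differentiable_LFunction hχ).analyticAt s)
    (LFunction_ne_zero_of_one_le_re χ (Or.inl hχ) hs)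

lemma analyticAt_regularNegLogDeriv (hχ : χ ≠ 1) (hs : 1 ≤ s.re) :
    AnalyticAt ℂ (regularNegLogDeriv χ) s :=
  (analyticAt_logDeriv_LFunctionTrivChar₁ hs).neg.sub (analyticAt_logDeriv_LFunction hχ hs)

lemma deriv_regularNegLogDeriv (hχ : χ ≠ 1) (hs : 1 ≤ s.re) :
    deriv (regularNegLogDeriv χ) s =
      -deriv (logDeriv (LFunctionTrivChar₁ N)) s - deriv (logDeriv χ.LFunction) s :=
  ((analyticAt_logDeriv_LFunctionTrivChar₁ hs).differentiableAt.hasDerivAt.fun_neg.fun_sub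
    (analyticAt_logDeriv_LFunction hχ hs).differentiableAt.hasDerivAt).deriv

lemma exists_norm_regularNegLogDeriv_le (hχ : χ ≠ 1) {ε : ℝ} (hε : 0 < ε) (hε1 : ε ≤ 1) :
    ∃ C : ℝ, 0 < C ∧ ∀ s : ℂ, s.re ∈ Icc 1 2 →
      ‖regularNegLogDeriv χ s‖ ≤ C * (1 + |s.im|) ^ ε ∧
      ‖deriv (regularNegLogDeriv χ) s‖ ≤ C * (1 + |s.im|) ^ ε := by
  obtain ⟨C₁, -, h₁⟩ := exists_norm_logDeriv_LFunctionTrivChar₁_le N hε hε1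
  obtain ⟨C₂, -, h₂⟩ := exists_norm_logDeriv_LFunction_le χ hε hε1
  obtain ⟨D, hD, hF⟩ := exists_norm_le_one_add_abs_im_rpow (f := regularNegLogDeriv χ)
    (C := C₁ + C₂) (a := 1) (b := 2) hε.le
    (fun s hs ↦ (analyticAt_regularNegLogDeriv hχ hs.1).continuousAt.continuousWithinAt)
    fun s hs him ↦ by
      obtain ⟨hs₁, -⟩ := h₁ s hs.1 hs.2 him
      rw [← norm_neg] at hs₁
      rw [regularNegLogDeriv, add_mul]
      exact (norm_sub_le _ _).trans (add_le_add hs₁ (h₂ s hs.1 hs.2 him).1)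
  obtain ⟨D', -, hF'⟩ := exists_norm_le_one_add_abs_im_rpow (f := deriv (regularNegLogDeriv χ))
    (C := C₁ + C₂) (a := 1) (b := 2) hε.le
    (fun s hs ↦ (analyticAt_regularNegLogDeriv hχ hs.1).deriv.continuousAt.continuousWithinAt)
    fun s hs him ↦ by
      obtain ⟨-, hs₁⟩ := h₁ s hs.1 hs.2 him
      rw [← norm_neg] at hs₁
      rw [deriv_regularNegLogDeriv hχ hs.1, add_mul]
      exact (norm_sub_le _ _).trans (add_le_add hs₁ (h₂ s hs.1 hs.2 him).2)
  refine ⟨max D D', lt_max_of_lt_left hD, fun s hs ↦ ⟨(hF s hs).trans ?_, (hF' s hs).trans ?_⟩⟩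
  · gcongr
    exact le_max_left _ _
  · gcongr
    exact le_max_right _ _

end LogarithmicDerivative

section RieszMean

open Complex MeasureTheory Set
open scoped Topology

lemma hasMellin_of_eq_zero_of_setIntegral_Ioi {f g : ℝ → ℂ} {c : ℝ} {s m : ℂ} (hc : 0 ≤ c)
    (hf : ∀ u ≤ c, f u = 0) (hfg : ∀ u ∈ Ioi c, (u : ℂ) ^ (s - 1) • f u = g u)
    (hg : IntegrableOn g (Ioi c)) (hm : ∫ u in Ioi c, g u = m) : HasMellin f s m := by
  have hzero : ∀ u ∈ Ioi (0 : ℝ) \ Ioi c, (u : ℂ) ^ (s - 1) • f u = 0 := fun u hu ↦ by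
    rw [hf u (not_lt.1 hu.2), smul_zero]
  constructor
  · exact (hg.congr_fun (fun u hu ↦ (hfg u hu).symm) measurableSet_Ioi).of_forall_sdiff_eq_zero
      measurableSet_Ioi hzero
  · rw [mellin, setIntegral_eq_of_subset_of_forall_sdiff_eq_zero measurableSet_Ioi
      (Ioi_subset_Ioi hc) hzero, setIntegral_congr_fun measurableSet_Ioi hfg, hm]

lemma hasMellin_max_sub {c : ℝ} (hc : 0 < c) {s : ℂ} (hs : 0 < s.re) :
    HasMellin (fun u ↦ ((max (u - c) 0 : ℝ) : ℂ)) (-s - 1) ((c : ℂ) ^ (-s) / (s * (s + 1))) := by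
  have hs0 : s ≠ 0 := by rintro rfl; simp at hs
  have hs1 : s + 1 ≠ 0 := fun h ↦ by
    have := congrArg re h
    simp at this
    linarith
  have hc0 : (c : ℂ) ≠ 0 := ofReal_ne_zero.2 hc.ne'
  have hint₁ := integrableOn_Ioi_cpow_of_lt (a := -s - 1) (by simp; linarith) hc
  have hint₂ := integrableOn_Ioi_cpow_of_lt (a := -s - 1 - 1) (by simp; linarith) hc
  refine hasMellin_of_eq_zero_of_setIntegral_Ioi
    (g := fun u ↦ (u : ℂ) ^ (-s - 1) - c * (u : ℂ) ^ (-s - 1 - 1)) hc.le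
    (fun u hu ↦ by simp [hu]) (fun u hu ↦ ?_) (hint₁.sub (hint₂.const_mul _)) ?_
  · have hu0 : (u : ℂ) ≠ 0 := ofReal_ne_zero.2 (hc.trans hu).ne'
    rw [max_eq_left (sub_nonneg.2 (le_of_lt hu)), smul_eq_mul, cpow_sub (-s - 1) 1 hu0, cpow_one,
      ofReal_sub]
    field_simp
  · rw [integral_sub hint₁ (hint₂.const_mul _), integral_const_mul,
      integral_Ioi_cpow_of_lt (by simp; linarith) hc,
      integral_Ioi_cpow_of_lt (by simp; linarith) hc, sub_add_cancel, sub_add_cancel,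
      cpow_sub _ _ hc0, cpow_one, ← neg_add']
    field_simp
    ring

lemma hasMellin_sq_max_sub_one {s : ℂ} (hs : 1 < s.re) :
    HasMellin (fun u ↦ ((max (u - 1) 0 ^ 2 / 2 : ℝ) : ℂ)) (-s - 1)
      (1 / (s - 1) / (s * (s + 1))) := by
  have hs0 : s ≠ 0 := by rintro rfl; simp at hs; linarith
  have hs1 : s + 1 ≠ 0 := fun h ↦ by
    have := congrArg re h
    simp at this
    linarith
  have hs2 : s - 1 ≠ 0 := sub_ne_zero.2 (by rintro rfl; simp at hs)
  have hint₀ := integrableOn_Ioi_cpow_of_lt (a := -s) (by simp; linarith) one_pos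
  have hint₁ := integrableOn_Ioi_cpow_of_lt (a := -s - 1) (by simp; linarith) one_pos
  have hint₂ := integrableOn_Ioi_cpow_of_lt (a := -s - 1 - 1) (by simp; linarith) one_pos
  have hint₀₁ : IntegrableOn (fun u : ℝ ↦ 1 / 2 * (u : ℂ) ^ (-s) - (u : ℂ) ^ (-s - 1)) (Ioi 1) :=
    (hint₀.const_mul _).sub hint₁
  refine hasMellin_of_eq_zero_of_setIntegral_Ioi (g := fun u ↦ 1 / 2 * (u : ℂ) ^ (-s) -
      (u : ℂ) ^ (-s - 1) + 1 / 2 * (u : ℂ) ^ (-s - 1 - 1)) zero_le_one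
    (fun u hu ↦ by simp [hu]) (fun u hu ↦ ?_) (hint₀₁.add (hint₂.const_mul _)) ?_
  · have hu0 : (u : ℂ) ≠ 0 := ofReal_ne_zero.2 (zero_lt_one.trans hu).ne'
    rw [max_eq_left (sub_nonneg.2 (le_of_lt hu)), smul_eq_mul, cpow_sub (-s - 1) 1 hu0,
      cpow_sub (-s) 1 hu0, cpow_one]
    push_cast
    field_simp
    ring
  · rw [integral_add hint₀₁ (hint₂.const_mul _), integral_sub (hint₀.const_mul _) hint₁,
      integral_const_mul, integral_const_mul, integral_Ioi_cpow_of_lt (by simp; linarith) one_pos,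
      integral_Ioi_cpow_of_lt (by simp; linarith) one_pos,
      integral_Ioi_cpow_of_lt (by simp; linarith) one_pos, sub_add_cancel, sub_add_cancel,
      neg_add_eq_sub, ← neg_sub s 1, ← neg_add']
    simp only [ofReal_one, one_cpow]
    field_simp
    ring

lemma integral_norm_cpow_smul_max_sub {c : ℝ} (hc : 0 < c) {s : ℂ} (hs : 0 < s.re) :
    ∫ u in Ioi (0 : ℝ), ‖(u : ℂ) ^ (-s - 1 - 1) • ((max (u - c) 0 : ℝ) : ℂ)‖ =
      ‖(c : ℂ) ^ (-s)‖ / (s.re * (s.re + 1)) := by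
  have hreal := (hasMellin_max_sub hc (s := (s.re : ℂ)) (by simpa using hs)).2
  have hcast : ∀ u ∈ Ioi (0 : ℝ), (u : ℂ) ^ (-(s.re : ℂ) - 1 - 1) • ((max (u - c) 0 : ℝ) : ℂ) =
      (‖(u : ℂ) ^ (-s - 1 - 1) • ((max (u - c) 0 : ℝ) : ℂ)‖ : ℝ) := by
    intro u hu
    rw [norm_smul, norm_real, Real.norm_of_nonneg (le_max_right _ _),
      norm_cpow_eq_rpow_re_of_pos hu, ofReal_mul, ofReal_cpow (le_of_lt hu)]
    simp
  rw [mellin, setIntegral_congr_fun measurableSet_Ioi hcast, integral_complex_ofReal] at hreal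
  apply ofReal_injective
  rw [hreal, norm_cpow_eq_rpow_re_of_pos hc, ofReal_div, ofReal_cpow hc.le]
  simp

section
variable {E : Type*} [NormedAddCommGroup E] [NormedSpace ℝ E] {a : ℕ → E} {u : ℝ}

/-- The first Riesz mean `∑_{n ≤ u} (u - n) a n` of a sequence `a`. -/
noncomputable def rieszMean (a : ℕ → E) (u : ℝ) : E :=
  ∑' n : ℕ, max (u - n) 0 • a n

lemma rieszMean_eq_sum {M : ℕ} (h : u ≤ M) :
    rieszMean a u = ∑ n ∈ Finset.range M, max (u - n) 0 • a n := by
  refine tsum_eq_sum fun n hn ↦ ?_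
  have hMn : (M : ℝ) ≤ n := Nat.cast_le.2 (by simpa using hn)
  rw [max_eq_right (by linarith), zero_smul]

lemma rieszMean_eq_sum_Icc (a : ℕ → E) (u : ℝ) :
    rieszMean a u = ∑ n ∈ Finset.Icc 0 ⌊u⌋₊, max (u - n) 0 • a n := by
  rw [rieszMean_eq_sum (M := ⌊u⌋₊ + 1) (mod_cast (Nat.lt_floor_add_one u).le),
    Finset.range_eq_Ico]
  rfl

lemma continuous_rieszMean (a : ℕ → E) : Continuous (rieszMean a) := by
  refine continuous_iff_continuousAt.2 fun u ↦ ?_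
  obtain ⟨M, hM⟩ := exists_nat_gt u
  have hsum : (fun v : ℝ ↦ ∑ n ∈ Finset.range M, max (v - n) 0 • a n) =ᶠ[𝓝 u] rieszMean a := by
    filter_upwards [gt_mem_nhds hM] with v hv
    rw [rieszMean_eq_sum (le_of_lt hv)]
  exact ContinuousAt.congr (by fun_prop) hsum

lemma rieszMean_eq_zero (ha : a 0 = 0) (hu : u ≤ 1) : rieszMean a u = 0 := by
  rw [rieszMean_eq_sum (M := 1) (by simpa using hu)]
  simp [ha]

lemma norm_rieszMean_le (hu : 0 ≤ u) :
    ‖rieszMean a u‖ ≤ u * ∑ n ∈ Finset.Icc 0 ⌊u⌋₊, ‖a n‖ := by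
  rw [rieszMean_eq_sum_Icc, Finset.mul_sum]
  refine norm_sum_le_of_le _ fun n _ ↦ ?_
  rw [norm_smul, Real.norm_of_nonneg (le_max_right _ _)]
  gcongr
  exact max_le (sub_le_self u n.cast_nonneg) hu

end

lemma mellin_rieszMean {a : ℕ → ℂ} {s S : ℂ} (ha : a 0 = 0) (hs : 0 < s.re)
    (hS : HasSum (fun n : ℕ ↦ a n * (n : ℂ) ^ (-s)) S) :
    mellin (rieszMean a) (-s - 1) = S / (s * (s + 1)) := by
  have hcomm : ∀ (n : ℕ) (u : ℝ), (u : ℂ) ^ (-s - 1 - 1) • (max (u - n) 0 • a n) =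
      a n * ((u : ℂ) ^ (-s - 1 - 1) • ((max (u - n) 0 : ℝ) : ℂ)) := fun n u ↦ by
    rw [real_smul, mul_comm, mul_smul_comm]
  have hpos : ∀ n : ℕ, n ≠ 0 → (0 : ℝ) < n := fun n hn ↦ Nat.cast_pos.2 (Nat.pos_of_ne_zero hn)
  have hint : ∀ n : ℕ, IntegrableOn
      (fun u : ℝ ↦ (u : ℂ) ^ (-s - 1 - 1) • (max (u - n) 0 • a n)) (Ioi 0) := by
    intro n
    rcases eq_or_ne n 0 with rfl | hn
    · simp [ha]
    · simp_rw [hcomm]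
      exact (hasMellin_max_sub (hpos n hn) hs).1.const_mul _
  have hval : ∀ n : ℕ, ∫ u in Ioi (0 : ℝ), (u : ℂ) ^ (-s - 1 - 1) •
      (max (u - n) 0 • a n) = a n * (n : ℂ) ^ (-s) / (s * (s + 1)) := by
    intro n
    rcases eq_or_ne n 0 with rfl | hn
    · simp [ha]
    · have h := (hasMellin_max_sub (hpos n hn) hs).2
      simp_rw [mellin] at h
      simp_rw [hcomm]
      rw [integral_const_mul, h, ofReal_natCast, mul_div_assoc]
  have hnorm : ∀ n : ℕ, ∫ u in Ioi (0 : ℝ), ‖(u : ℂ) ^ (-s - 1 - 1) •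
      (max (u - n) 0 • a n)‖ = ‖a n * (n : ℂ) ^ (-s)‖ / (s.re * (s.re + 1)) := by
    intro n
    rcases eq_or_ne n 0 with rfl | hn
    · simp [ha]
    · simp_rw [hcomm, norm_mul (a n)]
      rw [integral_const_mul, integral_norm_cpow_smul_max_sub (hpos n hn) hs, ofReal_natCast,
        mul_div_assoc]
  have hswap := hasSum_integral_of_summable_integral_norm hint (by
    simp_rw [hnorm]
    exact hS.summable.norm.div_const _)
  simp_rw [hval] at hswap
  rw [← hswap.unique (hS.div_const _), mellin]
  simp_rw [rieszMean, tsum_const_smul'']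

lemma norm_le_of_norm_mellin_le {f : ℝ → ℂ} {g : ℝ → ℝ} {σ x : ℝ} (hx : 0 < x)
    (hf : MellinConvergent f σ) (hfx : ContinuousAt f x)
    (hmeas : AEStronglyMeasurable fun y : ℝ ↦ mellin f (σ + y * I)) (hg : Integrable g)
    (hfg : ∀ y : ℝ, ‖mellin f (σ + y * I)‖ ≤ g y) : ‖f x‖ ≤ (∫ y, g y) * x ^ (-σ) := by
  have hpi : ‖((1 / (2 * Real.pi) : ℝ) : ℂ)‖ ≤ 1 := by
    rw [norm_real, Real.norm_of_nonneg (by positivity), div_le_one (by positivity)]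
    linarith [Real.pi_gt_three]
  have hint : ‖∫ y : ℝ, (x : ℂ) ^ (-(σ + y * I)) • mellin f (σ + y * I)‖ ≤
      ∫ y, x ^ (-σ) * g y := by
    refine norm_integral_le_of_norm_le (hg.const_mul _) (ae_of_all _ fun y ↦ ?_)
    rw [norm_smul, norm_cpow_eq_rpow_re_of_pos hx]
    simpa using mul_le_mul_of_nonneg_left (hfg y) (Real.rpow_nonneg hx.le (-σ))
  rw [← mellinInv_mellin_eq σ f hx hf (hg.mono' hmeas (ae_of_all _ hfg)) hfx, mellinInv,
    norm_smul, mul_comm _ (x ^ (-σ)), ← integral_const_mul]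
  refine (mul_le_mul ?_ hint (norm_nonneg _) zero_le_one).trans_eq (one_mul _)
  simpa using hpi

end RieszMean

section RieszError

open Complex MeasureTheory DirichletCharacter Set ArithmeticFunction Asymptotics
open scoped Topology

variable {N : ℕ} {χ : DirichletCharacter ℂ N} {s : ℂ} {u : ℝ}

variable (χ) in
/-- The von Mangoldt function twisted by `1 + χ`, the Dirichlet coefficients of the negative
logarithmic derivative of `L(s, 1) * L(s, χ)`. -/
noncomputable def charVonMangoldt (n : ℕ) : ℂ :=
  ((1 : DirichletCharacter ℂ N) n + χ n) * (Λ n : ℝ)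

lemma charVonMangoldt_zero : charVonMangoldt χ 0 = 0 := by
  simp [charVonMangoldt]

lemma norm_charVonMangoldt_le (n : ℕ) : ‖charVonMangoldt χ n‖ ≤ 2 * Λ n := by
  rw [charVonMangoldt, norm_mul, norm_real, Real.norm_of_nonneg vonMangoldt_nonneg]
  refine mul_le_mul_of_nonneg_right ((norm_add_le _ _).trans ?_) vonMangoldt_nonneg
  linarith [(1 : DirichletCharacter ℂ N).norm_le_one n, χ.norm_le_one n]

variable (χ) in
/-- The first Riesz mean of `charVonMangoldt χ` minus its main term. The main term is supported on
`u ≥ 1` so that its Mellin transform also converges at `0`. -/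
noncomputable def rieszError (u : ℝ) : ℂ :=
  rieszMean (charVonMangoldt χ) u - ((max (u - 1) 0 ^ 2 / 2 : ℝ) : ℂ)

lemma continuous_rieszError : Continuous (rieszError χ) := by
  have := continuous_rieszMean (charVonMangoldt χ)
  unfold rieszError
  fun_prop

lemma rieszError_eq_zero (hu : u ≤ 1) : rieszError χ u = 0 := by
  rw [rieszError, rieszMean_eq_zero charVonMangoldt_zero hu, max_eq_right (by linarith)]
  simp

lemma norm_rieszMean_charVonMangoldt_le (hu : 0 ≤ u) :
    ‖rieszMean (charVonMangoldt χ) u‖ ≤ 2 * (Real.log 4 + 4) * u ^ 2 := by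
  have hpsi := Chebyshev.psi_le_const_mul_self hu
  rw [Chebyshev.psi_eq_sum_Icc] at hpsi
  calc _ ≤ u * ∑ n ∈ Finset.Icc 0 ⌊u⌋₊, ‖charVonMangoldt χ n‖ := norm_rieszMean_le hu
    _ ≤ u * ∑ n ∈ Finset.Icc 0 ⌊u⌋₊, 2 * Λ n := by
        gcongr with n
        exact norm_charVonMangoldt_le n
    _ = 2 * u * ∑ n ∈ Finset.Icc 0 ⌊u⌋₊, Λ n := by rw [← Finset.mul_sum]; ring
    _ ≤ 2 * u * ((Real.log 4 + 4) * u) := by gcongr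
    _ = _ := by ring

lemma isBigO_rieszMean_charVonMangoldt :
    rieszMean (charVonMangoldt χ) =O[atTop] fun u : ℝ ↦ u ^ (-(-2) : ℝ) := by
  refine .of_bound (2 * (Real.log 4 + 4)) ?_
  filter_upwards [eventually_ge_atTop 0] with u hu
  rw [neg_neg, Real.norm_of_nonneg (by positivity), Real.rpow_ofNat]
  exact norm_rieszMean_charVonMangoldt_le hu

lemma isBigO_sq_max_sub_one :
    (fun u : ℝ ↦ ((max (u - 1) 0 ^ 2 / 2 : ℝ) : ℂ)) =O[atTop] fun u : ℝ ↦ u ^ (-(-2) : ℝ) := by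
  refine .of_bound 1 ?_
  filter_upwards [eventually_ge_atTop 1] with u hu
  rw [norm_real, Real.norm_of_nonneg (by positivity), Real.norm_of_nonneg (by positivity), neg_neg,
    max_eq_left (by linarith), Real.rpow_ofNat]
  nlinarith

lemma isBigO_rieszError : rieszError χ =O[atTop] fun u : ℝ ↦ u ^ (-(-2) : ℝ) :=
  isBigO_rieszMean_charVonMangoldt.sub isBigO_sq_max_sub_one

lemma isBigO_nhdsGT_zero_of_eq_zero {f : ℝ → ℂ} (hf : ∀ u ≤ 1, f u = 0) (g : ℝ → ℝ) :
    f =O[𝓝[>] 0] g := by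
  refine .of_bound 0 ?_
  filter_upwards [Ioo_mem_nhdsGT (zero_lt_one' ℝ)] with u hu
  simp [hf u hu.2.le]

variable [NeZero N]

lemma hasSum_charVonMangoldt (hs : 1 < s.re) :
    HasSum (fun n : ℕ ↦ charVonMangoldt χ n * (n : ℂ) ^ (-s))
      (regularNegLogDeriv χ s + 1 / (s - 1)) := by
  have hs₁ : s ≠ 1 := by rintro rfl; simp at hs
  convert (LSeriesSummable_twist_vonMangoldt (1 : DirichletCharacter ℂ N) hs).hasSum.add
    (LSeriesSummable_twist_vonMangoldt χ hs).hasSum using 1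
  · ext n
    rcases eq_or_ne n 0 with rfl | hn
    · simp [charVonMangoldt]
    · rw [LSeries.term_of_ne_zero hn, LSeries.term_of_ne_zero hn, cpow_neg]
      simp only [charVonMangoldt, Pi.mul_apply]
      ring
  · have htriv := (logDeriv_LFunctionTrivChar₁ (N := N) hs.le hs₁).eq_of_nhds
    change _ = LSeries _ s + LSeries _ s
    rw [LSeries_twist_vonMangoldt_eq _ hs, LSeries_twist_vonMangoldt_eq _ hs,
      ← deriv_LFunction_eq_deriv_LSeries _ hs, ← deriv_LFunction_eq_deriv_LSeries _ hs,
      ← LFunction_eq_LSeries _ hs, ← LFunction_eq_LSeries _ hs, regularNegLogDeriv, htriv,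
      logDeriv_apply, logDeriv_apply, LFunctionTrivChar]
    ring

lemma mellin_rieszError (hs : 1 < s.re) :
    mellin (rieszError χ) (-s - 1) = regularNegLogDeriv χ s / (s * (s + 1)) := by
  have hconv : MellinConvergent (rieszMean (charVonMangoldt χ)) (-s - 1) :=
    mellinConvergent_of_isBigO_rpow (a := -2) (b := (-s - 1).re - 1)
      ((continuous_rieszMean _).continuousOn.locallyIntegrableOn measurableSet_Ioi)
      isBigO_rieszMean_charVonMangoldt (by simp; linarith)
      (isBigO_nhdsGT_zero_of_eq_zero (fun u hu ↦ rieszMean_eq_zero charVonMangoldt_zero hu) _)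
      (by linarith)
  have hsq := hasMellin_sq_max_sub_one hs
  refine (hasMellin_sub hconv hsq.1).2.trans ?_
  rw [hsq.2, mellin_rieszMean charVonMangoldt_zero (by linarith) (hasSum_charVonMangoldt hs),
    ← sub_div, add_sub_cancel_right]

lemma mul_add_one_ne_zero_of_one_le_re (hs : 1 ≤ s.re) : s * (s + 1) ≠ 0 := by
  refine mul_ne_zero (fun h ↦ ?_) fun h ↦ ?_
  · norm_num [h] at hs
  · have := congrArg re h
    simp at this
    linarith

lemma analyticAt_regularNegLogDeriv_div (hχ : χ ≠ 1) (hs : 1 ≤ s.re) :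
    AnalyticAt ℂ (fun z ↦ regularNegLogDeriv χ z / (z * (z + 1))) s :=
  (analyticAt_regularNegLogDeriv hχ hs).fun_div (by fun_prop) (mul_add_one_ne_zero_of_one_le_re hs)

lemma hasMellin_log_smul_rieszError (hs : 1 < s.re) :
    HasMellin (fun t ↦ Real.log t • rieszError χ t) (-s - 1)
      (-deriv (fun z ↦ regularNegLogDeriv χ z / (z * (z + 1))) s) := by
  have hre : (-s - 1).re < -2 := by simp; linarith
  obtain ⟨hconv, hderiv⟩ := mellin_hasDerivAt_of_isBigO_rpow (a := -2) (b := (-s - 1).re - 1)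
    (continuous_rieszError (χ := χ).continuousOn.locallyIntegrableOn measurableSet_Ioi)
    isBigO_rieszError (by linarith)
    (isBigO_nhdsGT_zero_of_eq_zero (fun u hu ↦ rieszError_eq_zero hu) _) (by linarith)
  refine ⟨hconv, ?_⟩
  have hreflect : HasDerivAt (fun z : ℂ ↦ -z - 1) (-1) s := by
    simpa using (hasDerivAt_id s).neg.sub_const 1
  have heq : (fun z ↦ regularNegLogDeriv χ z / (z * (z + 1))) =ᶠ[𝓝 s]
      fun z ↦ mellin (rieszError χ) (-z - 1) := by
    filter_upwards [(isOpen_lt continuous_const continuous_re).mem_nhds hs] with z hz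
    exact (mellin_rieszError hz).symm
  rw [((hderiv.comp s hreflect).congr_of_eventuallyEq heq).deriv]
  ring

lemma deriv_div_mul_add_one {F : ℂ → ℂ} (hF : DifferentiableAt ℂ F s) (hs : s * (s + 1) ≠ 0) :
    deriv (fun z ↦ F z / (z * (z + 1))) s =
      (deriv F s - F s / s - F s / (s + 1)) / (s * (s + 1)) := by
  obtain ⟨hs0, hs1⟩ := mul_ne_zero_iff.1 hs
  have hden : HasDerivAt (fun z : ℂ ↦ z * (z + 1)) (1 * (s + 1) + s * 1) s :=
    (hasDerivAt_id s).mul ((hasDerivAt_id s).add_const 1)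
  rw [(hF.hasDerivAt.fun_div hden hs).deriv]
  field_simp
  ring

lemma exists_norm_deriv_regularNegLogDeriv_div_le (hχ : χ ≠ 1) :
    ∃ C : ℝ, 0 < C ∧ ∀ s : ℂ, s.re ∈ Icc 1 2 →
      ‖deriv (fun z ↦ regularNegLogDeriv χ z / (z * (z + 1))) s‖ ≤
        C * (1 + ‖s.im‖) ^ (-(3 / 2) : ℝ) := by
  obtain ⟨C, hC, hF⟩ := exists_norm_regularNegLogDeriv_le hχ (ε := 1 / 2) one_half_pos (by norm_num)
  refine ⟨12 * C, by positivity, fun s hs ↦ ?_⟩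
  obtain ⟨hFs, hFs'⟩ := hF s hs
  rw [deriv_div_mul_add_one (analyticAt_regularNegLogDeriv hχ hs.1).differentiableAt
    (mul_add_one_ne_zero_of_one_le_re hs.1), norm_div, norm_mul, Real.norm_eq_abs]
  have hs1 : 1 ≤ ‖s‖ := hs.1.trans (re_le_norm s)
  have hs2 : 1 ≤ ‖s + 1‖ := by
    have := re_le_norm (s + 1)
    simp at this
    linarith [hs.1]
  have hnorm : (1 + |s.im|) / 2 ≤ ‖s‖ := by linarith [abs_im_le_norm s]
  have hnorm' : (1 + |s.im|) / 2 ≤ ‖s + 1‖ := by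
    have := abs_im_le_norm (s + 1)
    simp at this
    linarith
  set T := 1 + |s.im|
  have hT : 0 < T := by positivity
  have hnum : ‖deriv (regularNegLogDeriv χ) s - regularNegLogDeriv χ s / s -
      regularNegLogDeriv χ s / (s + 1)‖ ≤ 3 * C * T ^ (1 / 2 : ℝ) := by
    have hdiv : ∀ z : ℂ, 1 ≤ ‖z‖ → ‖regularNegLogDeriv χ s / z‖ ≤ C * T ^ (1 / 2 : ℝ) :=
      fun z hz ↦ (norm_div _ z).trans_le ((div_le_self (norm_nonneg _) hz).trans hFs)
    refine (norm_sub_le _ _).trans ?_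
    linarith [norm_sub_le (deriv (regularNegLogDeriv χ) s) (regularNegLogDeriv χ s / s),
      hdiv s hs1, hdiv (s + 1) hs2]
  have hpow : T ^ (-(3 / 2) : ℝ) = T ^ (1 / 2 : ℝ) / T ^ 2 := by
    rw [← Real.rpow_natCast, ← Real.rpow_sub hT]
    norm_num
  calc _ ≤ 3 * C * T ^ (1 / 2 : ℝ) / (T / 2 * (T / 2)) := by gcongr
    _ = _ := by rw [hpow]; field_simp; norm_num

lemma exists_log_mul_norm_rieszError_le_rpow (hχ : χ ≠ 1) :
    ∃ C : ℝ, 0 ≤ C ∧ ∀ σ ∈ Ioc (2 : ℝ) 3, ∀ x : ℝ, 1 ≤ x →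
      Real.log x * ‖rieszError χ x‖ ≤ C * x ^ σ := by
  obtain ⟨C, hC, hbound⟩ := exists_norm_deriv_regularNegLogDeriv_div_le hχ
  have hint : Integrable fun y : ℝ ↦ C * (1 + ‖y‖) ^ (-(3 / 2) : ℝ) :=
    (integrable_one_add_norm (by simp; norm_num)).const_mul _
  refine ⟨∫ y : ℝ, C * (1 + ‖y‖) ^ (-(3 / 2) : ℝ), integral_nonneg fun y ↦ by positivity,
    fun σ hσ x hx ↦ ?_⟩
  have hx0 : 0 < x := by linarith
  let ζ : ℝ → ℂ := fun y ↦ (σ - 1 : ℝ) - y * I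
  have hζ : ∀ y, (((-σ : ℝ) : ℂ) + y * I) = -ζ y - 1 := fun y ↦ by simp [ζ]; ring
  have hre : ∀ y, 1 < (ζ y).re := fun y ↦ by simp [ζ]; linarith [hσ.1]
  have hmellin := fun y ↦ hasMellin_log_smul_rieszError (χ := χ) (hre y)
  have hzero : ((-σ : ℝ) : ℂ) = -ζ 0 - 1 := by simpa using hζ 0
  have hcont : Continuous fun y ↦
      deriv (fun z ↦ regularNegLogDeriv χ z / (z * (z + 1))) (ζ y) :=
    continuous_iff_continuousAt.2 fun y ↦ ContinuousAt.comp
      (analyticAt_regularNegLogDeriv_div hχ (hre y).le).deriv.continuousAt (by fun_prop)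
  have key := norm_le_of_norm_mellin_le (f := fun t ↦ Real.log t • rieszError χ t) (σ := -σ) hx0
    (hzero ▸ (hmellin 0).1)
    ((Real.continuousAt_log hx0.ne').smul continuous_rieszError.continuousAt)
    (by simp_rw [hζ, (hmellin _).2]; exact hcont.neg.aestronglyMeasurable) hint fun y ↦ by
      rw [hζ, (hmellin y).2, norm_neg]
      simpa [ζ] using hbound (ζ y) ⟨(hre y).le, by simp [ζ]; linarith [hσ.2]⟩
  rwa [norm_smul, Real.norm_of_nonneg (Real.log_nonneg hx), neg_neg] at key

lemma exists_log_mul_norm_rieszError_le (hχ : χ ≠ 1) :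
    ∃ C : ℝ, 0 ≤ C ∧ ∀ x : ℝ, 1 ≤ x → Real.log x * ‖rieszError χ x‖ ≤ C * x ^ 2 := by
  obtain ⟨C, hC, hbound⟩ := exists_log_mul_norm_rieszError_le_rpow hχ
  refine ⟨C, hC, fun x hx ↦ ?_⟩
  have hlim : Tendsto (fun σ : ℝ ↦ C * x ^ σ) (𝓝[>] 2) (𝓝 (C * x ^ (2 : ℝ))) :=
    (((Real.continuous_const_rpow (by linarith)).tendsto 2).const_mul C).mono_left
      nhdsWithin_le_nhds
  rw [← Real.rpow_ofNat]
  refine ge_of_tendsto hlim ?_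
  filter_upwards [Ioc_mem_nhdsGT (show (2 : ℝ) < 3 by norm_num)] with σ hσ
  exact hbound σ hσ x hx

end RieszError

section LogMean

open ArithmeticFunction hiding log
open Asymptotics Real

/-- The first Riesz mean `∑_{q ∈ Q, q ≤ u} (u - q) log q` of the logarithm over a set `Q`. -/
noncomputable def logMean (Q : Set ℕ) (u : ℝ) : ℝ :=
  rieszMean (Q.indicator fun q ↦ log q) u

variable {N : ℕ} {χ : DirichletCharacter ℂ N} {Q : Set ℕ} {u : ℝ}

open Classical in
lemma re_charVonMangoldt_of_prime (hχ : ∀ p : ℕ, p.Prime → ¬p ∣ N → χ p = if p ∈ Q then 1 else -1)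
    {p : ℕ} (hp : p.Prime) (hpN : ¬p ∣ N) :
    (charVonMangoldt χ p).re = 2 * Q.indicator (fun q ↦ log q) p := by
  have hunit : IsUnit (p : ZMod N) :=
    (ZMod.isUnit_iff_coprime p N).2 (hp.coprime_iff_not_dvd.2 hpN)
  rw [charVonMangoldt, MulChar.one_apply hunit, hχ p hp hpN, vonMangoldt_apply_prime hp,
    Complex.re_mul_ofReal, Set.indicator_apply]
  split_ifs <;> norm_num

lemma charVonMangoldt_eq_zero_of_prime_dvd {p : ℕ} (hp : p.Prime) (hpN : p ∣ N) :
    charVonMangoldt χ p = 0 := by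
  have hunit : ¬IsUnit (p : ZMod N) := fun h ↦
    hp.one_lt.ne' (((ZMod.isUnit_iff_coprime p N).1 h).eq_one_of_dvd hpN)
  rw [charVonMangoldt, MulChar.map_nonunit _ hunit, MulChar.map_nonunit _ hunit, add_zero, zero_mul]

open Classical in
lemma abs_re_charVonMangoldt_sub_le [NeZero N] (hQ : ∀ q ∈ Q, q.Prime)
    (hχ : ∀ p : ℕ, p.Prime → ¬p ∣ N → χ p = if p ∈ Q then 1 else -1) (n : ℕ) :
    |(charVonMangoldt χ n).re - 2 * Q.indicator (fun q ↦ log q) n| ≤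
      2 * (Λ n - if n.Prime then log n else 0) + 2 * if n ≤ N then log N else 0 := by
  have : 0 ≤ if n ≤ N then log N else 0 := by
    split_ifs
    exacts [log_natCast_nonneg N, le_rfl]
  by_cases hn : n.Prime
  · rw [if_pos hn, vonMangoldt_apply_prime hn, sub_self, mul_zero, zero_add]
    by_cases hnN : n ∣ N
    · have hle : n ≤ N := Nat.le_of_dvd (NeZero.pos N) hnN
      have hlog : Q.indicator (fun q ↦ log q) n ≤ log N :=
        (Set.indicator_le_self' (fun _ _ ↦ log_natCast_nonneg _) n).trans
          (log_le_log (mod_cast hn.pos) (mod_cast hle))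
      have hnonneg : 0 ≤ Q.indicator (fun q ↦ log q) n :=
        Set.indicator_nonneg (fun _ _ ↦ log_natCast_nonneg _) n
      rw [charVonMangoldt_eq_zero_of_prime_dvd hn hnN, Complex.zero_re, zero_sub, abs_neg,
        abs_of_nonneg (by positivity), if_pos hle]
      gcongr
    · rw [re_charVonMangoldt_of_prime hχ hn hnN, sub_self, abs_zero]
      positivity
  · rw [Set.indicator_of_notMem (fun h ↦ hn (hQ n h)), if_neg hn, mul_zero, sub_zero, sub_zero]
    exact (Complex.abs_re_le_norm _).trans
      ((norm_charVonMangoldt_le n).trans (le_add_of_nonneg_right (by positivity)))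

lemma re_rieszMean (a : ℕ → ℂ) (u : ℝ) :
    (rieszMean a u).re = rieszMean (fun n ↦ (a n).re) u := by
  simp [rieszMean_eq_sum_Icc, Complex.re_sum]

open Classical in
lemma abs_re_rieszMean_sub_logMean_le [NeZero N] (hQ : ∀ q ∈ Q, q.Prime)
    (hχ : ∀ p : ℕ, p.Prime → ¬p ∣ N → χ p = if p ∈ Q then 1 else -1) (hu : 0 ≤ u) :
    |(rieszMean (charVonMangoldt χ) u).re - 2 * logMean Q u| ≤
      2 * u * (Chebyshev.psi u - Chebyshev.theta u + (N + 1) * log N) := by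
  have hsub : (rieszMean (charVonMangoldt χ) u).re - 2 * logMean Q u =
      rieszMean (fun n ↦ (charVonMangoldt χ n).re - 2 * Q.indicator (fun q ↦ log q) n) u := by
    rw [re_rieszMean, logMean]
    simp only [rieszMean_eq_sum_Icc, smul_eq_mul, Finset.mul_sum, ← Finset.sum_sub_distrib]
    exact Finset.sum_congr rfl fun n _ ↦ by ring
  have hsmall : ∑ n ∈ Finset.Icc 0 ⌊u⌋₊, (if n ≤ N then log N else 0) ≤ (N + 1) * log N := by
    have hcard : {n ∈ Finset.Icc 0 ⌊u⌋₊ | n ≤ N}.card ≤ (Finset.range (N + 1)).card :=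
      Finset.card_le_card fun n hn ↦ by simp at hn ⊢; omega
    rw [← Finset.sum_filter, Finset.sum_const, nsmul_eq_mul]
    gcongr
    simpa using (Nat.cast_le (α := ℝ)).2 hcard
  calc _ ≤ u * ∑ n ∈ Finset.Icc 0 ⌊u⌋₊, (2 * (Λ n - if n.Prime then log n else 0) +
          2 * if n ≤ N then log N else 0) := by
        rw [hsub, ← norm_eq_abs]
        refine (norm_rieszMean_le hu).trans ?_
        gcongr with n
        exact abs_re_charVonMangoldt_sub_le hQ hχ n
    _ = 2 * u * (Chebyshev.psi u - Chebyshev.theta u +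
          ∑ n ∈ Finset.Icc 0 ⌊u⌋₊, if n ≤ N then log N else 0) := by
        rw [Chebyshev.psi_eq_sum_Icc, Chebyshev.theta_eq_sum_Icc, Finset.sum_filter,
          ← Finset.sum_sub_distrib, Finset.sum_add_distrib, ← Finset.mul_sum, ← Finset.mul_sum]
        ring
    _ ≤ _ := by gcongr

lemma isBigO_mul_sqrt : (fun u : ℝ ↦ u * √u) =O[atTop] fun u ↦ u ^ 2 / log u := by
  refine .of_bound 2 ?_
  filter_upwards [eventually_gt_atTop 1] with u hu
  have hlog : log u ≤ 2 * √u := by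
    have := log_le_sub_one_of_pos (sqrt_pos.2 (zero_lt_one.trans hu))
    rw [log_sqrt (by linarith)] at this
    linarith
  have hlog0 := log_pos hu
  rw [norm_of_nonneg (by positivity), norm_of_nonneg (by positivity), mul_div_assoc',
    le_div_iff₀ hlog0]
  calc u * √u * log u ≤ u * √u * (2 * √u) := by gcongr
    _ = 2 * u * √u ^ 2 := by ring
    _ = 2 * u ^ 2 := by rw [sq_sqrt (by linarith)]; ring

lemma isBigO_id_mul_sqrt : (fun u : ℝ ↦ u) =O[atTop] fun u ↦ u * √u := by
  refine .of_bound 1 ?_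
  filter_upwards [eventually_ge_atTop 1] with u hu
  rw [norm_of_nonneg (by positivity), norm_of_nonneg (by positivity), one_mul]
  exact le_mul_of_one_le_right (by positivity) (one_le_sqrt.2 hu)

lemma isBigO_rieszError_div_log (hχ : χ ≠ 1) [NeZero N] :
    rieszError χ =O[atTop] fun u ↦ u ^ 2 / log u := by
  obtain ⟨C, -, hC⟩ := exists_log_mul_norm_rieszError_le hχ
  refine .of_bound C ?_
  filter_upwards [eventually_gt_atTop 1] with u hu
  have hlog := log_pos hu
  rw [norm_of_nonneg (by positivity : 0 ≤ u ^ 2 / log u), mul_div_assoc', le_div_iff₀ hlog,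
    mul_comm]
  exact hC u hu.le

open Classical in
lemma isBigO_re_rieszMean_sub_logMean [NeZero N] (hQ : ∀ q ∈ Q, q.Prime)
    (hχ : ∀ p : ℕ, p.Prime → ¬p ∣ N → χ p = if p ∈ Q then 1 else -1) :
    (fun u ↦ (rieszMean (charVonMangoldt χ) u).re - 2 * logMean Q u) =O[atTop]
      fun u ↦ u * √u := by
  obtain ⟨C, hC⟩ := Chebyshev.psi_sub_theta_le_mul_sqrt
  refine .of_bound (2 * (C + (N + 1) * log N)) ?_
  filter_upwards [eventually_ge_atTop 1] with u hu
  have hlogN : (N + 1) * log N ≤ (N + 1) * log N * √u :=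
    le_mul_of_one_le_right (mul_nonneg (by positivity) (log_natCast_nonneg N)) (one_le_sqrt.2 hu)
  rw [norm_eq_abs, norm_of_nonneg (by positivity)]
  calc _ ≤ 2 * u * (Chebyshev.psi u - Chebyshev.theta u + (N + 1) * log N) :=
        abs_re_rieszMean_sub_logMean_le hQ hχ (by linarith)
    _ ≤ 2 * u * (C * √u + (N + 1) * log N * √u) := by gcongr; exact hC u
    _ = _ := by ring

open Classical in
theorem isBigO_logMean_sub [NeZero N] (hχ1 : χ ≠ 1) (hQ : ∀ q ∈ Q, q.Prime)
    (hχ : ∀ p : ℕ, p.Prime → ¬p ∣ N → χ p = if p ∈ Q then 1 else -1) :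
    (fun u ↦ logMean Q u - u ^ 2 / 4) =O[atTop] fun u ↦ u ^ 2 / log u := by
  have herror : (fun u ↦ (rieszError χ u).re) =O[atTop] fun u ↦ u ^ 2 / log u :=
    (IsBigO.of_norm_le fun u ↦ Complex.abs_re_le_norm _).trans
      (isBigO_rieszError_div_log hχ1).norm_left
  have hlinear : (fun u : ℝ ↦ u - 1 / 2) =O[atTop] fun u ↦ u ^ 2 / log u :=
    ((isBigO_refl _ _).sub (isLittleO_const_id_atTop _).isBigO).trans
      (isBigO_id_mul_sqrt.trans isBigO_mul_sqrt)
  have hdiff := (isBigO_re_rieszMean_sub_logMean hQ hχ).trans isBigO_mul_sqrt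
  refine (((herror.sub hdiff).sub hlinear).const_mul_left (1 / 2)).congr' ?_ .rfl
  filter_upwards [eventually_ge_atTop 1] with u hu
  rw [rieszError, max_eq_left (by linarith), Complex.sub_re, Complex.ofReal_re]
  ring

end LogMean

section EventuallyLog

open Real

lemma eventually_le_log (c : ℝ) : ∀ᶠ u : ℝ in atTop, c ≤ log u :=
  tendsto_log_atTop.eventually_ge_atTop c

lemma eventually_le_log_log (c : ℝ) : ∀ᶠ u : ℝ in atTop, c ≤ log (log u) :=
  tendsto_log_atTop.eventually (eventually_le_log c)

lemma eventually_log_pow_le_mul (n : ℕ) {c : ℝ} (hc : 0 < c) :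
    ∀ᶠ u : ℝ in atTop, log u ^ n ≤ c * u := by
  filter_upwards [(isLittleO_pow_log_id_atTop (n := n)).bound hc, eventually_ge_atTop 1]
    with u hu hu1
  rwa [id, norm_of_nonneg (pow_nonneg (log_nonneg hu1) n), norm_of_nonneg (by linarith)] at hu

lemma eventually_log_log_le_mul_log {c : ℝ} (hc : 0 < c) :
    ∀ᶠ u : ℝ in atTop, log (log u) ≤ c * log u := by
  filter_upwards [tendsto_log_atTop.eventually (eventually_log_pow_le_mul 1 hc)] with u hu
  simpa using hu

lemma one_div_sub_le {L t : ℝ} (hL : 0 < L) (ht : 0 ≤ t) (htL : t ≤ L / 2) :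
    1 / (L - t) ≤ 1 / L + 2 * t / L ^ 2 := by
  rw [div_le_iff₀ (by linarith), div_add_div _ _ hL.ne' (by positivity), div_mul_eq_mul_div,
    le_div_iff₀ (by positivity)]
  nlinarith [mul_nonneg (mul_nonneg hL.le ht) (sub_nonneg.2 htL)]

lemma eventually_log_pow_three_le_sqrt : ∀ᶠ X in atTop, log X ^ 3 ≤ √X := by
  filter_upwards [eventually_log_pow_le_mul 6 one_pos] with X hX
  exact le_sqrt_of_sq_le (by linarith [pow_mul (log X) 3 2])

end EventuallyLog

section CountMean

open Asymptotics Real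

/-- The first Riesz mean `∑_{q ∈ Q, q ≤ u} (u - q)` of the indicator function of `Q`, that is, the
integral of the counting function of `Q` over `[0, u]`. -/
noncomputable def countMean (Q : Set ℕ) (u : ℝ) : ℝ :=
  rieszMean (Q.indicator 1) u

variable {Q : Set ℕ} {u z : ℝ}

open Classical in
lemma countMean_eq_sum {M : ℕ} (h : u ≤ M) :
    countMean Q u = ∑ q ∈ Finset.range M with q ∈ Q, max (u - q) 0 := by
  simp [countMean, rieszMean_eq_sum h, Set.indicator_apply, Finset.sum_filter]

open Classical in
lemma countMean_eq_sum_Icc (Q : Set ℕ) (u : ℝ) :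
    countMean Q u = ∑ q ∈ Finset.Icc 0 ⌊u⌋₊ with q ∈ Q, max (u - q) 0 := by
  simp [countMean, rieszMean_eq_sum_Icc, Set.indicator_apply, Finset.sum_filter]

open Classical in
lemma logMean_eq_sum_Icc (Q : Set ℕ) (u : ℝ) :
    logMean Q u = ∑ q ∈ Finset.Icc 0 ⌊u⌋₊ with q ∈ Q, max (u - q) 0 * log q := by
  simp [logMean, rieszMean_eq_sum_Icc, Set.indicator_apply, Finset.sum_filter]

lemma countMean_nonneg : 0 ≤ countMean Q u := by
  classical
  rw [countMean_eq_sum_Icc]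
  exact Finset.sum_nonneg fun q _ ↦ le_max_right _ _

lemma countMean_le_sq (hQ : 0 ∉ Q) (hu : 0 ≤ u) : countMean Q u ≤ u ^ 2 := by
  classical
  have hcard : {q ∈ Finset.Icc 0 ⌊u⌋₊ | q ∈ Q}.card ≤ ⌊u⌋₊ := by
    refine (Finset.card_le_card (t := Finset.Icc 1 ⌊u⌋₊) fun q hq ↦ ?_).trans_eq (by simp)
    rw [Finset.mem_filter, Finset.mem_Icc] at hq
    exact Finset.mem_Icc.2 ⟨Nat.one_le_iff_ne_zero.2 fun h ↦ hQ (h ▸ hq.2), hq.1.2⟩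
  calc countMean Q u = ∑ q ∈ Finset.Icc 0 ⌊u⌋₊ with q ∈ Q, max (u - q) 0 :=
        countMean_eq_sum_Icc Q u
    _ ≤ ∑ q ∈ Finset.Icc 0 ⌊u⌋₊ with q ∈ Q, u := by
        gcongr with q
        exact max_le (sub_le_self u q.cast_nonneg) hu
    _ = {q ∈ Finset.Icc 0 ⌊u⌋₊ | q ∈ Q}.card * u := by rw [Finset.sum_const, nsmul_eq_mul]
    _ ≤ u * u := by
        gcongr
        exact ((Nat.cast_le (α := ℝ)).2 hcard).trans (Nat.floor_le hu)
    _ = u ^ 2 := (sq u).symm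

lemma logMean_le (hu : 1 ≤ u) : logMean Q u ≤ countMean Q u * log u := by
  classical
  rw [logMean_eq_sum_Icc, countMean_eq_sum_Icc, Finset.sum_mul]
  refine Finset.sum_le_sum fun q hq ↦ mul_le_mul_of_nonneg_left ?_ (le_max_right _ _)
  rcases Nat.eq_zero_or_pos q with rfl | hq0
  · simpa using log_nonneg hu
  · exact log_le_log (mod_cast hq0)
      ((Nat.le_floor_iff (by linarith)).1 (Finset.mem_Icc.1 (Finset.mem_of_mem_filter q hq)).2)

lemma countMean_le_logMean_div_log_add (hu : 0 ≤ u) (hz : 1 < z) :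
    countMean Q u ≤ logMean Q u / log z + (z + 1) * u := by
  classical
  have hlogz := log_pos hz
  have hterm : ∀ q : ℕ, max (u - q) 0 ≤ max (u - q) 0 * log q / log z +
      if q ≤ ⌊z⌋₊ then u else 0 := by
    intro q
    split_ifs with hqz
    · refine (max_le (sub_le_self u q.cast_nonneg) hu).trans (le_add_of_nonneg_left ?_)
      exact div_nonneg (mul_nonneg (le_max_right _ _) (log_natCast_nonneg q)) hlogz.le
    · rw [add_zero, le_div_iff₀ hlogz]
      refine mul_le_mul_of_nonneg_left (log_le_log (by linarith) ?_) (le_max_right _ _)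
      exact (Nat.lt_of_floor_lt (not_le.1 hqz)).le
  have hcard : {q ∈ {q ∈ Finset.Icc 0 ⌊u⌋₊ | q ∈ Q} | q ≤ ⌊z⌋₊}.card ≤ ⌊z⌋₊ + 1 := by
    refine (Finset.card_le_card (t := Finset.Icc 0 ⌊z⌋₊) fun q hq ↦ ?_).trans_eq (by simp)
    exact Finset.mem_Icc.2 ⟨q.zero_le, (Finset.mem_filter.1 hq).2⟩
  calc countMean Q u = ∑ q ∈ Finset.Icc 0 ⌊u⌋₊ with q ∈ Q, max (u - q) 0 :=
        countMean_eq_sum_Icc Q u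
    _ ≤ ∑ q ∈ Finset.Icc 0 ⌊u⌋₊ with q ∈ Q,
          (max (u - q) 0 * log q / log z + if q ≤ ⌊z⌋₊ then u else 0) :=
        Finset.sum_le_sum fun q _ ↦ hterm q
    _ = logMean Q u / log z + {q ∈ {q ∈ Finset.Icc 0 ⌊u⌋₊ | q ∈ Q} | q ≤ ⌊z⌋₊}.card * u := by
        rw [Finset.sum_add_distrib, ← Finset.sum_div, ← logMean_eq_sum_Icc, ← Finset.sum_filter,
          Finset.sum_const, nsmul_eq_mul]
    _ ≤ logMean Q u / log z + (z + 1) * u := by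
        gcongr
        refine ((Nat.cast_le (α := ℝ)).2 hcard).trans ?_
        push_cast
        gcongr
        exact Nat.floor_le (by linarith)

theorem isBigO_countMean_sub
    (hQ : (fun u ↦ logMean Q u - u ^ 2 / 4) =O[atTop] fun u ↦ u ^ 2 / log u) :
    (fun u ↦ countMean Q u - u ^ 2 / (4 * log u)) =O[atTop]
      fun u ↦ u ^ 2 * log (log u) / log u ^ 2 := by
  obtain ⟨C, hC, hbound⟩ := hQ.exists_pos
  refine .of_bound (2 * C + 3) ?_
  filter_upwards [hbound.bound, eventually_ge_atTop 1, eventually_le_log 1, eventually_le_log_log 1,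
    eventually_log_log_le_mul_log (c := 1 / 4) (by norm_num),
    eventually_log_pow_le_mul 2 one_pos] with u hlogMean hu hL hℓ hℓL hLu
  set L := log u with hLdef
  set ℓ := log L
  set R := u ^ 2 * ℓ / L ^ 2 with hR
  have hL2R : u ^ 2 / L ^ 2 ≤ R := by
    rw [hR]
    gcongr
    exact le_mul_of_one_le_right (by positivity) hℓ
  have huL : u ≤ u ^ 2 / L ^ 2 := by rw [le_div_iff₀ (by positivity)]; nlinarith
  rw [norm_eq_abs, norm_of_nonneg (by positivity), mul_div_assoc', abs_le] at hlogMean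
  rw [norm_eq_abs, norm_of_nonneg (by positivity), abs_le]
  constructor
  · have hlower : (u ^ 2 / 4 - C * u ^ 2 / L) / L ≤ countMean Q u :=
      (div_le_iff₀ (by linarith)).2 ((by linarith : _ ≤ logMean Q u).trans (logMean_le hu))
    have heq : (u ^ 2 / 4 - C * u ^ 2 / L) / L = u ^ 2 / (4 * L) - C * (u ^ 2 / L ^ 2) := by
      field_simp
    nlinarith [mul_le_mul_of_nonneg_left hL2R hC.le]
  · have hlogz : log (u / L ^ 2) = L - 2 * ℓ := by
      rw [log_div (by positivity) (by positivity), log_pow, Nat.cast_ofNat]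
    have hz : 1 < u / L ^ 2 := by
      refine (log_pos_iff (by positivity)).1 ?_
      rw [hlogz]
      linarith
    have hupper := countMean_le_logMean_div_log_add (Q := Q) (by linarith : 0 ≤ u) hz
    have hmain : logMean Q u / (L - 2 * ℓ) ≤ u ^ 2 / (4 * L) + R + 2 * C * (u ^ 2 / L ^ 2) := by
      calc _ ≤ (u ^ 2 / 4 + C * u ^ 2 / L) / (L - 2 * ℓ) := by gcongr <;> linarith
        _ = u ^ 2 / 4 * (1 / (L - 2 * ℓ)) + C * u ^ 2 / L * (1 / (L - 2 * ℓ)) := by ring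
        _ ≤ u ^ 2 / 4 * (1 / L + 2 * (2 * ℓ) / L ^ 2) + C * u ^ 2 / L * (1 / (L / 2)) := by
            gcongr
            · exact one_div_sub_le (by positivity) (by positivity) (by linarith)
            · linarith
        _ = _ := by rw [hR]; field_simp; ring
    have heq : (u / L ^ 2 + 1) * u = u ^ 2 / L ^ 2 + u := by ring
    rw [hlogz] at hupper
    nlinarith [mul_le_mul_of_nonneg_left hL2R hC.le]

end CountMean

section LogIncrement

open Real

/-- The increment `log (l + 2) - log (l + 1)` of the logarithm; these are the numbers whose squares
are summed in `cBEFS`. -/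
noncomputable def logIncrement (l : ℕ) : ℝ :=
  log (1 + 1 / ((l : ℝ) + 1))

variable (l : ℕ)

lemma logIncrement_le : logIncrement l ≤ 1 / ((l : ℝ) + 1) := by
  have := log_le_sub_one_of_pos (show 0 < 1 + 1 / ((l : ℝ) + 1) by positivity)
  rwa [add_sub_cancel_left] at this

lemma one_div_add_two_le_logIncrement : 1 / ((l : ℝ) + 2) ≤ logIncrement l := by
  refine Eq.trans_le ?_ (one_sub_inv_le_log_of_pos (by positivity))
  field_simp
  ring

lemma logIncrement_pos : 0 < logIncrement l :=
  lt_of_lt_of_le (by positivity) (one_div_add_two_le_logIncrement l)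

lemma logIncrement_le_one : logIncrement l ≤ 1 :=
  (logIncrement_le l).trans <|
    div_le_one_of_le₀ (by linarith [l.cast_nonneg (α := ℝ)]) (by positivity)

lemma logIncrement_eq_sub : logIncrement l = log (l + 2) - log (l + 1) := by
  rw [logIncrement, ← log_div (by positivity) (by positivity)]
  congr 1
  field_simp
  ring

lemma sum_logIncrement (e : ℕ) : ∑ l ∈ Finset.range e, logIncrement l = log (1 + e) := by
  have htel := Finset.sum_range_sub (fun l : ℕ ↦ log ((l : ℝ) + 1)) e
  simp only [Nat.cast_add, Nat.cast_one, add_assoc, one_add_one_eq_two] at htel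
  simp_rw [logIncrement_eq_sub, htel]
  simp [add_comm]

lemma logIncrement_sq_le_mul :
    logIncrement l ^ 2 ≤ ((l : ℝ) + 1) ^ (-(3 / 2) : ℝ) * ((l : ℝ) + 1) ^ (-(1 / 2) : ℝ) := by
  rw [← rpow_add (by positivity)]
  calc logIncrement l ^ 2 ≤ (1 / ((l : ℝ) + 1)) ^ 2 := by
        gcongr
        exacts [(logIncrement_pos l).le, logIncrement_le l]
    _ = _ := by norm_num

lemma logIncrement_sq_le : logIncrement l ^ 2 ≤ ((l : ℝ) + 1) ^ (-(3 / 2) : ℝ) :=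
  (logIncrement_sq_le_mul l).trans <| mul_le_of_le_one_right (by positivity) <|
    rpow_le_one_of_one_le_of_nonpos (by linarith [l.cast_nonneg (α := ℝ)]) (by norm_num)

lemma summable_rpow_neg_three_halves : Summable fun l : ℕ ↦ ((l : ℝ) + 1) ^ (-(3 / 2) : ℝ) := by
  simpa using (summable_nat_add_iff 1).2
    (summable_nat_rpow.2 (show (-(3 / 2) : ℝ) < -1 by norm_num))

lemma summable_logIncrement_sq : Summable fun l ↦ logIncrement l ^ 2 :=
  .of_nonneg_of_le (fun _ ↦ sq_nonneg _) logIncrement_sq_le summable_rpow_neg_three_halves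

/-- The series `∑_{l ≥ 1} (log (1 + 1 / l)) ^ 2`, so that `cBEFS = √(8 * sumSqLogIncrement)`. -/
noncomputable def sumSqLogIncrement : ℝ :=
  ∑' l, logIncrement l ^ 2

lemma sumSqLogIncrement_pos : 0 < sumSqLogIncrement :=
  summable_logIncrement_sq.tsum_pos (fun _ ↦ sq_nonneg _) 0 (pow_pos (logIncrement_pos 0) 2)

end LogIncrement

section DualValue

open Asymptotics Real

/-- The value `∑_{q ∈ Q} ∑_l max (log (1 + 1 / (l + 1)) - q / x) 0` of the Lagrangian dual, with
multiplier `1 / x`, of the problem of maximising `∑_{q ∈ Q} log (1 + e q)` for a prescribed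
`∑_{q ∈ Q} q * e q`. -/
noncomputable def dualValue (Q : Set ℕ) (x : ℝ) : ℝ :=
  (∑' l, countMean Q (x * logIncrement l)) / x

variable {Q : Set ℕ} {x : ℝ}

lemma summable_countMean_mul_logIncrement (hQ : 0 ∉ Q) (hx : 0 ≤ x) :
    Summable fun l ↦ countMean Q (x * logIncrement l) := by
  refine .of_nonneg_of_le (fun _ ↦ countMean_nonneg) (fun l ↦ ?_)
    (summable_logIncrement_sq.mul_left (x ^ 2))
  rw [← mul_pow]
  exact countMean_le_sq hQ (mul_nonneg hx (logIncrement_pos l).le)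

lemma exists_abs_countMean_sub_le_of_mem_Icc
    (hQ : (fun u ↦ countMean Q u - u ^ 2 / (4 * log u)) =O[atTop]
      fun u ↦ u ^ 2 * log (log u) / log u ^ 2) :
    ∃ C, 0 < C ∧ ∀ᶠ x : ℝ in atTop, ∀ u ∈ Set.Icc (x / (2 * log x ^ 4)) x,
      |countMean Q u - u ^ 2 / (4 * log x)| ≤ C * (u ^ 2 * log (log x) / log x ^ 2) := by
  obtain ⟨C, hC, hbound⟩ := hQ.exists_pos
  obtain ⟨u₀, hu₀⟩ := eventually_atTop.1 hbound.bound
  refine ⟨4 * C + 3, by positivity, ?_⟩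
  filter_upwards [eventually_gt_atTop 0, eventually_le_log 2, eventually_le_log_log 1,
    eventually_log_log_le_mul_log (c := 1 / 10) (by norm_num),
    eventually_log_pow_le_mul 8 (c := 1 / 4) (by norm_num), eventually_ge_atTop (u₀ ^ 2)]
    with x hx hL hℓ hℓL hLx hxu₀ u ⟨hxu, hux⟩
  set L := log x
  set ℓ := log L
  have hsqrt : √x ≤ u := by
    refine le_trans ?_ hxu
    have hLsqrt : 2 * L ^ 4 ≤ √x := le_sqrt_of_sq_le (by linear_combination 4 * hLx)
    rw [le_div_iff₀ (by positivity)]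
    exact (mul_le_mul_of_nonneg_left hLsqrt (sqrt_nonneg x)).trans_eq (mul_self_sqrt hx.le)
  have hu : 0 < u := (sqrt_pos.2 hx).trans_le hsqrt
  have hlog_le : log u ≤ L := log_le_log hu hux
  have hle_log : L - 5 * ℓ ≤ log u := by
    have := log_le_log (by positivity) hxu
    rw [log_div hx.ne' (by positivity), log_mul (by norm_num) (by positivity), log_pow] at this
    push_cast at this
    linarith [log_two_lt_d9]
  have hlog_pos : 0 < log u := by linarith
  have hloglog : log (log u) ≤ ℓ := log_le_log hlog_pos hlog_le
  have hcount : |countMean Q u - u ^ 2 / (4 * log u)| ≤ 4 * C * (u ^ 2 * ℓ / L ^ 2) := by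
    have hnonneg : 0 ≤ log (log u) := log_nonneg (by linarith)
    have hcount := hu₀ u ((le_sqrt_of_sq_le hxu₀).trans hsqrt)
    rw [norm_eq_abs, norm_of_nonneg (by positivity)] at hcount
    calc _ ≤ C * (u ^ 2 * log (log u) / log u ^ 2) := hcount
      _ ≤ C * (u ^ 2 * ℓ / (L / 2) ^ 2) := by gcongr; linarith
      _ = _ := by field_simp; norm_num
  have hmain : |u ^ 2 / (4 * log u) - u ^ 2 / (4 * L)| ≤ 3 * (u ^ 2 * ℓ / L ^ 2) := by
    rw [show u ^ 2 / (4 * log u) - u ^ 2 / (4 * L) = u ^ 2 / 4 * (L - log u) / (log u * L) by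
      field_simp, abs_of_nonneg (div_nonneg (mul_nonneg (by positivity) (by linarith))
        (by positivity))]
    calc _ ≤ u ^ 2 / 4 * (5 * ℓ) / (L / 2 * L) := by gcongr <;> linarith
      _ = 5 / 2 * (u ^ 2 * ℓ / L ^ 2) := by field_simp; norm_num
      _ ≤ _ := by gcongr; norm_num
  linarith [abs_sub_le (countMean Q u) (u ^ 2 / (4 * log u)) (u ^ 2 / (4 * L))]

lemma abs_countMean_sub_le_sq (hQ : 0 ∉ Q) {u L : ℝ} (hu : 0 ≤ u) (hL : 1 ≤ 4 * L) :
    |countMean Q u - u ^ 2 / (4 * L)| ≤ u ^ 2 := by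
  have hdiv : u ^ 2 / (4 * L) ≤ u ^ 2 := div_le_self (sq_nonneg u) hL
  have hdiv0 : 0 ≤ u ^ 2 / (4 * L) := by positivity
  rw [abs_le]
  constructor <;> linarith [countMean_le_sq hQ hu, countMean_nonneg (Q := Q) (u := u)]

lemma exists_abs_countMean_mul_logIncrement_sub_le (h0 : 0 ∉ Q)
    (hQ : (fun u ↦ countMean Q u - u ^ 2 / (4 * log u)) =O[atTop]
      fun u ↦ u ^ 2 * log (log u) / log u ^ 2) :
    ∃ C, 0 < C ∧ ∀ᶠ x : ℝ in atTop, ∀ l : ℕ,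
      |countMean Q (x * logIncrement l) - (x * logIncrement l) ^ 2 / (4 * log x)| ≤
        C * (x ^ 2 * log (log x) / log x ^ 2) * ((l : ℝ) + 1) ^ (-(3 / 2) : ℝ) := by
  obtain ⟨C, hC, hbound⟩ := exists_abs_countMean_sub_le_of_mem_Icc hQ
  refine ⟨C + 1, by positivity, ?_⟩
  filter_upwards [hbound, eventually_gt_atTop 0, eventually_le_log 1, eventually_le_log_log 1]
    with x hbound hx hL hℓ l
  set L := log x
  set ℓ := log L
  set u := x * logIncrement l with hu
  set r := ((l : ℝ) + 1) ^ (-(3 / 2) : ℝ)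
  have hu0 : 0 < u := mul_pos hx (logIncrement_pos l)
  have : (0 : ℝ) ≤ l := l.cast_nonneg
  rcases le_or_gt ((l : ℝ) + 1) (L ^ 4) with hlL | hlL
  · have hxu : x / (2 * L ^ 4) ≤ u := by
      rw [hu, div_eq_mul_one_div]
      gcongr
      exact (one_div_le_one_div_of_le (by positivity) (by linarith)).trans
        (one_div_add_two_le_logIncrement l)
    calc _ ≤ C * (u ^ 2 * ℓ / L ^ 2) :=
          hbound u ⟨hxu, mul_le_of_le_one_right hx.le (logIncrement_le_one l)⟩
      _ ≤ C * (x ^ 2 * r * ℓ / L ^ 2) := by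
          rw [hu, mul_pow]
          gcongr
          exact logIncrement_sq_le l
      _ = C * (x ^ 2 * ℓ / L ^ 2) * r := by ring
      _ ≤ _ := by gcongr; linarith
  · have hinv : ((l : ℝ) + 1) ^ (-(1 / 2) : ℝ) ≤ 1 / L ^ 2 := by
      rw [rpow_neg (by positivity), ← one_div, ← sqrt_eq_rpow]
      exact one_div_le_one_div_of_le (by positivity)
        (le_sqrt_of_sq_le ((pow_mul L 2 2).symm.trans_le hlL.le))
    calc _ ≤ u ^ 2 := abs_countMean_sub_le_sq h0 hu0.le (by linarith)
      _ ≤ x ^ 2 * (r * (1 / L ^ 2)) := by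
          rw [hu, mul_pow]
          gcongr
          exact (logIncrement_sq_le_mul l).trans (by gcongr)
      _ = 1 * (x ^ 2 * 1 / L ^ 2) * r := by ring
      _ ≤ _ := by gcongr; linarith

theorem isBigO_dualValue_sub (h0 : 0 ∉ Q)
    (hQ : (fun u ↦ countMean Q u - u ^ 2 / (4 * log u)) =O[atTop]
      fun u ↦ u ^ 2 * log (log u) / log u ^ 2) :
    (fun x ↦ dualValue Q x - sumSqLogIncrement * x / (4 * log x)) =O[atTop]
      fun x ↦ x * log (log x) / log x ^ 2 := by
  obtain ⟨C, -, hterm⟩ := exists_abs_countMean_mul_logIncrement_sub_le h0 hQ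
  refine .of_bound (C * ∑' l : ℕ, ((l : ℝ) + 1) ^ (-(3 / 2) : ℝ)) ?_
  filter_upwards [hterm, eventually_gt_atTop 0, eventually_le_log_log 0] with x hterm hx hℓ
  have hmain : HasSum (fun l ↦ (x * logIncrement l) ^ 2 / (4 * log x))
      (x ^ 2 / (4 * log x) * sumSqLogIncrement) := by
    refine (summable_logIncrement_sq.hasSum.mul_left (x ^ 2 / (4 * log x))).congr_fun fun l ↦ ?_
    ring
  simp_rw [← norm_eq_abs] at hterm
  have hdiff := tsum_of_norm_bounded
    (summable_rpow_neg_three_halves.hasSum.mul_left (C * (x ^ 2 * log (log x) / log x ^ 2))) hterm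
  rw [(summable_countMean_mul_logIncrement h0 hx.le).tsum_sub hmain.summable,
    hmain.tsum_eq] at hdiff
  have heq : dualValue Q x - sumSqLogIncrement * x / (4 * log x) =
      (∑' l, countMean Q (x * logIncrement l) - x ^ 2 / (4 * log x) * sumSqLogIncrement) / x := by
    rw [dualValue]
    field_simp
  rw [heq, norm_div, norm_of_nonneg hx.le,
    norm_of_nonneg (show 0 ≤ x * log (log x) / log x ^ 2 by positivity), div_le_iff₀ hx]
  exact hdiff.trans_eq (by ring)

end DualValue

section DivisorSums

open Real

open Classical in
/-- The logarithm of the number of divisors of the `Q`-part of `m`, i.e. of the largest divisor of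
`m` all of whose prime factors lie in `Q`. -/
noncomputable def logCardDivisors (Q : Set ℕ) (m : ℕ) : ℝ :=
  ∑ q ∈ m.primeFactors with q ∈ Q, log (1 + m.factorization q)

/-- The sum of `q - 1` over the prime factors `q` of `m`, counted with multiplicity. The
subtraction is harmless as `q ≥ 2`, and the shift by one makes `m - 1` an upper bound. -/
def sumPredFactors (m : ℕ) : ℕ :=
  m.factorization.sum fun q e ↦ e * (q - 1)

variable {Q : Set ℕ} {a b m : ℕ}

lemma log_one_add_factorization_nonneg (m q : ℕ) : 0 ≤ log (1 + m.factorization q) :=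
  log_nonneg (by simp)

lemma logCardDivisors_nonneg : 0 ≤ logCardDivisors Q m :=
  Finset.sum_nonneg fun q _ ↦ log_one_add_factorization_nonneg m q

open Classical in
lemma logCardDivisors_eq_sum {s : Finset ℕ} (hs : m.primeFactors ⊆ s) :
    logCardDivisors Q m = ∑ q ∈ s with q ∈ Q, log (1 + m.factorization q) := by
  refine Finset.sum_subset (Finset.filter_subset_filter _ hs) fun q hq hqm ↦ ?_
  have hq' : q ∉ m.primeFactors := fun h ↦ hqm (Finset.mem_filter.2 ⟨h, (Finset.mem_filter.1 hq).2⟩)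
  rw [← Nat.support_factorization, Finsupp.notMem_support_iff] at hq'
  simp [hq']

lemma logCardDivisors_mul_le (ha : a ≠ 0) (hb : b ≠ 0) :
    logCardDivisors Q (a * b) ≤ logCardDivisors Q a + logCardDivisors Q b := by
  classical
  have hab : a * b ≠ 0 := mul_ne_zero ha hb
  rw [logCardDivisors_eq_sum subset_rfl,
    logCardDivisors_eq_sum (Nat.primeFactors_mono (dvd_mul_right a b) hab),
    logCardDivisors_eq_sum (Nat.primeFactors_mono (dvd_mul_left b a) hab),
    ← Finset.sum_add_distrib]
  refine Finset.sum_le_sum fun q _ ↦ ?_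
  rw [← log_mul (by positivity) (by positivity), Nat.factorization_mul ha hb]
  refine log_le_log (by positivity) ?_
  have : (0 : ℝ) ≤ a.factorization q * b.factorization q := by positivity
  simp only [Finsupp.coe_add, Pi.add_apply, Nat.cast_add]
  linarith

lemma log_one_add_le_mul_log (e : ℕ) {q : ℕ} (hq : 2 ≤ q) : log (1 + e) ≤ e * log q := by
  rw [← log_pow]
  refine log_le_log (by positivity) ?_
  have : e + 1 ≤ q ^ e := Nat.lt_pow_self hq
  rw [add_comm]
  exact_mod_cast this

lemma logCardDivisors_le_log : logCardDivisors Q m ≤ log m := by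
  classical
  rw [log_nat_eq_sum_factorization, Finsupp.sum, Nat.support_factorization]
  calc logCardDivisors Q m ≤ ∑ q ∈ m.primeFactors, log (1 + m.factorization q) :=
        Finset.sum_le_sum_of_subset_of_nonneg (Finset.filter_subset _ _)
          fun q _ _ ↦ log_one_add_factorization_nonneg m q
    _ ≤ _ := Finset.sum_le_sum fun q hq ↦
        log_one_add_le_mul_log _ (Nat.prime_of_mem_primeFactors hq).two_le

lemma sumPredFactors_mul (ha : a ≠ 0) (hb : b ≠ 0) :
    sumPredFactors (a * b) = sumPredFactors a + sumPredFactors b := by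
  rw [sumPredFactors, Nat.factorization_mul ha hb]
  exact Finsupp.sum_add_index' (fun _ ↦ zero_mul _) fun _ _ _ ↦ add_mul _ _ _

lemma sumPredFactors_prod {ι : Type*} (s : Finset ι) (f : ι → ℕ) (hf : ∀ i ∈ s, f i ≠ 0) :
    sumPredFactors (∏ i ∈ s, f i) = ∑ i ∈ s, sumPredFactors (f i) := by
  rw [sumPredFactors, Nat.factorization_prod hf]
  exact Finsupp.sum_finsetSum_index (fun _ ↦ zero_mul _) (fun _ _ _ ↦ add_mul _ _ _) |>.symm

lemma sumPredFactors_lt (hm : m ≠ 0) : sumPredFactors m < m := by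
  induction m using Nat.recOnMul with
  | zero => exact absurd rfl hm
  | one => simp [sumPredFactors]
  | prime p hp => simp [sumPredFactors, hp.factorization, hp.pos]
  | mul a b iha ihb =>
    have ha := left_ne_zero_of_mul hm
    have hb := right_ne_zero_of_mul hm
    rw [sumPredFactors_mul ha hb]
    nlinarith [iha ha, ihb hb, Nat.pos_of_ne_zero ha, Nat.pos_of_ne_zero hb]

end DivisorSums

section DualBound

open Real

variable {Q : Set ℕ} {x u : ℝ}

lemma countMean_eq_zero (hQ : ∀ q ∈ Q, 2 ≤ q) (hu : u ≤ 2) : countMean Q u = 0 := by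
  classical
  rw [countMean_eq_sum_Icc]
  refine Finset.sum_eq_zero fun q hq ↦ max_eq_right ?_
  have : (2 : ℝ) ≤ q := mod_cast hQ q (Finset.mem_filter.1 hq).2
  linarith

lemma sum_max_sub_le_countMean {s : Finset ℕ} (hs : ∀ q ∈ s, q ∈ Q) (u : ℝ) :
    ∑ q ∈ s, max (u - q) 0 ≤ countMean Q u := by
  classical
  obtain ⟨M, hM⟩ : ∃ M : ℕ, ∀ q ∈ s, q < M :=
    ⟨s.sup id + 1, fun q hq ↦ Nat.lt_succ_of_le (Finset.le_sup (f := id) hq)⟩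
  have hu : u ≤ (max M (⌊u⌋₊ + 1) : ℕ) :=
    (Nat.lt_floor_add_one u).le.trans (mod_cast le_max_right M (⌊u⌋₊ + 1))
  rw [countMean_eq_sum hu]
  refine Finset.sum_le_sum_of_subset_of_nonneg (fun q hq ↦ ?_) fun q _ _ ↦ le_max_right _ _
  exact Finset.mem_filter.2 ⟨Finset.mem_range.2 (lt_max_of_lt_left (hM q hq)), hs q hq⟩

lemma countMean_add_one_le (hQ : ∀ q ∈ Q, 2 ≤ q) (u : ℝ) :
    countMean Q (u + 1) ≤ countMean Q u + if 1 < u then u else 0 := by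
  classical
  split_ifs with hu
  · have hM : u + 1 ≤ (⌊u⌋₊ + 2 : ℕ) := by
      push_cast
      linarith [Nat.lt_floor_add_one u]
    rw [countMean_eq_sum hM, countMean_eq_sum ((le_add_of_nonneg_right zero_le_one).trans hM)]
    set s := {q ∈ Finset.range (⌊u⌋₊ + 2) | q ∈ Q}
    have hcard : s.card ≤ ⌊u⌋₊ := by
      refine (Finset.card_le_card (t := Finset.Ico 2 (⌊u⌋₊ + 2)) fun q hq ↦ ?_).trans_eq (by simp)
      rw [Finset.mem_filter, Finset.mem_range] at hq
      exact Finset.mem_Ico.2 ⟨hQ q hq.2, hq.1⟩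
    calc ∑ q ∈ s, max (u + 1 - q) 0 ≤ ∑ q ∈ s, (max (u - q) 0 + 1) := by
          refine Finset.sum_le_sum fun q _ ↦ max_le ?_ ?_
          · linarith [le_max_left (u - q) 0]
          · linarith [le_max_right (u - q) 0]
      _ = ∑ q ∈ s, max (u - q) 0 + s.card := by simp [Finset.sum_add_distrib]
      _ ≤ _ := by
          gcongr
          exact (Nat.cast_le.2 hcard).trans (Nat.floor_le (by linarith))
  · rw [countMean_eq_zero hQ (by linarith), add_zero]
    exact countMean_nonneg

lemma sum_logIncrement_of_one_lt_mul_le (hx : 1 ≤ x) (E : ℕ) :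
    ∑ l ∈ Finset.range E, (if 1 < x * logIncrement l then logIncrement l else 0) ≤ 1 + log x := by
  have hlt : ∀ l, 1 < x * logIncrement l → l < ⌊x⌋₊ := fun l hl ↦ by
    have hdiv : 1 < x / ((l : ℝ) + 1) := by
      rw [div_eq_mul_one_div]
      exact hl.trans_le (by gcongr; exact logIncrement_le l)
    rw [one_lt_div (by positivity)] at hdiv
    exact Nat.le_floor (mod_cast hdiv.le)
  calc _ ≤ ∑ l ∈ Finset.range ⌊x⌋₊, 1 / ((l : ℝ) + 1) := by
        rw [← Finset.sum_filter]
        refine (Finset.sum_le_sum fun l _ ↦ logIncrement_le l).trans <|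
          Finset.sum_le_sum_of_subset_of_nonneg (fun l hl ↦ ?_) fun l _ _ ↦ by positivity
        exact Finset.mem_range.2 (hlt l (Finset.mem_filter.1 hl).2)
    _ = (harmonic ⌊x⌋₊ : ℝ) := by simp [harmonic]
    _ ≤ _ := harmonic_floor_le_one_add_log x hx

lemma sum_countMean_add_one_div_le (hQ : ∀ q ∈ Q, 2 ≤ q) (hx : 1 ≤ x) (E : ℕ) :
    ∑ l ∈ Finset.range E, countMean Q (x * logIncrement l + 1) / x ≤
      dualValue Q x + 1 + log x := by
  have hx0 : 0 < x := by linarith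
  have h0 : 0 ∉ Q := fun h ↦ absurd (hQ 0 h) (by norm_num)
  calc _ ≤ ∑ l ∈ Finset.range E, (countMean Q (x * logIncrement l) / x +
          if 1 < x * logIncrement l then logIncrement l else 0) := by
        refine Finset.sum_le_sum fun l _ ↦ ?_
        rw [div_le_iff₀ hx0, add_mul, div_mul_cancel₀ _ hx0.ne', ite_mul, zero_mul,
          mul_comm (logIncrement l)]
        exact countMean_add_one_le hQ _
    _ ≤ dualValue Q x + (1 + log x) := by
        rw [Finset.sum_add_distrib, ← Finset.sum_div, dualValue]
        gcongr
        · exact (summable_countMean_mul_logIncrement h0 hx0.le).sum_le_tsum _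
            fun _ _ ↦ countMean_nonneg
        · exact sum_logIncrement_of_one_lt_mul_le hx E
    _ = _ := by ring

/- Weak duality: each of the `e` summands `logIncrement l` of `log (1 + e)` is at most its price
`(q - 1) / x` plus the positive part of the difference. -/
lemma log_one_add_le_add_sum_max {e E : ℕ} (heE : e ≤ E) (hx : 0 < x) (q : ℝ) :
    log (1 + e) ≤ e * (q - 1) / x +
      ∑ l ∈ Finset.range E, max (x * logIncrement l + 1 - q) 0 / x := by
  calc log (1 + e) = e * (q - 1) / x + ∑ l ∈ Finset.range e, (x * logIncrement l + 1 - q) / x := by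
        rw [← Finset.sum_div, Finset.sum_sub_distrib, Finset.sum_add_distrib, ← Finset.mul_sum,
          sum_logIncrement]
        simp only [Finset.sum_const, Finset.card_range, nsmul_eq_mul]
        field_simp
        ring
    _ ≤ e * (q - 1) / x + ∑ l ∈ Finset.range e, max (x * logIncrement l + 1 - q) 0 / x := by
        gcongr
        exact le_max_left _ _
    _ ≤ _ := by
        gcongr

lemma logCardDivisors_le_sumPredFactors_div_add_dualValue (hQ : ∀ q ∈ Q, 2 ≤ q) (hx : 1 ≤ x)
    (m : ℕ) :
    logCardDivisors Q m ≤ sumPredFactors m / x + dualValue Q x + 1 + log x := by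
  classical
  have hx0 : 0 < x := by linarith
  set s := {q ∈ m.primeFactors | q ∈ Q}
  have hs : s ⊆ m.primeFactors := Finset.filter_subset _ _
  have hpred : ∑ q ∈ s, (m.factorization q : ℝ) * (q - 1) ≤ sumPredFactors m := by
    calc _ = ((∑ q ∈ s, m.factorization q * (q - 1) : ℕ) : ℝ) := by
          push_cast
          refine Finset.sum_congr rfl fun q hq ↦ ?_
          rw [Nat.cast_pred (Nat.pos_of_mem_primeFactors (hs hq))]
      _ ≤ _ := mod_cast Finset.sum_le_sum_of_subset hs
  calc logCardDivisors Q m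
      ≤ ∑ q ∈ s, ((m.factorization q : ℝ) * (q - 1) / x +
          ∑ l ∈ Finset.range m, max (x * logIncrement l + 1 - q) 0 / x) := by
        refine Finset.sum_le_sum fun q hq ↦ log_one_add_le_add_sum_max ?_ hx0 q
        exact (Nat.factorization_lt q (Nat.mem_primeFactors.1 (hs hq)).2.2).le
    _ = (∑ q ∈ s, (m.factorization q : ℝ) * (q - 1)) / x +
          ∑ l ∈ Finset.range m, (∑ q ∈ s, max (x * logIncrement l + 1 - q) 0) / x := by
        rw [Finset.sum_add_distrib, Finset.sum_comm, Finset.sum_div]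
        simp_rw [Finset.sum_div]
    _ ≤ sumPredFactors m / x +
          ∑ l ∈ Finset.range m, countMean Q (x * logIncrement l + 1) / x := by
        gcongr
        exact sum_max_sub_le_countMean (fun q hq ↦ (Finset.mem_filter.1 hq).2) _
    _ ≤ _ := by linarith [sum_countMean_add_one_div_le hQ hx m]

end DualBound

section FactorizationLog

open Real

variable {n : ℕ} {s : Finset ℕ} {X Z : ℝ}

lemma sum_factorization_mul_log_le (hs : s ⊆ n.primeFactors) :
    ∑ p ∈ s, n.factorization p * log p ≤ log n := by
  rw [log_nat_eq_sum_factorization, Finsupp.sum, Nat.support_factorization]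
  exact Finset.sum_le_sum_of_subset_of_nonneg hs
    fun p _ _ ↦ mul_nonneg (Nat.cast_nonneg _) (log_natCast_nonneg p)

lemma factorization_le_two_mul_log {p : ℕ} (hp : p ∈ n.primeFactors) :
    n.factorization p ≤ 2 * log n := by
  have hlog : 1 / 2 ≤ log p := by
    have := log_le_log two_pos (Nat.cast_le.2 (Nat.prime_of_mem_primeFactors hp).two_le)
    linarith [log_two_gt_d9]
  have hle := sum_factorization_mul_log_le (Finset.singleton_subset_iff.2 hp)
  rw [Finset.sum_singleton] at hle
  nlinarith [(n.factorization p).cast_nonneg (α := ℝ)]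

lemma log_prod_factorization_add_one_le (hX : log n ≤ X) (hZ : 0 ≤ Z) (hs : s ⊆ n.primeFactors)
    (hsZ : ∀ p ∈ s, (p : ℝ) ≤ Z) :
    log (∏ p ∈ s, (n.factorization p + 1) : ℕ) ≤ (Z + 1) * log (2 * X + 1) := by
  have hcard : (s.card : ℝ) ≤ Z + 1 := by
    have := Finset.card_le_card (t := Finset.range (⌊Z⌋₊ + 1))
      fun p hp ↦ Finset.mem_range_succ_iff.2 (Nat.le_floor (hsZ p hp))
    rw [Finset.card_range] at this
    calc (s.card : ℝ) ≤ ⌊Z⌋₊ + 1 := mod_cast this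
      _ ≤ _ := by gcongr; exact Nat.floor_le hZ
  have hlog : 0 ≤ log (2 * X + 1) := log_nonneg (by linarith [log_natCast_nonneg n])
  push_cast
  rw [log_prod fun p _ ↦ by positivity]
  calc ∑ p ∈ s, log (n.factorization p + 1) ≤ ∑ p ∈ s, log (2 * X + 1) := by
        refine Finset.sum_le_sum fun p hp ↦ log_le_log (by positivity) ?_
        linarith [factorization_le_two_mul_log (hs hp)]
    _ = s.card * log (2 * X + 1) := by rw [Finset.sum_const, nsmul_eq_mul]
    _ ≤ _ := by gcongr

lemma sumPredFactors_prod_factorization_add_one_le (hX : log n ≤ X) (hZ : 1 < Z)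
    (hs : s ⊆ n.primeFactors) (hsZ : ∀ p ∈ s, Z ≤ p) :
    sumPredFactors (∏ p ∈ s, (n.factorization p + 1)) ≤ X / log Z := by
  rw [sumPredFactors_prod _ _ fun p _ ↦ Nat.succ_ne_zero _, le_div_iff₀ (log_pos hZ)]
  push_cast
  rw [Finset.sum_mul]
  calc _ ≤ ∑ p ∈ s, n.factorization p * log p := by
        refine Finset.sum_le_sum fun p hp ↦ ?_
        gcongr
        · exact (log_pos hZ).le
        · exact Nat.lt_succ_iff.1 (sumPredFactors_lt (Nat.succ_ne_zero _))
        · exact hsZ p hp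
    _ ≤ X := (sum_factorization_mul_log_le hs).trans hX

end FactorizationLog

section UpperBound

open Algebra NumberField Real

variable {K : Type*} [Field K] [NumberField K] [IsQuadraticExtension ℚ K]

lemma log_fK_le_logCardDivisors (m : ℕ) :
    log (fK K m) ≤ logCardDivisors {p | IsSplitPrime K p} m := by
  rcases eq_or_ne (fK K m) 0 with hfm | hfm
  · simpa [hfm] using logCardDivisors_nonneg
  · have hm : m ≠ 0 := by rintro rfl; exact hfm fK_zero
    rw [fK_eq_prod_isSplitPrime hm hfm, Nat.cast_prod,
      log_prod fun p _ ↦ Nat.cast_ne_zero.2 (Nat.succ_ne_zero _)]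
    exact Finset.sum_le_sum fun p _ ↦ by simp [add_comm]

lemma dualValue_nonneg {Q : Set ℕ} {x : ℝ} (hx : 0 ≤ x) : 0 ≤ dualValue Q x :=
  div_nonneg (tsum_nonneg fun _ ↦ countMean_nonneg) hx

/- The primes below `Z` contribute little as there are few of them; above `Z` an exponent `e` costs
at least `e * log Z` in `log n`, and `sumPredFactors (e + 1) ≤ e`. -/
lemma log_fK_fK_le {n : ℕ} (hn : n ≠ 0) {X Z x : ℝ} (hX : log n ≤ X) (hZ : 1 < Z) (hx : 1 ≤ x) :
    log (fK K (fK K n)) ≤ (Z + 1) * log (2 * X + 1) + X / log Z / x +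
      dualValue {p | IsSplitPrime K p} x + 1 + log x := by
  classical
  rcases eq_or_ne (fK K n) 0 with hfn | hfn
  · have hX0 : 0 ≤ X := (log_natCast_nonneg n).trans hX
    have := log_pos hZ
    have := log_nonneg hx
    have := log_nonneg (show 1 ≤ 2 * X + 1 by linarith)
    have := dualValue_nonneg (Q := {p | IsSplitPrime K p}) (show 0 ≤ x by linarith)
    rw [hfn, fK_zero, Nat.cast_zero, log_zero]
    positivity
  set T := {p ∈ n.primeFactors | IsSplitPrime K p}
  set small := ∏ p ∈ T.filter (fun p : ℕ ↦ (p : ℝ) ≤ Z), (n.factorization p + 1)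
  set large := ∏ p ∈ T.filter (fun p : ℕ ↦ ¬(p : ℝ) ≤ Z), (n.factorization p + 1)
  have hsplit : fK K n = small * large := by
    rw [fK_eq_prod_isSplitPrime hn hfn, Finset.prod_filter_mul_prod_filter_not]
  have hT (P : ℕ → Prop) [DecidablePred P] : {p ∈ T | P p} ⊆ n.primeFactors :=
    (Finset.filter_subset _ _).trans (Finset.filter_subset _ _)
  have hsmall : log small ≤ (Z + 1) * log (2 * X + 1) :=
    log_prod_factorization_add_one_le hX (by linarith) (hT _) fun p hp ↦ (Finset.mem_filter.1 hp).2
  have hlarge : sumPredFactors large ≤ X / log Z :=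
    sumPredFactors_prod_factorization_add_one_le hX hZ (hT _)
      fun p hp ↦ (not_le.1 (Finset.mem_filter.1 hp).2).le
  have hdual := logCardDivisors_le_sumPredFactors_div_add_dualValue
    (Q := {p | IsSplitPrime K p}) (fun _ h ↦ h.two_le) hx large
  have hdiv : sumPredFactors large / x ≤ X / log Z / x := by gcongr
  calc log (fK K (fK K n)) ≤ logCardDivisors {p | IsSplitPrime K p} (small * large) :=
        hsplit ▸ log_fK_le_logCardDivisors _
    _ ≤ logCardDivisors _ small + logCardDivisors _ large := by
        rw [hsplit] at hfn
        exact logCardDivisors_mul_le (left_ne_zero_of_mul hfn) (right_ne_zero_of_mul hfn)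
    _ ≤ _ := by linarith [logCardDivisors_le_log (Q := {p | IsSplitPrime K p}) (m := small)]

end UpperBound

section UpperAsymptotics

open Asymptotics Real

lemma isBigO_sqrt_div_log_sq :
    (fun X ↦ √X / log X ^ 2) =O[atTop] fun X ↦ √X * log (log X) / log X ^ 2 := by
  refine .of_bound 1 ?_
  filter_upwards [eventually_le_log_log 1] with X hX
  rw [one_mul, norm_of_nonneg (by positivity), norm_of_nonneg (by positivity)]
  gcongr
  exact le_mul_of_one_le_right (sqrt_nonneg X) hX

lemma log_mul_sqrt {c X : ℝ} (hc : 0 < c) (hX : 0 < X) : log (c * √X) = log c + log X / 2 := by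
  rw [log_mul hc.ne' (sqrt_ne_zero'.2 hX), log_sqrt hX.le]

lemma eventually_log_mul_sqrt_mem_Icc {c : ℝ} (hc : 0 < c) :
    ∀ᶠ X in atTop, log (c * √X) ∈ Set.Icc (log X / 4) (log X) := by
  filter_upwards [eventually_gt_atTop 0, eventually_le_log (4 * |log c|)] with X hX hlogc
  rw [log_mul_sqrt hc hX]
  constructor <;> linarith [abs_le.1 (le_refl |log c|)]

lemma isBigO_one_add_log_mul_sqrt {c : ℝ} (hc : 0 < c) :
    (fun X ↦ 1 + log (c * √X)) =O[atTop] fun X ↦ √X * log (log X) / log X ^ 2 := by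
  refine IsBigO.trans (.of_bound 2 ?_) isBigO_sqrt_div_log_sq
  filter_upwards [eventually_log_mul_sqrt_mem_Icc hc, eventually_le_log 1,
    eventually_log_pow_three_le_sqrt] with X hmem hlog hcube
  rw [norm_of_nonneg (by linarith [hmem.1]), norm_of_nonneg (by positivity), ← mul_div_assoc,
    le_div_iff₀ (by positivity)]
  calc _ ≤ 2 * log X * log X ^ 2 := by gcongr; linarith [hmem.2]
    _ = 2 * log X ^ 3 := by ring
    _ ≤ _ := by gcongr

lemma isBigO_sqrt_div_log_cube_add_one_mul_log :
    (fun X ↦ (√X / log X ^ 3 + 1) * log (2 * X + 1)) =O[atTop]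
      fun X ↦ √X * log (log X) / log X ^ 2 := by
  refine IsBigO.trans (.of_bound 4 ?_) isBigO_sqrt_div_log_sq
  filter_upwards [eventually_ge_atTop 3, eventually_le_log 1,
    eventually_log_pow_three_le_sqrt] with X hX hlog hcube
  have hlog2 : log (2 * X + 1) ≤ 2 * log X := by
    rw [show 2 * log X = log (X ^ 2) by rw [log_pow]; norm_cast]
    exact log_le_log (by positivity) (by nlinarith)
  have : 0 ≤ log (2 * X + 1) := log_nonneg (by linarith)
  have hone : 1 ≤ √X / log X ^ 3 := (one_le_div (by positivity)).2 hcube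
  rw [norm_of_nonneg (by positivity), norm_of_nonneg (by positivity)]
  calc _ ≤ (√X / log X ^ 3 + √X / log X ^ 3) * (2 * log X) := by gcongr
    _ = 4 * (√X / log X ^ 2) := by field_simp; norm_num

lemma isBigO_div_log_sqrt_div_log_cube_sub {c : ℝ} (hc : 0 < c) :
    (fun X ↦ X / log (√X / log X ^ 3) / (2 / c * √X) - c * (√X / log X)) =O[atTop]
      fun X ↦ √X * log (log X) / log X ^ 2 := by
  refine .of_bound (12 * c) ?_
  filter_upwards [eventually_gt_atTop 0, eventually_le_log 1, eventually_le_log_log 1,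
    eventually_log_log_le_mul_log (c := 1 / 12) (by norm_num)] with X hX hℓ hr hrℓ
  set ℓ := log X
  set r := log ℓ
  have hlog : log (√X / ℓ ^ 3) = (ℓ - 6 * r) / 2 := by
    rw [log_div (sqrt_ne_zero'.2 hX) (by positivity), log_sqrt hX.le, log_pow]
    push_cast
    ring
  have hden : 0 < ℓ - 6 * r := by linarith
  have heq : X / log (√X / ℓ ^ 3) / (2 / c * √X) - c * (√X / ℓ) =
      c * √X * (1 / (ℓ - 6 * r) - 1 / ℓ) := by
    rw [hlog]
    nth_rw 1 [← mul_self_sqrt hX.le]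
    field_simp
  have hle : 1 / ℓ ≤ 1 / (ℓ - 6 * r) := one_div_le_one_div_of_le hden (by linarith)
  rw [heq, norm_of_nonneg (mul_nonneg (by positivity) (sub_nonneg.2 hle)),
    norm_of_nonneg (by positivity)]
  calc _ ≤ c * √X * (2 * (6 * r) / ℓ ^ 2) := by
        gcongr
        linarith [one_div_sub_le (t := 6 * r) (show 0 < ℓ by positivity) (by positivity)
          (by linarith)]
    _ = _ := by ring

lemma isBigO_mul_sqrt_mul_log_log_div_log_sq {c : ℝ} (hc : 0 < c) :
    (fun X ↦ c * √X * log (log (c * √X)) / log (c * √X) ^ 2) =O[atTop]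
      fun X ↦ √X * log (log X) / log X ^ 2 := by
  refine .of_bound (16 * c) ?_
  filter_upwards [eventually_log_mul_sqrt_mem_Icc hc, eventually_le_log 4,
    eventually_le_log_log 1] with X ⟨hlower, hupper⟩ hℓ hr
  have : 0 ≤ log (log (c * √X)) := log_nonneg (by linarith)
  rw [norm_of_nonneg (by positivity), norm_of_nonneg (by positivity)]
  calc _ ≤ c * √X * log (log X) / (log X / 4) ^ 2 := by gcongr; linarith
    _ = _ := by field_simp; norm_num

lemma isBigO_mul_sqrt_div_log_mul_sqrt_sub {c : ℝ} (hc : 0 < c) :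
    (fun X ↦ c * √X / (4 * log (c * √X)) - c / 2 * (√X / log X)) =O[atTop]
      fun X ↦ √X * log (log X) / log X ^ 2 := by
  refine IsBigO.trans (.of_bound (2 * c * |log c|) ?_) isBigO_sqrt_div_log_sq
  filter_upwards [eventually_gt_atTop 0, eventually_log_mul_sqrt_mem_Icc hc, eventually_le_log 1]
    with X hX ⟨hlower, _⟩ hℓ
  have hlog := log_mul_sqrt hc hX
  set L := log (c * √X)
  have hL : 0 < L := by linarith
  have heq : c * √X / (4 * L) - c / 2 * (√X / log X) = c * √X * (-log c) / (2 * (L * log X)) := by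
    rw [show -log c = (log X - 2 * L) / 2 by linarith]
    field_simp
    ring
  rw [heq, norm_div, norm_mul, norm_neg, norm_eq_abs (log c), norm_of_nonneg (by positivity),
    norm_of_nonneg (by positivity), norm_of_nonneg (by positivity)]
  calc _ ≤ c * √X * |log c| / (2 * (log X / 4 * log X)) := by gcongr
    _ = _ := by field_simp; norm_num

variable {Q : Set ℕ}

lemma isBigO_dualValue_mul_sqrt_sub
    (hQ : (fun x ↦ dualValue Q x - sumSqLogIncrement * x / (4 * log x)) =O[atTop]
      fun x ↦ x * log (log x) / log x ^ 2) {c : ℝ} (hc : 0 < c) :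
    (fun X ↦ dualValue Q (c * √X) - sumSqLogIncrement * c / 2 * (√X / log X)) =O[atTop]
      fun X ↦ √X * log (log X) / log X ^ 2 := by
  have hscale : Tendsto (fun X ↦ c * √X) atTop atTop := tendsto_sqrt_atTop.const_mul_atTop hc
  refine (((hQ.comp_tendsto hscale).trans (isBigO_mul_sqrt_mul_log_log_div_log_sq hc)).add
    ((isBigO_mul_sqrt_div_log_mul_sqrt_sub hc).const_mul_left sumSqLogIncrement)).congr_left
    fun X ↦ ?_
  simp only [Function.comp_apply]
  ring

theorem isBigO_upperBound_sub
    (hQ : (fun x ↦ dualValue Q x - sumSqLogIncrement * x / (4 * log x)) =O[atTop]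
      fun x ↦ x * log (log x) / log x ^ 2) :
    (fun X ↦ (√X / log X ^ 3 + 1) * log (2 * X + 1) +
        X / log (√X / log X ^ 3) / (2 / √sumSqLogIncrement * √X) +
        dualValue Q (2 / √sumSqLogIncrement * √X) + 1 + log (2 / √sumSqLogIncrement * √X) -
        2 * √sumSqLogIncrement * (√X / log X)) =O[atTop]
      fun X ↦ √X * log (log X) / log X ^ 2 := by
  have hc : 0 < √sumSqLogIncrement := sqrt_pos.2 sumSqLogIncrement_pos
  have hscale : 0 < 2 / √sumSqLogIncrement := by positivity
  have hS : sumSqLogIncrement * (2 / √sumSqLogIncrement) / 2 = √sumSqLogIncrement := by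
    nth_rw 1 [← mul_self_sqrt sumSqLogIncrement_pos.le]
    field_simp
  have hdual := isBigO_dualValue_mul_sqrt_sub hQ hscale
  rw [hS] at hdual
  refine (((isBigO_sqrt_div_log_cube_add_one_mul_log.add
    (isBigO_div_log_sqrt_div_log_cube_sub hc)).add hdual).add
    (isBigO_one_add_log_mul_sqrt hscale)).congr_left fun X ↦ ?_
  ring

end UpperAsymptotics

section UpperBoundEventually

open Algebra Asymptotics Real

variable {K : Type*} [Field K] [NumberField K] [IsQuadraticExtension ℚ K]

theorem exists_eventually_log_fK_fK_le
    (hK : (fun x ↦ dualValue {p | IsSplitPrime K p} x - sumSqLogIncrement * x / (4 * log x))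
      =O[atTop] fun x ↦ x * log (log x) / log x ^ 2) :
    ∃ C, ∀ᶠ X in atTop, ∀ n : ℕ, n ≠ 0 → log n ≤ X → log (fK K (fK K n)) ≤
      2 * √sumSqLogIncrement * (√X / log X) + C * (√X * log (log X) / log X ^ 2) := by
  have hc : 0 < √sumSqLogIncrement := sqrt_pos.2 sumSqLogIncrement_pos
  have hscale : Tendsto (fun X ↦ 2 / √sumSqLogIncrement * √X) atTop atTop :=
    tendsto_sqrt_atTop.const_mul_atTop (by positivity)
  obtain ⟨C, hbound⟩ := (isBigO_upperBound_sub hK).bound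
  refine ⟨C, ?_⟩
  filter_upwards [hbound, eventually_le_log 1, eventually_le_log_log 0,
    eventually_log_pow_le_mul 6 (c := 1 / 4) (by norm_num), hscale.eventually_ge_atTop 1]
    with X hbound hℓ hr hpow hx n hn hnX
  have hZ : 1 < √X / log X ^ 3 := by
    rw [one_lt_div (by positivity)]
    have : 2 * log X ^ 3 ≤ √X := le_sqrt_of_sq_le (by linear_combination 4 * hpow)
    linarith [pow_pos (show 0 < log X by linarith) 3]
  rw [norm_of_nonneg (show 0 ≤ √X * log (log X) / log X ^ 2 by positivity)] at hbound
  linarith [log_fK_fK_le (K := K) hn hnX hZ hx, le_norm_self _ |>.trans hbound]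

end UpperBoundEventually

section OptimalPairs

open Real

open Classical in
/-- The pairs `(l, q)` with `q ∈ Q` and `q ≤ k * log (1 + 1 / (l + 1))`: raising the exponent of `q`
from `l` to `l + 1` is worth its price `q / k`. The bounds on `l` and `q` imposed by the product
are automatic if the elements of `Q` are at least `2`, see `mem_optimalPairs`. -/
noncomputable def optimalPairs (Q : Set ℕ) (k : ℕ) : Finset (ℕ × ℕ) :=
  {s ∈ Finset.range k ×ˢ Finset.range (k + 1) | s.2 ∈ Q ∧ (s.2 : ℝ) ≤ k * logIncrement s.1}

/-- The value `∑_q log (1 + e q)` of the exponents `e q = #{l | (l, q) ∈ optimalPairs Q k}`. -/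
noncomputable def optimalValue (Q : Set ℕ) (k : ℕ) : ℝ :=
  ∑ s ∈ optimalPairs Q k, logIncrement s.1

/-- The cost `∑_q q * e q` of the exponents `e q = #{l | (l, q) ∈ optimalPairs Q k}`. -/
noncomputable def optimalCost (Q : Set ℕ) (k : ℕ) : ℝ :=
  ∑ s ∈ optimalPairs Q k, (s.2 : ℝ)

lemma logIncrement_antitone : Antitone logIncrement := fun a b hab ↦ by
  unfold logIncrement
  gcongr

lemma mul_logIncrement_le (k l : ℕ) : k * logIncrement l ≤ k / ((l : ℝ) + 1) := by
  rw [div_eq_mul_one_div]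
  gcongr
  exact logIncrement_le l

lemma mul_logIncrement_le_self (k l : ℕ) : k * logIncrement l ≤ k :=
  mul_le_of_le_one_right k.cast_nonneg (logIncrement_le_one l)

variable {Q : Set ℕ} {k : ℕ}

lemma optimalPairs_subset : optimalPairs Q k ⊆ Finset.range k ×ˢ Finset.range (k + 1) := by
  classical
  exact Finset.filter_subset _ _

lemma mem_optimalPairs (hQ : ∀ q ∈ Q, 2 ≤ q) {s : ℕ × ℕ} :
    s ∈ optimalPairs Q k ↔ s.2 ∈ Q ∧ (s.2 : ℝ) ≤ k * logIncrement s.1 := by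
  classical
  rw [optimalPairs, Finset.mem_filter, Finset.mem_product, Finset.mem_range, Finset.mem_range,
    and_iff_right_iff_imp]
  rintro ⟨hs, hle⟩
  have htwo : (2 : ℝ) ≤ s.2 := mod_cast hQ _ hs
  have hdiv := htwo.trans (hle.trans (mul_logIncrement_le k s.1))
  rw [le_div_iff₀ (by positivity)] at hdiv
  have hl : (s.1 : ℝ) < k := by linarith [s.1.cast_nonneg (α := ℝ)]
  exact ⟨mod_cast hl, Nat.lt_succ_of_le (mod_cast hle.trans (mul_logIncrement_le_self k s.1))⟩

open Classical in
lemma countMean_mul_logIncrement (l : ℕ) :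
    countMean Q (k * logIncrement l) =
      ∑ q ∈ Finset.range (k + 1) with q ∈ Q ∧ (q : ℝ) ≤ k * logIncrement l,
        (k * logIncrement l - q) := by
  rw [countMean_eq_sum (M := k + 1)
    ((mul_logIncrement_le_self k l).trans (mod_cast k.le_succ)), Finset.sum_filter,
    Finset.sum_filter]
  refine Finset.sum_congr rfl fun q _ ↦ ?_
  by_cases hq : q ∈ Q <;> rcases le_or_gt (q : ℝ) (k * logIncrement l) with hle | hgt
  · simp [hq, hle]
  · simp [hq, hgt, hgt.le]
  · simp [hq]
  · simp [hq]

lemma tsum_countMean_mul_logIncrement (hQ : ∀ q ∈ Q, 2 ≤ q) :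
    ∑' l, countMean Q (k * logIncrement l) = k * optimalValue Q k - optimalCost Q k := by
  classical
  rw [tsum_eq_sum (s := Finset.range k) fun l hl ↦ countMean_eq_zero hQ ?_]
  · simp_rw [countMean_mul_logIncrement, Finset.sum_filter]
    rw [optimalValue, optimalCost, Finset.mul_sum, ← Finset.sum_sub_distrib, optimalPairs,
      Finset.sum_filter, Finset.sum_product]
  · have hkl : (k : ℝ) ≤ l := mod_cast not_lt.1 (mt Finset.mem_range.2 hl)
    refine (mul_logIncrement_le k l).trans ((div_le_one₀ (by positivity)).2 ?_ |>.trans one_le_two)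
    linarith

lemma optimalValue_eq_dualValue_add (hQ : ∀ q ∈ Q, 2 ≤ q) (hk : k ≠ 0) :
    optimalValue Q k = dualValue Q k + optimalCost Q k / k := by
  have : (k : ℝ) ≠ 0 := mod_cast hk
  rw [dualValue, tsum_countMean_mul_logIncrement hQ]
  field_simp
  ring

lemma injOn_fst_optimalPairs_succ_sdiff (hQ : ∀ q ∈ Q, 2 ≤ q) :
    Set.InjOn Prod.fst (↑(optimalPairs Q (k + 1) \ optimalPairs Q k) : Set (ℕ × ℕ)) := by
  have hfloor : ∀ s ∈ optimalPairs Q (k + 1) \ optimalPairs Q k,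
      s.2 = ⌊(k + 1 : ℕ) * logIncrement s.1⌋₊ := by
    intro s hs
    rw [Finset.mem_sdiff, mem_optimalPairs hQ, mem_optimalPairs hQ, not_and, not_le] at hs
    obtain ⟨⟨hsQ, hle⟩, hgt⟩ := hs
    have hnonneg := (logIncrement_pos s.1).le
    refine ((Nat.floor_eq_iff (by positivity)).2 ⟨hle, ?_⟩).symm
    push_cast
    linarith [hgt hsQ, logIncrement_le_one s.1]
  intro s hs t ht hst
  exact Prod.ext hst (by rw [hfloor s hs, hfloor t ht, hst])

lemma optimalValue_succ_le (hQ : ∀ q ∈ Q, 2 ≤ q) :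
    optimalValue Q (k + 1) ≤ optimalValue Q k + log (k + 2) := by
  classical
  rw [optimalValue, ← Finset.sum_inter_add_sum_sdiff (optimalPairs Q (k + 1)) (optimalPairs Q k)]
  gcongr
  · exact Finset.sum_le_sum_of_subset_of_nonneg Finset.inter_subset_right
      fun s _ _ ↦ (logIncrement_pos _).le
  · calc _ = ∑ l ∈ (optimalPairs Q (k + 1) \ optimalPairs Q k).image Prod.fst, logIncrement l :=
          (Finset.sum_image (injOn_fst_optimalPairs_succ_sdiff hQ)).symm
      _ ≤ ∑ l ∈ Finset.range (k + 1), logIncrement l := by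
          refine Finset.sum_le_sum_of_subset_of_nonneg (Finset.image_subset_iff.2 fun s hs ↦ ?_)
            fun l _ _ ↦ (logIncrement_pos l).le
          exact (Finset.mem_product.1 (optimalPairs_subset (Finset.mem_sdiff.1 hs).1)).1
      _ = log (k + 2) := by
          rw [sum_logIncrement]
          push_cast
          ring_nf

lemma optimalCost_le : optimalCost Q k ≤ k * (k + 1) * k := by
  have hcard : (optimalPairs Q k).card ≤ k * (k + 1) :=
    (Finset.card_le_card optimalPairs_subset).trans_eq (by simp)
  calc optimalCost Q k ≤ (optimalPairs Q k).card • (k : ℝ) :=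
        Finset.sum_le_card_nsmul _ _ _ fun s hs ↦ by
          have hlt := (Finset.mem_product.1 (optimalPairs_subset hs)).2
          exact_mod_cast Finset.mem_range_succ_iff.1 hlt
    _ ≤ _ := by
        rw [nsmul_eq_mul]
        gcongr
        exact_mod_cast hcard

lemma card_optimalPairs_le (hQ : ∀ q ∈ Q, 2 ≤ q) :
    ((optimalPairs Q k).card : ℝ) ≤ k * log (k + 1) := by
  classical
  have hfiber (l : ℕ) :
      ({s ∈ optimalPairs Q k | s.1 = l}.card : ℝ) ≤ k * logIncrement l := by
    have hcard : {s ∈ optimalPairs Q k | s.1 = l}.card ≤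
        (Finset.Icc 1 ⌊k * logIncrement l⌋₊).card := by
      refine Finset.card_le_card_of_injOn Prod.snd (fun s hs ↦ ?_) fun s hs t ht hst ↦ ?_
      · obtain ⟨hmem, rfl⟩ := Finset.mem_filter.1 hs
        obtain ⟨hsQ, hle⟩ := (mem_optimalPairs hQ).1 hmem
        exact Finset.mem_Icc.2 ⟨one_le_two.trans (hQ _ hsQ), Nat.le_floor hle⟩
      · exact Prod.ext ((Finset.mem_filter.1 hs).2.trans (Finset.mem_filter.1 ht).2.symm) hst
    rw [Nat.card_Icc, Nat.add_sub_cancel] at hcard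
    exact (Nat.cast_le.2 hcard).trans
      (Nat.floor_le (mul_nonneg k.cast_nonneg (logIncrement_pos l).le))
  have hmaps : ∀ s ∈ optimalPairs Q k, s.1 ∈ Finset.range k := fun s hs ↦
    (Finset.mem_product.1 (optimalPairs_subset hs)).1
  rw [Finset.card_eq_sum_card_fiberwise hmaps, Nat.cast_sum, add_comm, ← sum_logIncrement,
    Finset.mul_sum]
  exact Finset.sum_le_sum fun l _ ↦ hfiber l

open Classical in
lemma countMean_div_le_card {u : ℝ} (hu : 0 ≤ u) :
    countMean Q u / u ≤ {q ∈ Finset.Icc 0 ⌊u⌋₊ | q ∈ Q}.card := by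
  rw [countMean_eq_sum_Icc]
  refine div_le_of_le_mul₀ hu (Nat.cast_nonneg _) ?_
  rw [← nsmul_eq_mul]
  exact Finset.sum_le_card_nsmul _ _ _ fun q _ ↦
    max_le (by linarith [q.cast_nonneg (α := ℝ)]) hu

open Classical in
lemma sum_le_optimalCost (hQ : ∀ q ∈ Q, 2 ≤ q) :
    ∑ q ∈ Finset.Icc 0 ⌊(k : ℝ) / 2⌋₊ with q ∈ Q, (q : ℝ) ≤ optimalCost Q k := by
  rw [← Finset.sum_image (s := {q ∈ Finset.Icc 0 ⌊(k : ℝ) / 2⌋₊ | q ∈ Q}) (g := fun q ↦ (0, q))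
    (f := fun s : ℕ × ℕ ↦ (s.2 : ℝ)) fun a _ b _ h ↦ congrArg Prod.snd h]
  refine Finset.sum_le_sum_of_subset_of_nonneg (Finset.image_subset_iff.2 fun q hq ↦ ?_)
    fun _ _ _ ↦ Nat.cast_nonneg _
  rw [Finset.mem_filter, Finset.mem_Icc] at hq
  refine (mem_optimalPairs hQ).2 ⟨hq.2, ?_⟩
  calc (q : ℝ) ≤ k * (1 / ((0 : ℕ) + 2)) := by
        have := (Nat.le_floor_iff (by positivity)).1 hq.1.2
        simpa [div_eq_mul_inv] using this
    _ ≤ k * logIncrement 0 := by gcongr; exact one_div_add_two_le_logIncrement 0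

lemma sq_countMean_div_le_optimalCost (hQ : ∀ q ∈ Q, 2 ≤ q) :
    (countMean Q (k / 2) / k) ^ 2 ≤ optimalCost Q k := by
  classical
  have h0 : 0 ∉ Q := fun h ↦ absurd (hQ 0 h) (by norm_num)
  set A := {q ∈ Finset.Icc 0 ⌊(k : ℝ) / 2⌋₊ | q ∈ Q}
  set v := countMean Q (k / 2) / k
  have hv0 : 0 ≤ v := div_nonneg countMean_nonneg k.cast_nonneg
  have hcard : 2 * v ≤ A.card := by
    have := countMean_div_le_card (Q := Q) (u := k / 2) (by positivity)
    rwa [div_div_eq_mul_div, mul_comm, mul_div_assoc] at this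
  have hsum : A.card * v ≤ ∑ q ∈ A, (q : ℝ) + ∑ q ∈ A, max (v - q) 0 := by
    rw [← Finset.sum_add_distrib, ← nsmul_eq_mul]
    exact Finset.card_nsmul_le_sum _ _ _ fun q _ ↦ by linarith [le_max_left (v - q) 0]
  have hmean := sum_max_sub_le_countMean (s := A) (fun q hq ↦ (Finset.mem_filter.1 hq).2) v
  nlinarith [sum_le_optimalCost (k := k) hQ, countMean_le_sq h0 hv0]

end OptimalPairs

section LowerArithmetic

open Real

open Algebra (IsQuadraticExtension)

lemma eq_range_card_of_isLowerSet {s : Finset ℕ} (hs : IsLowerSet (s : Set ℕ)) :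
    s = Finset.range s.card := by
  rcases hs.eq_univ_or_Iio with huniv | ⟨a, ha⟩
  · exact absurd (huniv ▸ s.finite_toSet) Set.infinite_univ
  · have hrange : s = Finset.range a := by rwa [← Finset.coe_inj, Finset.coe_range]
    rw [hrange, Finset.card_range]

open Classical in
lemma sum_logIncrement_optimalPairs_fiber {Q : Set ℕ} (hQ : ∀ q ∈ Q, 2 ≤ q) (k q : ℕ) :
    ∑ s ∈ optimalPairs Q k with s.2 = q, logIncrement s.1 =
      log ({s ∈ optimalPairs Q k | s.2 = q}.card + 1 : ℕ) := by
  set F := {s ∈ optimalPairs Q k | s.2 = q} with hF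
  have hinj : Set.InjOn Prod.fst (F : Set (ℕ × ℕ)) := fun s hs t ht hst ↦
    Prod.ext hst ((Finset.mem_filter.1 hs).2.trans (Finset.mem_filter.1 ht).2.symm)
  have hmem (l : ℕ) : l ∈ F.image Prod.fst ↔ q ∈ Q ∧ (q : ℝ) ≤ k * logIncrement l := by
    simp [hF, mem_optimalPairs hQ]
  have hlower : IsLowerSet (F.image Prod.fst : Set ℕ) := fun a b hba ha ↦ by
    rw [Finset.mem_coe, hmem] at ha ⊢
    exact ⟨ha.1, ha.2.trans (by gcongr; exact logIncrement_antitone hba)⟩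
  have hrange := eq_range_card_of_isLowerSet hlower
  rw [Finset.card_image_of_injOn hinj] at hrange
  rw [← Finset.sum_image hinj, hrange, sum_logIncrement, Nat.cast_succ, add_comm]

open Classical in
lemma log_prod_card_optimalPairs_fiber {Q : Set ℕ} (hQ : ∀ q ∈ Q, 2 ≤ q) (k : ℕ) :
    log (∏ q ∈ (optimalPairs Q k).image Prod.snd,
      ({s ∈ optimalPairs Q k | s.2 = q}.card + 1) : ℕ) = optimalValue Q k := by
  rw [Nat.cast_prod, log_prod fun q _ ↦ by positivity, optimalValue,
    ← Finset.sum_fiberwise_of_maps_to fun s hs ↦ Finset.mem_image_of_mem Prod.snd hs]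
  exact Finset.sum_congr rfl fun q _ ↦ (sum_logIncrement_optimalPairs_fiber hQ k q).symm

variable {K : Type*} [Field K] [NumberField K] [IsQuadraticExtension ℚ K]

lemma log_fK_prod_snd_optimalPairs (k : ℕ) :
    log (fK K (∏ s ∈ optimalPairs {p | IsSplitPrime K p} k, s.2)) =
      optimalValue {p | IsSplitPrime K p} k := by
  classical
  have hQ : ∀ q ∈ {p | IsSplitPrime K p}, 2 ≤ q := fun _ h ↦ h.two_le
  rw [Finset.prod_comp (fun q ↦ q) Prod.snd,
    fK_prod_pow_of_isSplitPrime _ (fun q ↦ q) _ (fun q hq ↦ ?_) Function.injective_id.injOn,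
    log_prod_card_optimalPairs_fiber hQ]
  obtain ⟨s, hs, rfl⟩ := Finset.mem_image.1 hq
  exact ((mem_optimalPairs hQ).1 hs).1

open Classical in
/- Attach to each optimal pair `s` its own split prime `φ s ≤ Y`; then `n = ∏ φ s ^ (s.2 - 1)` has
`fK K n = ∏ s.2`. -/
lemma exists_log_fK_fK_eq_optimalValue {k : ℕ} {X Y : ℝ} (hY : 0 ≤ Y)
    (hcard : (optimalPairs {p | IsSplitPrime K p} k).card ≤
      {q ∈ Finset.Icc 0 ⌊Y⌋₊ | q ∈ {p | IsSplitPrime K p}}.card)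
    (hX : optimalCost {p | IsSplitPrime K p} k * log Y ≤ X) :
    ∃ n : ℕ, n ≠ 0 ∧ log n ≤ X ∧
      log (fK K (fK K n)) = optimalValue {p | IsSplitPrime K p} k := by
  set S := optimalPairs {p | IsSplitPrime K p} k
  set T := {q ∈ Finset.Icc 0 ⌊Y⌋₊ | q ∈ {p | IsSplitPrime K p}} with hT
  have hencard : (S : Set (ℕ × ℕ)).encard ≤ (T : Set ℕ).encard := by
    simpa only [Set.encard_coe_eq_coe_finsetCard] using Nat.cast_le.2 hcard
  obtain ⟨φ, hφ, hinj⟩ := S.finite_toSet.exists_injOn_of_encard_le hencard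
  have hφS (s) (hs : s ∈ S) : φ s ≤ ⌊Y⌋₊ ∧ IsSplitPrime K (φ s) := by
    simpa [hT] using hφ hs
  have hSsplit (s) (hs : s ∈ S) : IsSplitPrime K s.2 :=
    ((mem_optimalPairs fun _ h ↦ h.two_le).1 hs).1
  refine ⟨∏ s ∈ S, φ s ^ (s.2 - 1), Finset.prod_ne_zero_iff.2 fun s hs ↦
    pow_ne_zero _ (hφS s hs).2.1.ne_zero, le_trans ?_ hX, ?_⟩
  · push_cast
    rw [log_prod fun s hs ↦ pow_ne_zero _ (Nat.cast_ne_zero.2 (hφS s hs).2.1.ne_zero),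
      optimalCost, Finset.sum_mul]
    refine Finset.sum_le_sum fun s hs ↦ ?_
    rw [log_pow]
    have hpos : (0 : ℝ) < φ s := mod_cast (hφS s hs).2.1.pos
    have hle : (φ s : ℝ) ≤ Y := (Nat.le_floor_iff hY).1 (hφS s hs).1
    gcongr
    exact Nat.sub_le _ _
  · rw [fK_prod_pow_of_isSplitPrime S φ _ (fun s hs ↦ (hφS s hs).2) hinj,
      Finset.prod_congr rfl fun s hs ↦ Nat.sub_add_cancel (hSsplit s hs).1.one_le,
      log_fK_prod_snd_optimalPairs]

end LowerArithmetic

section LowerAsymptotics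

open Real Asymptotics

variable {Q : Set ℕ}

lemma eventually_le_countMean
    (hQ : (fun u ↦ countMean Q u - u ^ 2 / (4 * log u)) =O[atTop]
      fun u ↦ u ^ 2 * log (log u) / log u ^ 2) :
    ∀ᶠ u in atTop, u ^ 2 / (5 * log u) ≤ countMean Q u := by
  obtain ⟨C, hC, hbound⟩ := hQ.exists_pos
  filter_upwards [hbound.bound, eventually_log_log_le_mul_log (c := 1 / (20 * C)) (by positivity),
    eventually_le_log 1, eventually_le_log_log 0] with u hu hsmall hlog hloglog
  rw [norm_eq_abs, norm_of_nonneg (by positivity)] at hu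
  have herr : C * (u ^ 2 * log (log u) / log u ^ 2) ≤ u ^ 2 / (20 * log u) :=
    calc _ ≤ C * (u ^ 2 * (1 / (20 * C) * log u) / log u ^ 2) := by gcongr
      _ = _ := by field_simp
  have hsplit : u ^ 2 / (5 * log u) = u ^ 2 / (4 * log u) - u ^ 2 / (20 * log u) := by
    field_simp
    ring
  linarith [(abs_le.1 hu).1]

lemma eventually_sq_le_optimalCost (h2 : ∀ q ∈ Q, 2 ≤ q)
    (hQ : (fun u ↦ countMean Q u - u ^ 2 / (4 * log u)) =O[atTop]
      fun u ↦ u ^ 2 * log (log u) / log u ^ 2) :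
    ∀ᶠ k : ℕ in atTop, (k / (20 * log k)) ^ 2 ≤ optimalCost Q k := by
  have hhalf : Tendsto (fun k : ℕ ↦ (k : ℝ) / 2) atTop atTop :=
    tendsto_natCast_atTop_atTop.atTop_div_const two_pos
  filter_upwards [hhalf.eventually (eventually_le_countMean hQ),
    hhalf.eventually (eventually_le_log 1), eventually_gt_atTop 0] with k hk hlog hpos
  refine le_trans ?_ (sq_countMean_div_le_optimalCost h2)
  have : (0 : ℝ) < k := mod_cast hpos
  have hlog_le : log (k / 2) ≤ log k := log_le_log (by positivity) (by linarith)
  have : 0 < log (k : ℝ) := by linarith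
  refine pow_le_pow_left₀ (by positivity) ?_ 2
  calc (k : ℝ) / (20 * log k) ≤ k / (20 * log (k / 2)) := by gcongr
    _ = (k / 2) ^ 2 / (5 * log (k / 2)) / k := by field_simp; norm_num
    _ ≤ _ := by gcongr

lemma eventually_le_optimalCost (h2 : ∀ q ∈ Q, 2 ≤ q)
    (hQ : (fun u ↦ countMean Q u - u ^ 2 / (4 * log u)) =O[atTop]
      fun u ↦ u ^ 2 * log (log u) / log u ^ 2) :
    ∀ᶠ k : ℕ in atTop, (k : ℝ) ≤ optimalCost Q k := by
  have hcast := tendsto_natCast_atTop_atTop (R := ℝ)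
  filter_upwards [eventually_sq_le_optimalCost h2 hQ, hcast.eventually (eventually_le_log 1),
    hcast.eventually (eventually_log_pow_le_mul 2 (c := 1 / 400) (by norm_num))] with k hk hlog hpow
  refine le_trans ?_ hk
  rw [div_pow, le_div_iff₀ (by positivity)]
  nlinarith [k.cast_nonneg (α := ℝ)]

lemma eventually_forall_le_of_optimalCost_le (h2 : ∀ q ∈ Q, 2 ≤ q)
    (hQ : (fun u ↦ countMean Q u - u ^ 2 / (4 * log u)) =O[atTop]
      fun u ↦ u ^ 2 * log (log u) / log u ^ 2) :
    ∀ᶠ X : ℝ in atTop, ∀ k : ℕ, optimalCost Q k ≤ X → k ≤ 20 * √X * log X := by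
  obtain ⟨N, hN⟩ := eventually_atTop.1 ((eventually_sq_le_optimalCost h2 hQ).and
    ((eventually_le_optimalCost h2 hQ).and (eventually_gt_atTop 1)))
  filter_upwards [eventually_ge_atTop 0, eventually_le_log 1,
    tendsto_sqrt_atTop.eventually_ge_atTop (N : ℝ)] with X hX hlog hsqrt k hk
  rcases le_total k N with hkN | hNk
  · calc (k : ℝ) ≤ √X := (Nat.cast_le.2 hkN).trans hsqrt
      _ ≤ √X * (20 * log X) := le_mul_of_one_le_right (sqrt_nonneg X) (by linarith)
      _ = _ := by ring
  · obtain ⟨hsq, hle, hk1⟩ := hN k hNk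
    have hlogk : 0 < log k := log_pos (mod_cast hk1)
    have hlogkX : log k ≤ log X := log_le_log (mod_cast zero_lt_one.trans hk1) (hle.trans hk)
    have hdiv := (le_sqrt (by positivity) hX).2 (hsq.trans hk)
    rw [div_le_iff₀ (by positivity)] at hdiv
    calc (k : ℝ) ≤ √X * (20 * log k) := hdiv
      _ ≤ √X * (20 * log X) := by gcongr
      _ = _ := by ring

lemma exists_optimalCost_le_lt_succ (h2 : ∀ q ∈ Q, 2 ≤ q)
    (hQ : (fun u ↦ countMean Q u - u ^ 2 / (4 * log u)) =O[atTop]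
      fun u ↦ u ^ 2 * log (log u) / log u ^ 2) {B : ℝ} (hB : 0 ≤ B) :
    ∃ k, optimalCost Q k ≤ B ∧ B < optimalCost Q (k + 1) := by
  classical
  obtain ⟨m, hm, hBm⟩ := ((eventually_le_optimalCost h2 hQ).and
    (tendsto_natCast_atTop_atTop.eventually_gt_atTop B)).exists
  have hex : ∃ m, B < optimalCost Q m := ⟨m, hBm.trans_le hm⟩
  obtain ⟨k, hk⟩ := Nat.exists_eq_succ_of_ne_zero (n := Nat.find hex) fun h ↦ by
    have hzero := Nat.find_spec hex
    rw [h] at hzero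
    have hcost := optimalCost_le (Q := Q) (k := 0)
    norm_num at hcost
    linarith
  exact ⟨k, not_lt.1 (Nat.find_min hex (hk ▸ k.lt_succ_self)),
    by simpa only [hk] using Nat.find_spec hex⟩

lemma eventually_forall_log_le_log_of_lt_optimalCost :
    ∀ᶠ X : ℝ in atTop, ∀ k : ℕ, √X < optimalCost Q k → log X / 12 ≤ log k := by
  filter_upwards [eventually_gt_atTop 0, eventually_le_log 4] with X hX hlog k hk
  have hk0 : k ≠ 0 := by
    rintro rfl
    have hcost := optimalCost_le (Q := Q) (k := 0)
    norm_num at hcost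
    linarith [sqrt_nonneg X]
  have hk1 : (1 : ℝ) ≤ k := mod_cast Nat.one_le_iff_ne_zero.2 hk0
  have hcube : √X ≤ 2 * k ^ 3 := by
    nlinarith [optimalCost_le (Q := Q) (k := k), mul_nonneg (sq_nonneg (k : ℝ)) (sub_nonneg.2 hk1)]
  have hlogs := log_le_log (sqrt_pos.2 hX) hcube
  rw [log_sqrt hX.le, log_mul two_ne_zero (by positivity), log_pow] at hlogs
  push_cast at hlogs
  linarith [log_two_lt_d9]

open Classical in
lemma eventually_forall_card_optimalPairs_le (h2 : ∀ q ∈ Q, 2 ≤ q)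
    (hQ : (fun u ↦ countMean Q u - u ^ 2 / (4 * log u)) =O[atTop]
      fun u ↦ u ^ 2 * log (log u) / log u ^ 2) :
    ∀ᶠ X : ℝ in atTop, ∀ k : ℕ, k ≤ 20 * √X * log X → log (k + 1) ≤ log X →
      (optimalPairs Q k).card ≤ {q ∈ Finset.Icc 0 ⌊√X * log X ^ 4⌋₊ | q ∈ Q}.card := by
  have hY : Tendsto (fun X ↦ √X * log X ^ 4) atTop atTop :=
    tendsto_sqrt_atTop.atTop_mul_atTop₀ ((tendsto_pow_atTop (by norm_num)).comp tendsto_log_atTop)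
  filter_upwards [hY.eventually (eventually_le_countMean hQ), hY.eventually (eventually_le_log 1),
    eventually_gt_atTop 0, eventually_le_log 100,
    eventually_log_log_le_mul_log (c := 1 / 8) (by norm_num)]
    with X hcount hlogY hX hlog hloglog k hk hlogk
  have hlogk0 : 0 ≤ log ((k : ℝ) + 1) := log_nonneg (by linarith [k.cast_nonneg (α := ℝ)])
  have hlogY_le : log (√X * log X ^ 4) ≤ log X := by
    rw [log_mul (by positivity) (by positivity), log_sqrt hX.le, log_pow]
    push_cast
    linarith
  have : 0 < √X := sqrt_pos.2 hX
  suffices h : ((optimalPairs Q k).card : ℝ) ≤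
      {q ∈ Finset.Icc 0 ⌊√X * log X ^ 4⌋₊ | q ∈ Q}.card from mod_cast h
  calc ((optimalPairs Q k).card : ℝ) ≤ k * log (k + 1) := card_optimalPairs_le h2
    _ ≤ 20 * √X * log X * log X := by gcongr
    _ = 100 * (√X * log X ^ 2 / 5) := by ring
    _ ≤ log X * (√X * log X ^ 2 / 5) := by gcongr
    _ = √X * log X ^ 4 / (5 * log X) := by field_simp
    _ ≤ √X * log X ^ 4 / (5 * log (√X * log X ^ 4)) := by gcongr
    _ = (√X * log X ^ 4) ^ 2 / (5 * log (√X * log X ^ 4)) / (√X * log X ^ 4) := by field_simp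
    _ ≤ countMean Q (√X * log X ^ 4) / (√X * log X ^ 4) := by gcongr
    _ ≤ _ := countMean_div_le_card (by positivity)

end LowerAsymptotics

section LowerBound

open Real Asymptotics

lemma mul_div_le_sq_mul_div_add {t a L κ : ℝ} (hL : 0 < L) (hκ : 0 < κ) :
    t * a / L ≤ t ^ 2 * κ / (4 * L) + a ^ 2 / L / κ := by
  rw [← sub_nonneg, show t ^ 2 * κ / (4 * L) + a ^ 2 / L / κ - t * a / L =
    (t * κ - 2 * a) ^ 2 / (4 * L * κ) by field_simp; ring]
  positivity

lemma two_div_sub_le_div {ℓ r b : ℝ} (hℓ : 0 < ℓ) (hr : 0 ≤ r) (hb : 0 ≤ b) :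
    2 / ℓ - 2 * (b + 8) * (r / ℓ ^ 2) ≤ (1 - b * (r / ℓ)) / (ℓ / 2 + 4 * r) := by
  rw [le_div_iff₀ (by positivity), ← sub_nonneg,
    show 1 - b * (r / ℓ) - (2 / ℓ - 2 * (b + 8) * (r / ℓ ^ 2)) * (ℓ / 2 + 4 * r) =
      8 * (b + 8) * (r / ℓ) ^ 2 by field_simp; ring]
  positivity

lemma sqrt_mul_mul_sqrt_div_le {S X τ κ Λ L : ℝ} (hS : 0 ≤ S) (hX : 0 ≤ X) (hτ : 0 ≤ τ)
    (hτ1 : τ ≤ 1) (hκ : 0 < κ) (hΛ : 0 < Λ) (hΛL : Λ ≤ L) :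
    √S * τ * √X / L ≤ S * κ / (4 * Λ) * τ + X / L / κ := by
  have hL : 0 < L := hΛ.trans_le hΛL
  calc √S * τ * √X / L ≤ (√S * τ) ^ 2 * κ / (4 * L) + √X ^ 2 / L / κ :=
        mul_div_le_sq_mul_div_add hL hκ
    _ = S * κ / (4 * L) * τ ^ 2 + X / L / κ := by
        rw [mul_pow, sq_sqrt hS, sq_sqrt hX]
        ring
    _ ≤ S * κ / (4 * Λ) * τ + X / L / κ := by
        gcongr
        exact pow_le_of_le_one hτ hτ1 two_ne_zero

variable {Q : Set ℕ}

lemma exists_eventually_mul_one_sub_le_dualValue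
    (hQ : (fun x ↦ dualValue Q x - sumSqLogIncrement * x / (4 * log x)) =O[atTop]
      fun x ↦ x * log (log x) / log x ^ 2) :
    ∃ δ > 0, ∀ᶠ x in atTop,
      sumSqLogIncrement * x / (4 * log x) * (1 - δ * (log (log x) / log x)) ≤ dualValue Q x := by
  have hS := sumSqLogIncrement_pos
  obtain ⟨C, hC, hbound⟩ := hQ.exists_pos
  refine ⟨4 * C / sumSqLogIncrement, by positivity, ?_⟩
  filter_upwards [hbound.bound, eventually_gt_atTop 0, eventually_le_log 1,
    eventually_le_log_log 0] with x hx hpos hlog hloglog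
  rw [norm_eq_abs, norm_of_nonneg (by positivity)] at hx
  calc _ = sumSqLogIncrement * x / (4 * log x) - C * (x * log (log x) / log x ^ 2) := by
        field_simp
    _ ≤ _ := by linarith [(abs_le.1 hx).1]

lemma exists_eventually_forall_le_dualValue_add
    (hQ : (fun x ↦ dualValue Q x - sumSqLogIncrement * x / (4 * log x)) =O[atTop]
      fun x ↦ x * log (log x) / log x ^ 2) :
    ∃ C, ∀ᶠ X in atTop, ∀ κ : ℝ, 0 < κ → log X / 12 ≤ log κ →
      log κ ≤ log X / 2 + 4 * log (log X) →
      2 * √sumSqLogIncrement * (√X / log X) - C * (√X * log (log X) / log X ^ 2) ≤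
        dualValue Q κ + X / (log X / 2 + 4 * log (log X)) / κ := by
  have hS := sumSqLogIncrement_pos
  obtain ⟨δ, hδ, hdual⟩ := exists_eventually_mul_one_sub_le_dualValue hQ
  obtain ⟨x₀, hx₀⟩ := eventually_atTop.1 (hdual.and (eventually_le_log_log 0))
  refine ⟨√sumSqLogIncrement * (2 * (12 * δ + 8)), ?_⟩
  filter_upwards [eventually_ge_atTop 0, eventually_le_log 24, eventually_le_log_log 0,
    eventually_le_log (12 * log (max x₀ 1)),
    eventually_log_log_le_mul_log (c := 1 / 8) (by norm_num),
    eventually_log_log_le_mul_log (c := 1 / (12 * δ)) (by positivity)]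
    with X hX hℓ hr hlogx₀ hrℓ hrδ κ hκ hlower hupper
  obtain ⟨hdual, _⟩ := hx₀ κ ((le_max_left x₀ 1).trans
    ((log_le_log_iff (by positivity) hκ).1 (by linarith)))
  set ℓ := log X
  set r := log ℓ
  have hlogκ : 0 < log κ := by linarith
  have hloglog_le : log (log κ) ≤ r := log_le_log hlogκ (by linarith)
  set τ := 1 - 12 * δ * (r / ℓ) with hτ
  have hτ0 : 0 ≤ τ := by
    have hrℓδ : r / ℓ ≤ 1 / (12 * δ) := (div_le_iff₀ (by positivity)).2 hrδ
    rw [le_div_iff₀ (by positivity)] at hrℓδ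
    linarith
  have hτ1 : τ ≤ 1 := sub_le_self 1 (by positivity)
  have hτ_le : τ ≤ 1 - δ * (log (log κ) / log κ) := by
    have : log (log κ) / log κ ≤ r / (ℓ / 12) := by gcongr
    have := mul_le_mul_of_nonneg_left this hδ.le
    rw [hτ]
    linarith [show δ * (r / (ℓ / 12)) = 12 * δ * (r / ℓ) by field_simp]
  calc _ = √sumSqLogIncrement * √X * (2 / ℓ - 2 * (12 * δ + 8) * (r / ℓ ^ 2)) := by ring
    _ ≤ √sumSqLogIncrement * √X * (τ / (ℓ / 2 + 4 * r)) := by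
        gcongr
        exact two_div_sub_le_div (by positivity) hr (by positivity)
    _ = √sumSqLogIncrement * τ * √X / (ℓ / 2 + 4 * r) := by ring
    _ ≤ sumSqLogIncrement * κ / (4 * log κ) * τ + X / (ℓ / 2 + 4 * r) / κ :=
        sqrt_mul_mul_sqrt_div_le hS.le hX hτ0 hτ1 hκ hlogκ hupper
    _ ≤ dualValue Q κ + X / (ℓ / 2 + 4 * r) / κ := by
        gcongr
        exact le_trans (by gcongr) hdual

lemma le_optimalValue_of_le_optimalCost_succ (h2 : ∀ q ∈ Q, 2 ≤ q) {k : ℕ} {B : ℝ}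
    (hB : B ≤ optimalCost Q (k + 1)) :
    dualValue Q (k + 1) + B / (k + 1) - log (k + 2) ≤ optimalValue Q k := by
  have hvalue := optimalValue_eq_dualValue_add h2 k.succ_ne_zero
  push_cast at hvalue
  have : B / (k + 1) ≤ optimalCost Q (k + 1) / (k + 1) := by gcongr
  linarith [optimalValue_succ_le (k := k) h2]

lemma log_sqrt_mul_log_pow {X : ℝ} (hX : 0 < X) (hlog : log X ≠ 0) (n : ℕ) :
    log (√X * log X ^ n) = log X / 2 + n * log (log X) := by
  rw [log_mul (sqrt_ne_zero'.2 hX) (pow_ne_zero n hlog), log_sqrt hX.le, log_pow]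

lemma eventually_forall_log_add_two_le :
    ∀ᶠ X in atTop, ∀ k : ℝ, 0 ≤ k → k ≤ 20 * √X * log X →
      log (k + 2) ≤ log X / 2 + 2 * log (log X) := by
  filter_upwards [eventually_ge_atTop 1, eventually_le_log 22] with X hX hℓ k hk0 hk
  calc log (k + 2) ≤ log (√X * log X ^ 2) :=
        log_le_log (by positivity) (by nlinarith [one_le_sqrt.2 hX])
    _ = log X / 2 + 2 * log (log X) :=
        mod_cast log_sqrt_mul_log_pow (by linarith) (by linarith) 2

lemma eventually_sqrt_le_div :
    ∀ᶠ X in atTop, √X ≤ X / (log X / 2 + 4 * log (log X)) := by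
  filter_upwards [eventually_ge_atTop 0, eventually_log_pow_three_le_sqrt, eventually_le_log 1,
    eventually_le_log_log 0, eventually_log_log_le_mul_log (c := 1 / 8) (by norm_num)]
    with X hX hcube hℓ hr hrℓ
  rw [le_div_iff₀ (by positivity)]
  calc √X * (log X / 2 + 4 * log (log X)) ≤ √X * log X ^ 3 := by
        gcongr
        linarith [le_self_pow₀ hℓ three_ne_zero]
    _ ≤ √X * √X := by gcongr
    _ = X := mul_self_sqrt hX

lemma eventually_log_le_sqrt_mul_div :
    ∀ᶠ X in atTop, log X ≤ √X * log (log X) / log X ^ 2 := by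
  filter_upwards [eventually_log_pow_three_le_sqrt, eventually_le_log 1, eventually_le_log_log 1]
    with X hcube hℓ hr
  rw [le_div_iff₀ (by positivity)]
  nlinarith [sqrt_nonneg X]

open Classical in
theorem exists_eventually_exists_le_optimalValue (h2 : ∀ q ∈ Q, 2 ≤ q)
    (hcount : (fun u ↦ countMean Q u - u ^ 2 / (4 * log u)) =O[atTop]
      fun u ↦ u ^ 2 * log (log u) / log u ^ 2)
    (hdual : (fun x ↦ dualValue Q x - sumSqLogIncrement * x / (4 * log x)) =O[atTop]
      fun x ↦ x * log (log x) / log x ^ 2) :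
    ∃ C, ∀ᶠ X : ℝ in atTop, ∃ k,
      (optimalPairs Q k).card ≤ {q ∈ Finset.Icc 0 ⌊√X * log X ^ 4⌋₊ | q ∈ Q}.card ∧
      optimalCost Q k * log (√X * log X ^ 4) ≤ X ∧
      2 * √sumSqLogIncrement * (√X / log X) - C * (√X * log (log X) / log X ^ 2) ≤
        optimalValue Q k := by
  obtain ⟨C, hC⟩ := exists_eventually_forall_le_dualValue_add hdual
  refine ⟨C + 1, ?_⟩
  filter_upwards [hC, eventually_forall_card_optimalPairs_le h2 hcount,
    eventually_forall_le_of_optimalCost_le h2 hcount,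
    eventually_forall_log_le_log_of_lt_optimalCost (Q := Q), eventually_forall_log_add_two_le,
    eventually_sqrt_le_div, eventually_log_le_sqrt_mul_div, eventually_gt_atTop 0,
    eventually_le_log 2, eventually_le_log_log 0,
    eventually_log_log_le_mul_log (c := 1 / 8) (by norm_num)]
    with X hvalue hcard hupper hlower hlog_two hsqrt hlog_le hX hℓ hr hrℓ
  have hlogY : log (√X * log X ^ 4) = log X / 2 + 4 * log (log X) :=
    mod_cast log_sqrt_mul_log_pow hX (by linarith) 4
  obtain ⟨k, hk, hk_succ⟩ := exists_optimalCost_le_lt_succ h2 hcount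
    (B := X / (log X / 2 + 4 * log (log X))) (by positivity)
  have hkX := hupper k (hk.trans (div_le_self hX.le (by linarith)))
  have hlogk := hlog_two k k.cast_nonneg hkX
  have hlogk_succ : log ((k : ℝ) + 1) ≤ log (k + 2) := by gcongr; norm_num
  refine ⟨k, hcard k hkX (by linarith), ?_, ?_⟩
  · rwa [hlogY, ← le_div_iff₀ (by positivity)]
  · have hlog_lower := hlower (k + 1) (hsqrt.trans_lt hk_succ)
    push_cast at hlog_lower
    linarith [hvalue (k + 1) (by positivity) hlog_lower (by linarith),
      le_optimalValue_of_le_optimalCost_succ h2 hk_succ.le]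

open Algebra (IsQuadraticExtension)

theorem exists_eventually_le_log_fK_fK
    (K : Type*) [Field K] [NumberField K] [IsQuadraticExtension ℚ K]
    (hcount : (fun u ↦ countMean {p | IsSplitPrime K p} u - u ^ 2 / (4 * log u)) =O[atTop]
      fun u ↦ u ^ 2 * log (log u) / log u ^ 2)
    (hdual : (fun x ↦ dualValue {p | IsSplitPrime K p} x - sumSqLogIncrement * x / (4 * log x))
      =O[atTop] fun x ↦ x * log (log x) / log x ^ 2) :
    ∃ C, ∀ᶠ X in atTop, ∃ n : ℕ, n ≠ 0 ∧ log n ≤ X ∧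
      2 * √sumSqLogIncrement * (√X / log X) - C * (√X * log (log X) / log X ^ 2) ≤
        log (fK K (fK K n)) := by
  obtain ⟨C, hC⟩ := exists_eventually_exists_le_optimalValue (fun _ hp ↦ hp.two_le) hcount hdual
  refine ⟨C, hC.mono fun X ⟨k, hcard, hcost, hvalue⟩ ↦ ?_⟩
  obtain ⟨n, hn, hlog, heq⟩ := exists_log_fK_fK_eq_optimalValue (by positivity) hcard hcost
  exact ⟨n, hn, hlog, heq ▸ hvalue⟩

end LowerBound

lemma cBEFS_div_sqrt_two : cBEFS / √2 = 2 * √sumSqLogIncrement := by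
  rw [show cBEFS = √(8 * sumSqLogIncrement) from rfl, ← Real.sqrt_div' _ (by norm_num),
    show 8 * sumSqLogIncrement / 2 = 2 ^ 2 * sumSqLogIncrement by ring,
    Real.sqrt_mul (by norm_num), Real.sqrt_sq (by norm_num)]

lemma isBigO_countMean_isSplitPrime_sub (K : Type*) [Field K] [NumberField K]
    [Algebra.IsQuadraticExtension ℚ K] :
    (fun u ↦ countMean {p | IsSplitPrime K p} u - u ^ 2 / (4 * Real.log u)) =O[atTop]
      fun u ↦ u ^ 2 * Real.log (Real.log u) / Real.log u ^ 2 := by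
  obtain ⟨N, _, χ, hχ1, hχ⟩ := exists_dirichletCharacter_isSplitPrime K
  exact isBigO_countMean_sub (isBigO_logMean_sub hχ1 (fun _ hp ↦ hp.1) hχ)

lemma abs_iSup_mem_sub_le {ι : Type*} {s : Finset ι} {g : ι → ℝ} {a ε : ℝ} {i : ι}
    (hg : ∀ j ∈ s, 0 ≤ g j) (hupper : ∀ j ∈ s, g j ≤ a + ε) (hi : i ∈ s) (hlower : a - ε ≤ g i) :
    |(⨆ j ∈ s, g j) - a| ≤ ε := by
  have hnonneg : 0 ≤ a + ε := (hg i hi).trans (hupper i hi)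
  have hinner (j : ι) : ⨆ _ : j ∈ s, g j ≤ a + ε := Real.iSup_le (hupper j) hnonneg
  have hle : ⨆ j ∈ s, g j ≤ a + ε := Real.iSup_le hinner hnonneg
  have hge : g i ≤ ⨆ j ∈ s, g j :=
    (ciSup_pos hi).ge.trans (le_ciSup ⟨a + ε, Set.forall_mem_range.2 hinner⟩ i)
  exact abs_le.2 ⟨by linarith, by linarith⟩

lemma mem_Icc_one_iff_log_le {n x : ℕ} (hx : x ≠ 0) :
    n ∈ Finset.Icc 1 x ↔ n ≠ 0 ∧ Real.log n ≤ Real.log x := by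
  rw [Finset.mem_Icc, Nat.one_le_iff_ne_zero]
  refine and_congr_right fun hn ↦ ?_
  rw [Real.log_le_log_iff (by positivity) (by positivity), Nat.cast_le]

/-- For a fixed quadratic number field `K`,
`max_{n ≤ x} log f_K(f_K(n)) = (√(log x)/log₂ x)·(c/√2 + O(log₃ x/log₂ x))` as `x → ∞`. -/
theorem maxOrder_iterated_ideal_counting (K : Type*) [Field K] [NumberField K]
    (hK : Module.finrank ℚ K = 2) :
    ∃ C : ℝ, 0 < C ∧ ∀ᶠ x : ℕ in atTop,
      |(⨆ n ∈ Finset.Icc 1 x, Real.log (fK K (fK K n))) -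
          Real.sqrt (Real.log x) / Real.log (Real.log x) * (cBEFS / Real.sqrt 2)| ≤
        C * (Real.sqrt (Real.log x) / Real.log (Real.log x)) *
          (Real.log (Real.log (Real.log x)) / Real.log (Real.log x)) := by
  have : Algebra.IsQuadraticExtension ℚ K := ⟨hK⟩
  have hcount := isBigO_countMean_isSplitPrime_sub K
  have hdual := isBigO_dualValue_sub (fun h0 ↦ Nat.not_prime_zero h0.1) hcount
  obtain ⟨C₁, hupper⟩ := exists_eventually_log_fK_fK_le hdual
  obtain ⟨C₂, hlower⟩ := exists_eventually_le_log_fK_fK K hcount hdual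
  have hlog : Tendsto (fun x : ℕ ↦ Real.log x) atTop atTop :=
    Real.tendsto_log_atTop.comp tendsto_natCast_atTop_atTop
  refine ⟨max 1 (max C₁ C₂), by positivity, ?_⟩
  filter_upwards [hlog.eventually hupper, hlog.eventually hlower,
    hlog.eventually (eventually_le_log_log 0), eventually_ne_atTop 0]
    with x hupper ⟨n, hn0, hnx, hlower⟩ hloglog hx
  have herror : 0 ≤ √(Real.log x) * Real.log (Real.log (Real.log x)) /
      Real.log (Real.log x) ^ 2 := by positivity
  have hC₁ := mul_le_mul_of_nonneg_right (show C₁ ≤ max 1 (max C₁ C₂) by simp) herror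
  have hC₂ := mul_le_mul_of_nonneg_right (show C₂ ≤ max 1 (max C₁ C₂) by simp) herror
  rw [cBEFS_div_sqrt_two, mul_comm, mul_assoc (max 1 _), div_mul_div_comm, ← sq]
  refine abs_iSup_mem_sub_le (fun _ _ ↦ Real.log_natCast_nonneg _) (fun m hm ↦ ?_)
    ((mem_Icc_one_iff_log_le hx).2 ⟨hn0, hnx⟩) (by linarith)
  obtain ⟨hm0, hmx⟩ := (mem_Icc_one_iff_log_le hx).1 hm
  linarith [hupper m hm0 hmx]
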